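/- Let p ∈ (0,1) be fixed and let m ≥ 5 be a fixed integer. Then with high probability, n + (1−o(1))·n/(4(m−1)·log_{1/(1−p)} n) ≤ sat(G(n,p), C_m) ≤ n + (1+o(1))·n/(2·log_{1/(1−p)} n). -/

import Mathlib

open MeasureTheory Filter Real

/-- The index type of potential edges of a graph on `Fin n`. -/
abbrev EdgeType (n : ℕ) := {e : Sym2 (Fin n) // ¬ e.IsDiag}

/-- The product Bernoulli measure on edge-indicator functions: the binomial
random graph `G(n,p)`. -/
noncomputable def erMeasure (n : ℕ) (p : ℝ) : Measure (EdgeType n → Bool) :=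
  Measure.pi fun _ => (PMF.bernoulli (min (Real.toNNReal p) 1) (min_le_right _ _)).toMeasure

/-- The simple graph determined by an edge-indicator function. -/
def graphOf {n : ℕ} (ω : EdgeType n → Bool) : SimpleGraph (Fin n) :=
  SimpleGraph.fromEdgeSet {e | ∃ h : ¬ e.IsDiag, ω ⟨e, h⟩ = true}

/-- `H` contains a (not necessarily induced) copy of `F`. -/
def ContainsCopy {α β : Type*} (F : SimpleGraph α) (H : SimpleGraph β) : Prop :=
  ∃ f : α → β, Function.Injective f ∧ ∀ ⦃a b⦄, F.Adj a b → H.Adj (f a) (f b)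

/-- `H` is `F`-saturated in `G`: `H` is a spanning subgraph of `G` that is `F`-free,
and adding any edge of `G` missing from `H` creates a copy of `F`. -/
def IsSaturatedIn {V : Type*} {α : Type*} (G H : SimpleGraph V) (F : SimpleGraph α) : Prop :=
  H ≤ G ∧ ¬ ContainsCopy F H ∧
    ∀ v w : V, G.Adj v w → ¬ H.Adj v w →
      ContainsCopy F (H ⊔ SimpleGraph.fromEdgeSet {s(v, w)})

/-- The saturation number `sat(G,F)`: the minimum number of edges of an
`F`-saturated spanning subgraph of `G`. -/
noncomputable def satNum {V α : Type*} (G : SimpleGraph V) (F : SimpleGraph α) : ℕ :=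
  sInf {k | ∃ H : SimpleGraph V, IsSaturatedIn G H F ∧ H.edgeSet.ncard = k}

/-- The cycle `C_m`, as a graph on `ZMod m`. -/
def cycGraph (m : ℕ) : SimpleGraph (ZMod m) :=
  SimpleGraph.fromRel (fun a b => a = b + 1)



/-- Bernoulli weight. -/
noncomputable def bw (p : ℝ) (b : Bool) : ℝ := if b then p else 1 - p

/-- Expectation under the product Bernoulli measure, as a finite sum. -/
noncomputable def Ex {ι : Type*} [Fintype ι] [DecidableEq ι] (p : ℝ) (f : (ι → Bool) → ℝ) : ℝ :=
  ∑ ω : ι → Bool, (∏ e, bw p (ω e)) * f ω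

open Classical in
/-- Probability under the product Bernoulli measure, as a finite sum. -/
noncomputable def Pr {ι : Type*} [Fintype ι] [DecidableEq ι] (p : ℝ) (S : (ι → Bool) → Prop) : ℝ :=
  Ex p (fun ω => if S ω then 1 else 0)

section ExBasic
variable {ι : Type*} [Fintype ι] [DecidableEq ι] {p : ℝ}

theorem bw_nonneg (h0 : 0 ≤ p) (h1 : p ≤ 1) (b : Bool) : 0 ≤ bw p b := by
  unfold bw; split_ifs <;> linarith

theorem Ex_prod (h : ι → Bool → ℝ) :
    Ex p (fun ω => ∏ e, h e (ω e)) = ∏ e, (p * h e true + (1 - p) * h e false) := by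
  unfold Ex
  have := Finset.prod_univ_sum (fun _ : ι => (Finset.univ : Finset Bool))
    (fun e b => bw p b * h e b)
  simp only [Fintype.piFinset_univ, Fintype.sum_bool] at this
  simp only [← Finset.prod_mul_distrib]
  rw [← this]
  simp [bw]

theorem Ex_const (c : ℝ) : Ex p (fun _ : ι → Bool => c) = c := by
  have := Ex_prod (p := p) (fun (_ : ι) (_ : Bool) => (1 : ℝ))
  simp only [Finset.prod_const_one, mul_one] at this
  unfold Ex at *
  rw [← Finset.sum_mul]
  simp only [mul_one] at this
  rw [this]; simp

theorem Ex_mono (h0 : 0 ≤ p) (h1 : p ≤ 1) {f g : (ι → Bool) → ℝ} (h : ∀ ω, f ω ≤ g ω) :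
    Ex p f ≤ Ex p g := by
  unfold Ex
  refine Finset.sum_le_sum fun ω _ => mul_le_mul_of_nonneg_left (h ω) ?_
  exact Finset.prod_nonneg fun e _ => bw_nonneg h0 h1 _

theorem Ex_add (f g : (ι → Bool) → ℝ) : Ex p (fun ω => f ω + g ω) = Ex p f + Ex p g := by
  unfold Ex; rw [← Finset.sum_add_distrib]; simp only [mul_add]

theorem Ex_sub (f g : (ι → Bool) → ℝ) : Ex p (fun ω => f ω - g ω) = Ex p f - Ex p g := by
  unfold Ex; rw [← Finset.sum_sub_distrib]; simp only [mul_sub]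

theorem Ex_smul (c : ℝ) (f : (ι → Bool) → ℝ) : Ex p (fun ω => c * f ω) = c * Ex p f := by
  unfold Ex; rw [Finset.mul_sum]; refine Finset.sum_congr rfl fun _ _ => by ring

theorem Ex_sum {κ : Type*} (s : Finset κ) (f : κ → (ι → Bool) → ℝ) :
    Ex p (fun ω => ∑ i ∈ s, f i ω) = ∑ i ∈ s, Ex p (f i) := by
  unfold Ex
  rw [Finset.sum_comm]
  simp only [Finset.mul_sum]

theorem Ex_equiv {κ : Type*} [Fintype κ] [DecidableEq κ] (e : ι ≃ κ) (f : (ι → Bool) → ℝ) :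
    Ex p f = Ex p (fun ω : κ → Bool => f (fun i => ω (e i))) := by
  unfold Ex
  refine Fintype.sum_equiv (e.arrowCongr (Equiv.refl Bool)) _ _ fun ω => ?_
  congr 1
  · refine Fintype.prod_equiv e _ _ fun i => ?_
    simp [Equiv.arrowCongr]
  · congr 1; funext i; simp [Equiv.arrowCongr]

theorem Pr_eq (S : (ι → Bool) → Prop) [DecidablePred S] :
    Pr p S = Ex p (fun ω => if S ω then 1 else 0) := by
  unfold Pr Ex
  refine Finset.sum_congr rfl fun ω _ => ?_
  by_cases h : S ω <;> simp [h]

theorem Pr_le_Ex (h0 : 0 ≤ p) (h1 : p ≤ 1) {S : (ι → Bool) → Prop} {f : (ι → Bool) → ℝ}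
    (hf : ∀ ω, 0 ≤ f ω) (hS : ∀ ω, S ω → 1 ≤ f ω) : Pr p S ≤ Ex p f := by
  classical
  rw [Pr_eq]
  refine Ex_mono h0 h1 fun ω => ?_
  split_ifs with h
  · exact hS ω h
  · exact hf ω

theorem Pr_mono (h0 : 0 ≤ p) (h1 : p ≤ 1) {S T : (ι → Bool) → Prop}
    (h : ∀ ω, S ω → T ω) : Pr p S ≤ Pr p T := by
  classical
  rw [Pr_eq T]
  refine Pr_le_Ex h0 h1 (fun ω => by split_ifs <;> norm_num) fun ω hs => ?_
  rw [if_pos (h ω hs)]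

theorem Pr_union (h0 : 0 ≤ p) (h1 : p ≤ 1) {κ : Type*} (s : Finset κ)
    (T : κ → (ι → Bool) → Prop) (b : ℝ) (hb : ∀ i ∈ s, Pr p (T i) ≤ b) :
    Pr p (fun ω => ∃ i ∈ s, T i ω) ≤ s.card * b := by
  classical
  calc Pr p (fun ω => ∃ i ∈ s, T i ω) ≤ Ex p (fun ω => ∑ i ∈ s, if T i ω then (1 : ℝ) else 0) := by
        refine Pr_le_Ex h0 h1 (fun ω => Finset.sum_nonneg fun i _ => by split_ifs <;> norm_num) ?_
        rintro ω ⟨i, hi, hT⟩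
        refine le_trans ?_ (Finset.single_le_sum (f := fun i => if T i ω then (1 : ℝ) else 0)
          (fun i _ => by split_ifs <;> norm_num) hi)
        simp [hT]
    _ = ∑ i ∈ s, Pr p (T i) := by rw [Ex_sum]; simp only [Pr_eq]
    _ ≤ ∑ i ∈ s, b := Finset.sum_le_sum hb
    _ = s.card * b := by simp

theorem Pr_or (h0 : 0 ≤ p) (h1 : p ≤ 1) (S T : (ι → Bool) → Prop) :
    Pr p (fun ω => S ω ∨ T ω) ≤ Pr p S + Pr p T := by
  classical
  rw [Pr_eq S, Pr_eq T, ← Ex_add]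
  refine Pr_le_Ex h0 h1 (fun ω => by split_ifs <;> norm_num) ?_
  rintro ω (h | h) <;> simp [h] <;> split_ifs <;> norm_num

theorem Pr_not (S : (ι → Bool) → Prop) : Pr p (fun ω => ¬ S ω) = 1 - Pr p S := by
  classical
  rw [Pr_eq, Pr_eq]
  rw [eq_sub_iff_add_eq, ← Ex_add]
  refine Eq.trans ?_ (Ex_const (p := p) (ι := ι) 1)
  congr 1; funext ω; split_ifs <;> simp_all

theorem Pr_nonneg (h0 : 0 ≤ p) (h1 : p ≤ 1) (S : (ι → Bool) → Prop) : 0 ≤ Pr p S := by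
  classical
  rw [Pr_eq]
  refine le_trans (Ex_const (p := p) (ι := ι) 0).ge ?_
  exact Ex_mono h0 h1 fun ω => by split_ifs <;> norm_num

theorem Pr_absent (F : Finset ι) : Pr p (fun ω => ∀ e ∈ F, ω e = false) = (1 - p) ^ F.card := by
  rw [Pr_eq]
  have : (fun ω : ι → Bool => if (∀ e ∈ F, ω e = false) then (1 : ℝ) else 0)
      = fun ω => ∏ e, (if e ∈ F then (if ω e then 0 else 1) else (1 : ℝ)) := by
    funext ω
    split_ifs with h
    · symm; apply Finset.prod_eq_one; intro e _
      split_ifs with h1 h2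
      · simp [h e h1] at h2
      · rfl
      · rfl
    · push Not at h
      obtain ⟨e, he, hw⟩ := h
      symm; apply Finset.prod_eq_zero (Finset.mem_univ e)
      simp at hw; simp [he, hw]
  rw [this, Ex_prod (fun e b => if e ∈ F then (if b then 0 else 1) else (1 : ℝ))]
  rw [← Finset.prod_subset (Finset.subset_univ F)]
  · rw [Finset.prod_congr rfl (g := fun _ => 1 - p)]
    · simp
    · intro e he; simp [he]
  · intro e _ he; simp [he]

theorem Pr_present (F : Finset ι) : Pr p (fun ω => ∀ e ∈ F, ω e = true) = p ^ F.card := by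
  rw [Pr_eq]
  have : (fun ω : ι → Bool => if (∀ e ∈ F, ω e = true) then (1 : ℝ) else 0)
      = fun ω => ∏ e, (if e ∈ F then (if ω e then 1 else 0) else (1 : ℝ)) := by
    funext ω
    split_ifs with h
    · symm; apply Finset.prod_eq_one; intro e _
      split_ifs with h1 h2
      · rfl
      · simp [h e h1] at h2
      · rfl
    · push Not at h
      obtain ⟨e, he, hw⟩ := h
      symm; apply Finset.prod_eq_zero (Finset.mem_univ e)
      simp at hw; simp [he, hw]
  rw [this, Ex_prod (fun e b => if e ∈ F then (if b then 1 else 0) else (1 : ℝ))]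
  rw [← Finset.prod_subset (Finset.subset_univ F)]
  · rw [Finset.prod_congr rfl (g := fun _ => p)]
    · simp
    · intro e he; simp [he]
  · intro e _ he; simp [he]

/-- Markov-type bound: few present edges among `F`. -/
theorem Pr_few (h0 : 0 ≤ p) (h1 : p ≤ 1) (F : Finset ι) (t : ℕ) (θ : ℝ) (hθ : 0 < θ) (hθ1 : θ ≤ 1) :
    Pr p (fun ω => (F.filter (fun e => ω e = true)).card ≤ t)
      ≤ (p * θ + (1 - p)) ^ F.card / θ ^ t := by
  calc _ ≤ Ex p (fun ω => (1 / θ ^ t) * ∏ e, (if e ∈ F then (if ω e then θ else 1) else (1 : ℝ))) := by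
        refine Pr_le_Ex h0 h1 ?_ ?_
        · intro ω
          refine mul_nonneg (by positivity) (Finset.prod_nonneg fun e _ => ?_)
          split_ifs <;> linarith
        · intro ω hω
          have : (∏ e, (if e ∈ F then (if ω e then θ else 1) else (1 : ℝ)))
              = θ ^ (F.filter (fun e => ω e = true)).card := by
            rw [← Finset.prod_const]
            rw [Finset.prod_filter]
            rw [← Finset.prod_subset (Finset.subset_univ F)]
            · exact Finset.prod_congr rfl fun e he => by simp [he]
            · intro e _ he; simp [he]
          rw [this, one_div, inv_mul_eq_div, le_div_iff₀ (by positivity), one_mul]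
          exact pow_le_pow_of_le_one hθ.le hθ1 hω
    _ = _ := by
        rw [Ex_smul, Ex_prod (fun e b => if e ∈ F then (if b then θ else 1) else (1 : ℝ))]
        rw [← Finset.prod_subset (Finset.subset_univ F)]
        · rw [Finset.prod_congr rfl (g := fun _ => p * θ + (1 - p))]
          · simp; ring
          · intro e he; simp [he]
        · intro e _ he; simp [he]

end ExBasic

/-! ### McDiarmid -/

theorem two_point (p a b l c : ℝ) (h0 : 0 ≤ p) (h1 : p ≤ 1) (hl : 0 ≤ l) (hc : |a - b| ≤ c)
    (hlc : l * c ≤ 1) :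
    p * exp (-l * a) + (1 - p) * exp (-l * b)
      ≤ exp (-l * (p * a + (1 - p) * b) + l ^ 2 * c ^ 2) := by
  have hc0 : 0 ≤ c := le_trans (abs_nonneg _) hc
  set x := -l * ((1 - p) * (a - b)) with hx
  set y := l * (p * (a - b)) with hy
  have hxa : |x| ≤ l * c := by
    rw [hx, neg_mul, abs_neg, abs_mul, abs_mul, abs_of_nonneg hl, abs_of_nonneg (by linarith : 0 ≤ 1 - p)]
    have : (1 - p) * |a - b| ≤ 1 * c := by
      apply mul_le_mul (by linarith) hc (abs_nonneg _) (by norm_num)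
    nlinarith
  have hya : |y| ≤ l * c := by
    rw [hy, abs_mul, abs_mul, abs_of_nonneg hl, abs_of_nonneg h0]
    have : p * |a - b| ≤ 1 * c := by
      apply mul_le_mul (by linarith) hc (abs_nonneg _) (by norm_num)
    nlinarith
  have ex := (abs_le.1 (Real.abs_exp_sub_one_sub_id_le (hxa.trans hlc))).2
  have ey := (abs_le.1 (Real.abs_exp_sub_one_sub_id_le (hya.trans hlc))).2
  have hx2 : x ^ 2 ≤ l ^ 2 * c ^ 2 := by
    rw [← mul_pow, ← sq_abs x]; exact pow_le_pow_left₀ (abs_nonneg _) hxa 2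
  have hy2 : y ^ 2 ≤ l ^ 2 * c ^ 2 := by
    rw [← mul_pow, ← sq_abs y]; exact pow_le_pow_left₀ (abs_nonneg _) hya 2
  have hxy : p * x + (1 - p) * y = 0 := by rw [hx, hy]; ring
  have key : p * exp x + (1 - p) * exp y ≤ exp (l ^ 2 * c ^ 2) := by
    have := Real.add_one_le_exp (l ^ 2 * c ^ 2)
    nlinarith
  have e1 : exp (-l * a) = exp (-l * (p * a + (1 - p) * b)) * exp x := by
    rw [← Real.exp_add, hx]; congr 1; ring
  have e2 : exp (-l * b) = exp (-l * (p * a + (1 - p) * b)) * exp y := by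
    rw [← Real.exp_add, hy]; congr 1; ring
  rw [e1, e2, Real.exp_add]
  have := mul_le_mul_of_nonneg_left key (Real.exp_pos (-l * (p * a + (1 - p) * b))).le
  linarith

theorem Ex_fin_succ (p : ℝ) (n : ℕ) (f : (Fin (n + 1) → Bool) → ℝ) :
    Ex p f = p * Ex p (fun ω => f (Fin.cons true ω)) + (1 - p) * Ex p (fun ω => f (Fin.cons false ω)) := by
  unfold Ex
  rw [← (Fin.consEquiv (fun _ : Fin (n+1) => Bool)).sum_comp, Fintype.sum_prod_type]
  simp only [Fintype.sum_bool, Fin.consEquiv_apply, Fin.prod_univ_succ, Fin.cons_zero, Fin.cons_succ,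
    Finset.mul_sum, bw]
  congr 1 <;> refine Finset.sum_congr rfl fun _ _ => by simp [mul_assoc, Fin.consEquiv]

theorem mcd_fin (p : ℝ) (h0 : 0 ≤ p) (h1 : p ≤ 1) (l : ℝ) (hl : 0 ≤ l) (n : ℕ) :
    ∀ (f : (Fin n → Bool) → ℝ) (c : Fin n → ℝ), (∀ e, l * c e ≤ 1) →
    (∀ ω e b, |f ω - f (Function.update ω e b)| ≤ c e) →
    Ex p (fun ω => exp (-l * f ω)) ≤ exp (-l * Ex p f + l ^ 2 * ∑ e, c e ^ 2) := by
  induction n with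
  | zero =>
    intro f c _ _
    have : ∀ g : (Fin 0 → Bool) → ℝ, Ex p g = g default := by
      intro g; unfold Ex; simp; congr 1; exact Subsingleton.elim _ _
    rw [this, this]; simp
  | succ n ih =>
    intro f c hlc hf
    rw [Ex_fin_succ, Ex_fin_succ p n f]
    have hh : ∀ b : Bool, Ex p (fun ω : Fin n → Bool => exp (-l * f (Fin.cons b ω)))
        ≤ exp (-l * Ex p (fun ω => f (Fin.cons b ω)) + l ^ 2 * ∑ e : Fin n, c e.succ ^ 2) := by
      intro b
      refine ih (fun ω => f (Fin.cons b ω)) (fun e => c e.succ) (fun e => hlc _) ?_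
      intro ω e b'
      have := hf (Fin.cons b ω) e.succ b'
      rwa [← Fin.cons_update] at this
    set A := Ex p (fun ω : Fin n → Bool => f (Fin.cons true ω))
    set B := Ex p (fun ω : Fin n → Bool => f (Fin.cons false ω))
    have hAB : |A - B| ≤ c 0 := by
      have hp : ∀ ω : Fin n → Bool, |f (Fin.cons true ω) - f (Fin.cons false ω)| ≤ c 0 := by
        intro ω
        have := hf (Fin.cons true ω) 0 false
        rwa [Fin.update_cons_zero] at this
      rw [abs_le]
      constructor
      · have : Ex p (fun ω : Fin n → Bool => -c 0) ≤ A - B := by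
          rw [← Ex_sub]; exact Ex_mono h0 h1 fun ω => (abs_le.1 (hp ω)).1
        rwa [Ex_const] at this
      · have : A - B ≤ Ex p (fun ω : Fin n → Bool => c 0) := by
          rw [← Ex_sub]; exact Ex_mono h0 h1 fun ω => (abs_le.1 (hp ω)).2
        rwa [Ex_const] at this
    have t := two_point p A B l (c 0) h0 h1 hl hAB (hlc 0)
    rw [Fin.sum_univ_succ]
    set Sg := ∑ e : Fin n, c e.succ ^ 2
    calc _ ≤ p * exp (-l * A + l ^ 2 * Sg) + (1 - p) * exp (-l * B + l ^ 2 * Sg) :=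
          add_le_add (mul_le_mul_of_nonneg_left (hh true) h0)
            (mul_le_mul_of_nonneg_left (hh false) (by linarith))
      _ = (p * exp (-l * A) + (1 - p) * exp (-l * B)) * exp (l ^ 2 * Sg) := by
          rw [Real.exp_add, Real.exp_add]; ring
      _ ≤ exp (-l * (p * A + (1 - p) * B) + l ^ 2 * c 0 ^ 2) * exp (l ^ 2 * Sg) :=
          mul_le_mul_of_nonneg_right t (Real.exp_pos _).le
      _ = _ := by rw [← Real.exp_add]; congr 1; ring

/-- Lower-tail bounded differences inequality. -/
theorem mcd {ι : Type*} [Fintype ι] [DecidableEq ι] (p : ℝ) (h0 : 0 ≤ p) (h1 : p ≤ 1)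
    (l : ℝ) (hl : 0 ≤ l)
    (f : (ι → Bool) → ℝ) (c : ι → ℝ) (hlc : ∀ e, l * c e ≤ 1)
    (hf : ∀ ω e b, |f ω - f (Function.update ω e b)| ≤ c e) (a : ℝ) :
    Pr p (fun ω => f ω ≤ a) ≤ exp (l * a - l * Ex p f + l ^ 2 * ∑ e, c e ^ 2) := by
  have e := Fintype.equivFin ι
  have key : Ex p (fun ω => exp (-l * f ω)) ≤ exp (-l * Ex p f + l ^ 2 * ∑ e, c e ^ 2) := by
    rw [Ex_equiv e, Ex_equiv e f, ← e.symm.sum_comp]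
    refine mcd_fin p h0 h1 l hl _ _ (fun i => c (e.symm i)) (fun i => hlc _) ?_
    intro ω i b
    have := hf (fun j => ω (e j)) (e.symm i) b
    convert this using 3
    congr 1
    funext j
    by_cases hj : j = e.symm i
    · subst hj; simp
    · have : e j ≠ i := fun h => hj (by rw [← h]; simp)
      simp [Function.update_of_ne hj, Function.update_of_ne this]
  calc Pr p (fun ω => f ω ≤ a) ≤ Ex p (fun ω => exp (l * a) * exp (-l * f ω)) := by
        refine Pr_le_Ex h0 h1 (fun ω => by positivity) fun ω h => ?_
        rw [← Real.exp_add]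
        apply Real.one_le_exp; nlinarith
    _ = exp (l * a) * Ex p (fun ω => exp (-l * f ω)) := Ex_smul _ _
    _ ≤ exp (l * a) * exp (-l * Ex p f + l ^ 2 * ∑ e, c e ^ 2) :=
        mul_le_mul_of_nonneg_left key (Real.exp_pos _).le
    _ = _ := by rw [← Real.exp_add]; congr 1; ring

/-! ### link with the measure -/

theorem erMeasure_eq (n : ℕ) (p : ℝ) (h0 : 0 ≤ p) (h1 : p ≤ 1) (S : (EdgeType n → Bool) → Prop) :
    erMeasure n p {ω | S ω} = ENNReal.ofReal (Pr p S) := by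
  classical
  have hmin : min (Real.toNNReal p) 1 = Real.toNNReal p := by
    apply min_eq_left; rw [Real.toNNReal_le_one]; exact h1
  have hs : ∀ ω : EdgeType n → Bool, erMeasure n p {ω} = ENNReal.ofReal (∏ e, bw p (ω e)) := by
    intro ω
    unfold erMeasure
    rw [Measure.pi_singleton, ENNReal.ofReal_prod_of_nonneg (fun e _ => bw_nonneg h0 h1 _)]
    refine Finset.prod_congr rfl fun e _ => ?_
    rw [PMF.toMeasure_apply_singleton _ _ (measurableSet_singleton _), PMF.bernoulli_apply]
    cases ω e
    · simp only [hmin, bw, cond_false]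
      rw [if_neg (by simp), ENNReal.ofReal_sub _ h0]
      simp [ENNReal.ofReal]
    · simp [hmin, bw, ENNReal.ofReal]
  have : ({ω | S ω} : Set (EdgeType n → Bool)) = ((Finset.univ.filter S : Finset _) : Set _) := by
    ext; simp
  rw [this, ← sum_measure_singleton, Finset.sum_congr rfl (fun ω _ => hs ω)]
  rw [← ENNReal.ofReal_sum_of_nonneg
    (fun ω _ => Finset.prod_nonneg fun e _ => bw_nonneg h0 h1 _)]
  congr 1
  rw [Pr_eq]; unfold Ex
  rw [Finset.sum_filter]
  refine Finset.sum_congr rfl fun ω _ => by by_cases h : S ω <;> simp [h]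


section Edges
variable {n : ℕ}

/-- potential edges inside `A` -/
def pairsIn (A : Finset (Fin n)) : Finset (EdgeType n) :=
  Finset.univ.filter (fun e => ∀ v ∈ e.1, v ∈ A)

theorem mem_pairsIn {A : Finset (Fin n)} {e : EdgeType n} :
    e ∈ pairsIn A ↔ ∀ v ∈ e.1, v ∈ A := by simp [pairsIn]

theorem card_pairsIn (A : Finset (Fin n)) : (pairsIn A).card = A.card.choose 2 := by
  rw [← Sym2.card_image_offDiag, ← Finset.card_map (Function.Embedding.subtype _)]
  congr 1
  ext e
  induction e with | _ x y => ?_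
  simp only [Finset.mem_map, mem_pairsIn, Function.Embedding.subtype_apply, Subtype.exists,
    Finset.mem_image, Finset.mem_offDiag, Prod.exists]
  constructor
  · rintro ⟨e, h, h1, rfl⟩
    exact ⟨x, y, ⟨h1 x (by simp), h1 y (by simp), by simpa using h⟩, rfl⟩
  · rintro ⟨a, b, ⟨ha, hb, hab⟩, h⟩
    refine ⟨s(x, y), ?_, ?_, rfl⟩
    · rw [← h]; simpa using hab
    · rw [← h]; simp [ha, hb]

theorem pairsIn_inter (A B : Finset (Fin n)) : pairsIn (A ∩ B) = pairsIn A ∩ pairsIn B := by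
  ext e; simp only [mem_pairsIn, Finset.mem_inter]
  exact forall₂_and

theorem two_le_card_of_mem {A : Finset (Fin n)} {e : EdgeType n} (h : e ∈ pairsIn A) :
    2 ≤ A.card := by
  have : 0 < (pairsIn A).card := Finset.card_pos.2 ⟨e, h⟩
  rw [card_pairsIn] at this
  by_contra hh
  rw [Nat.choose_eq_zero_of_lt (by omega)] at this
  omega

theorem graphOf_adj {ω : EdgeType n → Bool} {u v : Fin n} :
    (graphOf ω).Adj u v ↔ ∃ h : ¬ (s(u, v) : Sym2 (Fin n)).IsDiag, ω ⟨s(u, v), h⟩ = true := by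
  unfold graphOf
  rw [SimpleGraph.fromEdgeSet_adj]
  constructor
  · rintro ⟨h, _⟩; exact h
  · rintro ⟨h, h1⟩; exact ⟨⟨h, h1⟩, by simpa using h⟩

/-- no edges of `ω` inside `A` -/
def Ind (ω : EdgeType n → Bool) (A : Finset (Fin n)) : Prop := ∀ e ∈ pairsIn A, ω e = false

theorem Ind.not_adj {ω : EdgeType n → Bool} {A : Finset (Fin n)} (h : Ind ω A) {u v : Fin n}
    (hu : u ∈ A) (hv : v ∈ A) : ¬ (graphOf ω).Adj u v := by
  rw [graphOf_adj]
  rintro ⟨h1, h2⟩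
  have := h ⟨s(u, v), h1⟩ (mem_pairsIn.2 (by simp [hu, hv]))
  rw [this] at h2; exact absurd h2 (by simp)

end Edges

/-! ### the pseudo-random properties -/

/-- every `t`-set spans more than `t` edges -/
def Prop1 {V : Type*} [DecidableEq V] (G : SimpleGraph V) (t : ℕ) : Prop :=
  ∀ A : Finset V, A.card = t → ∀ E : Finset (Sym2 V),
    (∀ u ∈ A, ∀ v ∈ A, G.Adj u v → s(u, v) ∈ E) → t < E.card

/-- no bipartite holes of size `t` -/
def Prop2 {V : Type*} (G : SimpleGraph V) (t : ℕ) : Prop :=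
  ∀ A B : Finset V, A.card = t → B.card = t → Disjoint A B → ∃ a ∈ A, ∃ b ∈ B, G.Adj a b

/-- any `m` vertices have many common neighbours -/
def Prop3 {V : Type*} (G : SimpleGraph V) (m : ℕ) (s : ℝ) : Prop :=
  ∀ a : Fin m → V, ∃ N : Finset V, s ≤ N.card ∧ ∀ v ∈ N, ∀ i, G.Adj v (a i)

/-- all `u`-sets contain independent `k`-sets -/
def Prop4 {V : Type*} (G : SimpleGraph V) (u k : ℕ) : Prop :=
  ∀ U : Finset V, U.card = u → ∃ I ⊆ U, I.card = k ∧ ∀ a ∈ I, ∀ b ∈ I, ¬ G.Adj a b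

theorem prob1 (n t : ℕ) (p θ : ℝ) (h0 : 0 ≤ p) (h1 : p ≤ 1) (hθ : 0 < θ) (hθ1 : θ ≤ 1) :
    Pr p (fun ω : EdgeType n → Bool => ¬ Prop1 (graphOf ω) t)
      ≤ n ^ t * ((p * θ + (1 - p)) ^ (t.choose 2) / θ ^ t) := by
  classical
  calc _ ≤ Pr p (fun ω : EdgeType n → Bool =>
        ∃ A ∈ (Finset.univ : Finset (Fin n)).powersetCard t,
          ((pairsIn A).filter (fun e => ω e = true)).card ≤ t) := by
        refine Pr_mono h0 h1 fun ω h => ?_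
        unfold Prop1 at h; push Not at h
        obtain ⟨A, hA, E, hE, hc⟩ := h
        refine ⟨A, by simp [Finset.mem_powersetCard, hA], le_trans ?_ hc⟩
        refine Finset.card_le_card_of_injOn (fun e => e.1) ?_ (fun _ _ _ _ h => Subtype.ext h)
        rintro ⟨e, hd⟩ he
        simp only [Finset.coe_filter, Set.mem_ofPred_eq, mem_pairsIn] at he
        induction e with | _ x y => ?_
        exact hE x (he.1 x (by simp)) y (he.1 y (by simp)) (graphOf_adj.2 ⟨hd, he.2⟩)
    _ ≤ (((Finset.univ : Finset (Fin n)).powersetCard t).card : ℝ) *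
          ((p * θ + (1 - p)) ^ (t.choose 2) / θ ^ t) := by
        refine Pr_union h0 h1 _ _ _ fun A hA => ?_
        rw [Finset.mem_powersetCard] at hA
        have := Pr_few (p := p) h0 h1 (pairsIn A) t θ hθ hθ1
        rwa [card_pairsIn, hA.2] at this
    _ ≤ _ := by
        refine mul_le_mul_of_nonneg_right ?_ ?_
        · rw [Finset.card_powersetCard, Finset.card_univ, Fintype.card_fin]
          exact_mod_cast Nat.choose_le_pow n t
        · have : 0 ≤ p * θ + (1 - p) := by nlinarith
          positivity

open Classical in
/-- potential edges between `A` and `B` -/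
noncomputable def pairsBetween {n : ℕ} (A B : Finset (Fin n)) : Finset (EdgeType n) :=
  Finset.univ.filter (fun e => ∃ a ∈ A, ∃ b ∈ B, e.1 = s(a, b))

theorem card_pairsBetween {n : ℕ} (A B : Finset (Fin n)) (h : Disjoint A B) :
    A.card * B.card ≤ (pairsBetween A B).card := by
  classical
  rw [← Finset.card_product]
  have hd : ∀ x ∈ A ×ˢ B, ¬ (s(x.1, x.2) : Sym2 (Fin n)).IsDiag := by
    rintro ⟨a, b⟩ hx
    rw [Finset.mem_product] at hx
    simp only [Sym2.isDiag_iff_proj_eq]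
    rintro rfl
    exact (Finset.disjoint_left.1 h) hx.1 hx.2
  refine Finset.card_le_card_of_forall_subsingleton
    (fun x e => e.1 = s(x.1, x.2)) ?_ ?_
  · intro x hx
    refine ⟨⟨s(x.1, x.2), hd x hx⟩, ?_, rfl⟩
    rw [Finset.mem_product] at hx
    simp only [pairsBetween, Finset.mem_filter, Finset.mem_univ, true_and]
    exact ⟨x.1, hx.1, x.2, hx.2, rfl⟩
  · rintro e _ ⟨a, b⟩ ⟨hx, h1⟩ ⟨c, d⟩ ⟨hy, h2⟩
    rw [Finset.mem_product] at hx hy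
    simp only at *
    rw [h1] at h2
    rcases Sym2.eq_iff.1 h2 with ⟨rfl, rfl⟩ | ⟨rfl, rfl⟩
    · rfl
    · exact absurd hy.2 ((Finset.disjoint_left.1 h) hx.1)

theorem prob2 (n t : ℕ) (p : ℝ) (h0 : 0 ≤ p) (h1 : p ≤ 1) :
    Pr p (fun ω : EdgeType n → Bool => ¬ Prop2 (graphOf ω) t)
      ≤ (n : ℝ) ^ (2 * t) * (1 - p) ^ (t * t) := by
  classical
  set S := ((Finset.univ : Finset (Fin n)).powersetCard t) ×ˢ
    ((Finset.univ : Finset (Fin n)).powersetCard t)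
  calc _ ≤ Pr p (fun ω : EdgeType n → Bool =>
        ∃ AB ∈ S.filter (fun AB => Disjoint AB.1 AB.2),
          ∀ e ∈ pairsBetween AB.1 AB.2, ω e = false) := by
        refine Pr_mono h0 h1 fun ω h => ?_
        unfold Prop2 at h; push Not at h
        obtain ⟨A, B, hA, hB, hd, hE⟩ := h
        refine ⟨(A, B), by simp [S, Finset.mem_powersetCard, hA, hB, hd], ?_⟩
        rintro ⟨e, he'⟩ he
        simp only [pairsBetween, Finset.mem_filter, Finset.mem_univ, true_and] at he
        obtain ⟨a, ha, b, hb, rfl⟩ := he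
        by_contra hc
        simp only [Bool.not_eq_false] at hc
        exact hE a ha b hb (graphOf_adj.2 ⟨he', hc⟩)
    _ ≤ ((S.filter (fun AB => Disjoint AB.1 AB.2)).card : ℝ) * (1 - p) ^ (t * t) := by
        refine Pr_union h0 h1 _ _ _ ?_
        rintro ⟨A, B⟩ hA
        simp only [S, Finset.mem_filter, Finset.mem_product, Finset.mem_powersetCard] at hA
        rw [Pr_absent]
        refine pow_le_pow_of_le_one (by linarith) (by linarith) ?_
        have := card_pairsBetween A B hA.2
        rwa [hA.1.1.2, hA.1.2.2] at this
    _ ≤ _ := by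
        refine mul_le_mul_of_nonneg_right ?_ (pow_nonneg (by linarith) _)
        have : (S.filter (fun AB => Disjoint AB.1 AB.2)).card ≤ n ^ (2 * t) := by
          refine (Finset.card_filter_le _ _).trans ?_
          rw [Finset.card_product, Finset.card_powersetCard, Finset.card_univ, Fintype.card_fin,
            two_mul, pow_add]
          exact Nat.mul_le_mul (Nat.choose_le_pow n t) (Nat.choose_le_pow n t)
        exact_mod_cast this

theorem card_edgeType_le (n : ℕ) : Fintype.card (EdgeType n) ≤ n ^ 2 := by
  have := card_pairsIn (n := n) Finset.univ
  have h2 : pairsIn (Finset.univ : Finset (Fin n)) = Finset.univ := by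
    ext e; simp [mem_pairsIn]
  rw [h2, Finset.card_univ] at this
  rw [this]; simp only [Finset.card_univ, Fintype.card_fin]
  exact Nat.choose_le_pow n 2

theorem prob3 (n m : ℕ) (p : ℝ) (h0 : 0 < p) (h1 : p ≤ 1) (s l : ℝ) (hl : 0 ≤ l) (hl1 : l ≤ 1) :
    Pr p (fun ω : EdgeType n → Bool => ¬ Prop3 (graphOf ω) m s)
      ≤ (n : ℝ) ^ m * exp (l * s - l * ((n - m) * p ^ m) + l ^ 2 * (m * n)) := by
  classical
  let f : (Fin m → Fin n) → (EdgeType n → Bool) → ℝ := fun a ω =>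
    ((Finset.univ.filter (fun v => ∀ i, (graphOf ω).Adj v (a i))).card : ℝ)
  calc _ ≤ Pr p (fun ω : EdgeType n → Bool =>
        ∃ a ∈ (Finset.univ : Finset (Fin m → Fin n)), f a ω ≤ s) := by
        refine Pr_mono h0.le h1 fun ω h => ?_
        unfold Prop3 at h; push Not at h
        obtain ⟨a, ha⟩ := h
        refine ⟨a, Finset.mem_univ _, ?_⟩
        by_contra hc
        push Not at hc
        obtain ⟨v, hv, i, hi⟩ := ha _ hc.le
        simp only [Finset.mem_filter] at hv
        exact hi (hv.2 i)
    _ ≤ ((Finset.univ : Finset (Fin m → Fin n)).card : ℝ) *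
          exp (l * s - l * ((n - m) * p ^ m) + l ^ 2 * (m * n)) := by
        refine Pr_union h0.le h1 _ _ _ fun a _ => ?_
        let c : EdgeType n → ℝ := fun e => if ∃ i, a i ∈ e.1 then 1 else 0
        have hc : ∑ e, c e ^ 2 ≤ m * n := by
          have : ∑ e, c e ^ 2 = ((Finset.univ.filter (fun e : EdgeType n => ∃ i, a i ∈ e.1)).card : ℝ) := by
            rw [Finset.card_filter]; push_cast
            refine Finset.sum_congr rfl fun e _ => ?_
            simp only [c]; split_ifs <;> simp
          rw [this]
          have h2 : (Finset.univ.filter (fun e : EdgeType n => ∃ i, a i ∈ e.1)).card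
              ≤ (Finset.univ : Finset (Fin m × Fin n)).card := by
            refine Finset.card_le_card_of_forall_subsingleton
              (fun e x => e.1 = s(a x.1, x.2)) ?_ ?_
            · rintro ⟨e, he⟩ h
              simp only [Finset.mem_filter, Finset.mem_univ, true_and] at h
              obtain ⟨i, hi⟩ := h
              exact ⟨(i, Sym2.Mem.other hi), Finset.mem_univ _, (Sym2.other_spec hi).symm⟩
            · rintro x _ e ⟨_, h1⟩ e' ⟨_, h2⟩
              exact Subtype.ext (h1.trans h2.symm)
          rw [Finset.card_univ, Fintype.card_prod, Fintype.card_fin, Fintype.card_fin] at h2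
          exact_mod_cast h2
        have hE : (n - m) * p ^ m ≤ Ex p (f a) := by
          have : f a = fun ω => ∑ v : Fin n, if (∀ i, (graphOf ω).Adj v (a i)) then (1 : ℝ) else 0 := by
            funext ω; simp only [f, Finset.card_filter]; push_cast; rfl
          rw [this, Ex_sum]
          have hv : ∀ v ∈ Finset.univ \ Finset.univ.image a,
              p ^ m ≤ Ex p (fun ω => if (∀ i, (graphOf ω).Adj v (a i)) then (1 : ℝ) else 0) := by
            intro v hv
            simp only [Finset.mem_sdiff, Finset.mem_univ, Finset.mem_image, true_and, not_exists] at hv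
            have hd : ∀ i, ¬ (s(v, a i) : Sym2 (Fin n)).IsDiag := fun i => by
              simpa using fun h => hv i h.symm
            rw [← Pr_eq]
            calc p ^ m ≤ p ^ (Finset.univ.image (fun i => (⟨s(v, a i), hd i⟩ : EdgeType n))).card := by
                  refine pow_le_pow_of_le_one h0.le h1 ?_
                  refine Finset.card_image_le.trans ?_
                  simp
              _ = _ := (Pr_present _).symm
              _ ≤ _ := by
                  refine Pr_mono h0.le h1 fun ω h i => ?_
                  exact graphOf_adj.2 ⟨hd i, h _ (Finset.mem_image_of_mem _ (Finset.mem_univ i))⟩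
          have hcard : (n - m : ℝ) ≤ (Finset.univ \ Finset.univ.image a).card := by
            have h3 : n ≤ (Finset.univ \ Finset.univ.image a).card + m := by
              have h4 := Finset.le_card_sdiff (Finset.univ.image a) (Finset.univ : Finset (Fin n))
              have h5 : (Finset.univ.image a).card ≤ m := Finset.card_image_le.trans (by simp)
              simp only [Finset.card_univ, Fintype.card_fin] at h4
              omega
            have : (n : ℝ) ≤ ((Finset.univ \ Finset.univ.image a).card : ℝ) + m := by exact_mod_cast h3
            linarith
          calc (n - m) * p ^ m ≤ (Finset.univ \ Finset.univ.image a).card * p ^ m :=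
                mul_le_mul_of_nonneg_right hcard (by positivity)
            _ = ∑ v ∈ Finset.univ \ Finset.univ.image a, p ^ m := by simp
            _ ≤ ∑ v ∈ Finset.univ \ Finset.univ.image a, _ := Finset.sum_le_sum hv
            _ ≤ _ := by
                refine Finset.sum_le_sum_of_subset_of_nonneg (Finset.subset_univ _) ?_
                intro v _ _
                rw [← Pr_eq]; exact Pr_nonneg h0.le h1 _
        have hL : ∀ ω e b, |f a ω - f a (Function.update ω e b)| ≤ c e := by
          -- one-sided version
          have one : ∀ ω ω' : EdgeType n → Bool, ∀ e, (∀ e', e' ≠ e → ω e' = ω' e') →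
              f a ω ≤ f a ω' + c e := by
            intro ω ω' e hne
            by_cases hce : ∃ i, a i ∈ e.1
            · obtain ⟨i, hi⟩ := hce
              have hc1 : c e = 1 := by simp only [c]; rw [if_pos ⟨i, hi⟩]
              rw [hc1]
              have hall : ∃ z : Fin n, ∀ v, (∀ i, (graphOf ω).Adj v (a i)) → v ≠ z →
                  ∀ i, (graphOf ω').Adj v (a i) := by
                -- the only vertex that can be affected is one endpoint of `e`
                set y := Sym2.Mem.other hi with hy
                have hey : e.1 = s(a i, y) := (Sym2.other_spec hi).symm
                refine ⟨y, fun v hv hvy j => ?_⟩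
                obtain ⟨hd, hw⟩ := graphOf_adj.1 (hv j)
                refine graphOf_adj.2 ⟨hd, ?_⟩
                rw [← hne _ ?_]; · exact hw
                intro he
                have h6 : s(v, a j) = s(a i, y) := by rw [← hey, ← he]
                rcases Sym2.eq_iff.1 h6 with ⟨h7, _⟩ | ⟨h7, _⟩
                · exact (hv i).ne h7
                · exact hvy h7
              obtain ⟨z, hz⟩ := hall
              have : (Finset.univ.filter (fun v => ∀ i, (graphOf ω).Adj v (a i))) ⊆
                  insert z (Finset.univ.filter (fun v => ∀ i, (graphOf ω').Adj v (a i))) := by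
                intro v hv
                simp only [Finset.mem_filter, Finset.mem_univ, true_and, Finset.mem_insert] at hv ⊢
                by_cases hvz : v = z
                · left; exact hvz
                · right; exact hz v hv hvz
              have := (Finset.card_le_card this).trans (Finset.card_insert_le _ _)
              simp only [f]
              exact_mod_cast this
            · have hc0 : c e = 0 := by simp only [c]; rw [if_neg hce]
              rw [hc0, add_zero]
              simp only [f, Nat.cast_le]
              refine Finset.card_le_card fun v hv => ?_
              simp only [Finset.mem_filter, Finset.mem_univ, true_and] at hv ⊢
              intro i
              obtain ⟨hd, hw⟩ := graphOf_adj.1 (hv i)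
              refine graphOf_adj.2 ⟨hd, ?_⟩
              rw [← hne _ ?_]; · exact hw
              rintro rfl
              exact hce ⟨i, by simp⟩
          intro ω e b
          have a1 := one ω (Function.update ω e b) e (fun e' he => (Function.update_of_ne he _ _).symm)
          have a2 := one (Function.update ω e b) ω e (fun e' he => Function.update_of_ne he _ _)
          rw [abs_le]; constructor <;> linarith
        have hlc : ∀ e, l * c e ≤ 1 := by
          intro e; simp only [c]; split_ifs <;> linarith
        refine (mcd p h0.le h1 l hl (f a) c hlc hL s).trans ?_
        apply Real.exp_le_exp.2
        have := mul_le_mul_of_nonneg_left hE hl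
        have := mul_le_mul_of_nonneg_left hc (sq_nonneg l)
        linarith
    _ = _ := by
        congr 1; simp

set_option linter.unusedSectionVars false
set_option linter.unusedVariables false

section Janson
variable {ι κ : Type*} [Fintype ι] [DecidableEq ι]

/-- conflict indicator -/
noncomputable def cf (P : κ → Finset ι) (i j : κ) : ℝ := if Disjoint (P i) (P j) then 0 else 1

theorem cf_nonneg (P : κ → Finset ι) (i j : κ) : 0 ≤ cf P i j := by
  unfold cf; split_ifs <;> norm_num

/-- penalised weight -/
noncomputable def Fw (s : Finset κ) (P : κ → Finset ι) (y : κ → ℝ) : ℝ :=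
  ∑ i ∈ s, y i - (1 / 2) * ∑ i ∈ s, ∑ j ∈ s, cf P i j * (y i * y j)

/-- feasible weights -/
def Feas (P : κ → Finset ι) (ω : ι → Bool) (y : κ → ℝ) : Prop :=
  (∀ i, 0 ≤ y i) ∧ ∀ i, y i ≠ 0 → ∀ e ∈ P i, ω e = false

/-- the fractional packing value -/
noncomputable def Yv (s : Finset κ) (P : κ → Finset ι) (ω : ι → Bool) : ℝ :=
  sSup {a | ∃ y, Feas P ω y ∧ a = Fw s P y}

theorem Fw_le (s : Finset κ) (P : κ → Finset ι) (hP : ∀ i ∈ s, (P i).Nonempty) (y : κ → ℝ)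
    (hy : ∀ i, 0 ≤ y i) : Fw s P y ≤ s.card := by
  have h1 : ∑ i ∈ s, y i * y i ≤ ∑ i ∈ s, ∑ j ∈ s, cf P i j * (y i * y j) := by
    refine Finset.sum_le_sum fun i hi => ?_
    have : y i * y i = cf P i i * (y i * y i) := by
      have : ¬ Disjoint (P i) (P i) := by
        rw [disjoint_self]; exact (hP i hi).ne_empty
      rw [cf, if_neg this, one_mul]
    rw [this]
    exact Finset.single_le_sum (f := fun j => cf P i j * (y i * y j))
      (fun j _ => mul_nonneg (cf_nonneg _ _ _) (mul_nonneg (hy _) (hy _))) hi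
  have h2 : ∑ i ∈ s, y i - (1 / 2) * ∑ i ∈ s, y i * y i ≤ s.card := by
    rw [Finset.mul_sum, ← Finset.sum_sub_distrib]
    calc _ ≤ ∑ i ∈ s, (1 : ℝ) := Finset.sum_le_sum fun i _ => by nlinarith [sq_nonneg (y i - 1)]
      _ = _ := by simp
  unfold Fw
  linarith

theorem Yv_bdd (s : Finset κ) (P : κ → Finset ι) (hP : ∀ i ∈ s, (P i).Nonempty) (ω : ι → Bool) :
    BddAbove {a | ∃ y, Feas P ω y ∧ a = Fw s P y} := by
  refine ⟨s.card, ?_⟩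
  rintro a ⟨y, hy, rfl⟩
  exact Fw_le s P hP y hy.1

theorem Yv_nonempty (s : Finset κ) (P : κ → Finset ι) (ω : ι → Bool) :
    {a | ∃ y, Feas P ω y ∧ a = Fw s P y}.Nonempty :=
  ⟨_, 0, ⟨fun _ => le_rfl, fun i h => absurd rfl h⟩, rfl⟩

theorem Yv_lip (s : Finset κ) (P : κ → Finset ι) (hP : ∀ i ∈ s, (P i).Nonempty) (ω ω' : ι → Bool)
    (e : ι) (h : ∀ e', e' ≠ e → ω e' = ω' e') : Yv s P ω ≤ Yv s P ω' + 1 := by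
  classical
  refine csSup_le (Yv_nonempty s P ω) ?_
  rintro a ⟨y, hy, rfl⟩
  set y' : κ → ℝ := fun i => if e ∈ P i then 0 else y i with hy'
  set z : κ → ℝ := fun i => if e ∈ P i then y i else 0 with hz
  have hf : Feas P ω' y' := by
    constructor
    · intro i; simp only [hy']; split_ifs
      · exact le_rfl
      · exact hy.1 i
    · intro i hi e' he'
      simp only [hy'] at hi
      split_ifs at hi with hh
      · exact absurd rfl hi
      · rw [← h e' (fun h => hh (h ▸ he'))]; exact hy.2 i hi e' he'
  have h1 : Fw s P y' ≤ Yv s P ω' := le_csSup (Yv_bdd s P hP ω') ⟨y', hf, rfl⟩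
  have h2 : ∑ i ∈ s, ∑ j ∈ s, z i * z j ≤ ∑ i ∈ s, ∑ j ∈ s, cf P i j * (y i * y j)
      - ∑ i ∈ s, ∑ j ∈ s, cf P i j * (y' i * y' j) := by
    rw [← Finset.sum_sub_distrib]
    refine Finset.sum_le_sum fun i _ => ?_
    rw [← Finset.sum_sub_distrib]
    refine Finset.sum_le_sum fun j _ => ?_
    have hc := cf_nonneg P i j
    have hm := mul_nonneg hc (mul_nonneg (hy.1 i) (hy.1 j))
    simp only [hy', hz]
    by_cases hi : e ∈ P i <;> by_cases hj : e ∈ P j <;> simp only [hi, hj, if_true, if_false]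
    · have : ¬ Disjoint (P i) (P j) := fun hd => Finset.disjoint_left.1 hd hi hj
      simp [cf, this]
    all_goals simp only [mul_zero, zero_mul, sub_zero, sub_self, le_refl]
    all_goals exact hm
  have h3 : ∑ i ∈ s, y i = ∑ i ∈ s, y' i + ∑ i ∈ s, z i := by
    rw [← Finset.sum_add_distrib]
    refine Finset.sum_congr rfl fun i _ => ?_
    simp only [hy', hz]; split_ifs <;> ring
  rw [← Finset.sum_mul_sum] at h2
  have h4 : Fw s P y ≤ Fw s P y' + 1 := by
    unfold Fw
    nlinarith [sq_nonneg (∑ i ∈ s, z i - 1)]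
  linarith

theorem Yv_none (s : Finset κ) (P : κ → Finset ι) (ω : ι → Bool)
    (h : ∀ i ∈ s, ¬ ∀ e ∈ P i, ω e = false) : Yv s P ω ≤ 0 := by
  refine csSup_le (Yv_nonempty s P ω) ?_
  rintro a ⟨y, hy, rfl⟩
  have h0 : ∀ i ∈ s, y i = 0 := fun i hi => by
    by_contra hh; exact h i hi (hy.2 i hh)
  unfold Fw
  rw [Finset.sum_eq_zero h0, Finset.sum_eq_zero (fun i hi => Finset.sum_eq_zero fun j _ => by
    rw [h0 i hi]; ring)]
  simp

theorem janson (p : ℝ) (h0 : 0 ≤ p) (h1 : p ≤ 1) (s : Finset κ) (P : κ → Finset ι)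
    (hP : ∀ i ∈ s, (P i).Nonempty) (τ D l : ℝ) (hτ : 0 ≤ τ) (hl : 0 ≤ l) (hl1 : l ≤ 1)
    (hD : ∑ i ∈ s, ∑ j ∈ s, cf P i j * (1 - p) ^ (P i ∪ P j).card ≤ D) :
    Pr p (fun ω => ∀ i ∈ s, ¬ ∀ e ∈ P i, ω e = false) ≤
      Real.exp (- l * (τ * ∑ i ∈ s, (1 - p) ^ (P i).card - τ ^ 2 * D / 2)
        + l ^ 2 * Fintype.card ι) := by
  classical
  have hE : τ * ∑ i ∈ s, (1 - p) ^ (P i).card - τ ^ 2 * D / 2 ≤ Ex p (Yv s P) := by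
    calc _ ≤ Ex p (fun ω => Fw s P (fun i => τ * if ∀ e ∈ P i, ω e = false then 1 else 0)) := by
          unfold Fw
          rw [Ex_sub, Ex_sum, Ex_smul, Ex_sum]
          have e1 : ∀ i, Ex p (fun ω : ι → Bool => τ * if ∀ e ∈ P i, ω e = false then (1 : ℝ) else 0)
              = τ * (1 - p) ^ (P i).card := by
            intro i
            rw [Ex_smul, ← Pr_absent, Pr_eq]
          have e2 : ∀ i, Ex p (fun ω : ι → Bool => ∑ j ∈ s, cf P i j *
              ((τ * if ∀ e ∈ P i, ω e = false then (1 : ℝ) else 0) *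
               (τ * if ∀ e ∈ P j, ω e = false then (1 : ℝ) else 0)))
              = ∑ j ∈ s, τ ^ 2 * (cf P i j * (1 - p) ^ (P i ∪ P j).card) := by
            intro i
            rw [Ex_sum]
            refine Finset.sum_congr rfl fun j _ => ?_
            rw [← Pr_absent, Pr_eq, ← Ex_smul, ← Ex_smul]
            congr 1; funext ω
            have : (∀ e ∈ P i ∪ P j, ω e = false) ↔
              (∀ e ∈ P i, ω e = false) ∧ (∀ e ∈ P j, ω e = false) := by
              simp only [Finset.mem_union]
              constructor
              · intro h; exact ⟨fun e he => h e (Or.inl he), fun e he => h e (Or.inr he)⟩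
              · rintro ⟨h, h'⟩ e (he | he)
                · exact h e he
                · exact h' e he
            by_cases ha : ∀ e ∈ P i, ω e = false
            · by_cases hb : ∀ e ∈ P j, ω e = false
              · rw [if_pos ha, if_pos hb, if_pos (this.2 ⟨ha, hb⟩)]; ring
              · rw [if_pos ha, if_neg hb, if_neg (fun h => hb (this.1 h).2)]; ring
            · rw [if_neg ha, if_neg (fun h => ha (this.1 h).1)]; ring
          simp only [e1, e2]
          simp only [← Finset.mul_sum]
          nlinarith [sq_nonneg τ]
      _ ≤ _ := by
          refine Ex_mono h0 h1 fun ω => le_csSup (Yv_bdd s P hP ω) ⟨_, ⟨?_, ?_⟩, rfl⟩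
          · intro i; split_ifs <;> simp [hτ]
          · intro i hi
            by_contra hh
            rw [if_neg hh] at hi; simp at hi
  calc _ ≤ Pr p (fun ω => Yv s P ω ≤ 0) := Pr_mono h0 h1 fun ω h => Yv_none s P ω h
    _ ≤ Real.exp (l * 0 - l * Ex p (Yv s P) + l ^ 2 * ∑ e : ι, (1 : ℝ) ^ 2) := by
        refine mcd p h0 h1 l hl _ (fun _ => 1) (fun _ => by linarith) ?_ 0
        intro ω e b
        have a1 := Yv_lip s P hP ω (Function.update ω e b) e (fun e' h => by simp [h])
        have a2 := Yv_lip s P hP (Function.update ω e b) ω e (fun e' h => by simp [h])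
        rw [abs_le]; constructor <;> linarith
    _ ≤ _ := by
        refine Real.exp_le_exp.2 ?_
        simp only [one_pow, Finset.sum_const, Finset.card_univ, nsmul_eq_mul, mul_one]
        nlinarith
end Janson

theorem choose_shift (u k l : ℕ) (hk : k ≤ u) (hl : l ≤ k) :
    u ^ l * (u - l).choose (k - l) ≤ k ^ l * u.choose k := by
  induction l with
  | zero => simp
  | succ l ih =>
    have ih := ih (by omega)
    have h1 := Nat.add_one_mul_choose_eq (u - (l + 1)) (k - (l + 1))
    rw [show u - (l + 1) + 1 = u - l by omega, show k - (l + 1) + 1 = k - l by omega] at h1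
    have h2 : u * (k - l) ≤ k * (u - l) := by
      obtain ⟨a, rfl⟩ := Nat.exists_eq_add_of_le (show l ≤ k by omega)
      obtain ⟨b, rfl⟩ := Nat.exists_eq_add_of_le hk
      rw [show l + a - l = a by omega, show l + a + b - l = a + b by omega]
      nlinarith [Nat.zero_le (l * b)]
    have h3 : u * (u - (l + 1)).choose (k - (l + 1)) ≤ k * (u - l).choose (k - l) := by
      have hpos : 0 < u - l := by omega
      refine Nat.le_of_mul_le_mul_left (c := u - l) ?_ hpos
      calc _ = u * ((u - l) * (u - (l + 1)).choose (k - (l + 1))) := by ring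
        _ = u * (k - l) * (u - l).choose (k - l) := by rw [h1]; ring
        _ ≤ k * (u - l) * (u - l).choose (k - l) := Nat.mul_le_mul_right _ h2
        _ = _ := by ring
    calc _ = u ^ l * (u * (u - (l + 1)).choose (k - (l + 1))) := by ring
      _ ≤ u ^ l * (k * (u - l).choose (k - l)) := Nat.mul_le_mul_left _ h3
      _ = k * (u ^ l * (u - l).choose (k - l)) := by ring
      _ ≤ k * (k ^ l * u.choose k) := Nat.mul_le_mul_left _ ih
      _ = _ := by ring

theorem count_supersets {α : Type*} [DecidableEq α] (U L : Finset α) (k : ℕ) :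
    ((U.powersetCard k).filter (fun B => L ⊆ B)).card ≤ (U.card - L.card).choose (k - L.card) := by
  by_cases hL : L ⊆ U
  · rw [← Finset.card_sdiff_of_subset hL, ← Finset.card_powersetCard]
    refine Finset.card_le_card_of_injOn (fun B => B \ L) ?_ ?_
    · intro B hB
      simp only [Finset.coe_filter, Finset.mem_powersetCard, Set.mem_ofPred_eq] at hB
      simp only [Finset.mem_coe, Finset.mem_powersetCard]
      exact ⟨Finset.sdiff_subset_sdiff hB.1.1 le_rfl, by
        rw [Finset.card_sdiff_of_subset hB.2, hB.1.2]⟩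
    · intro B hB C hC h
      simp only [Finset.coe_filter, Finset.mem_powersetCard, Set.mem_ofPred_eq] at hB hC
      simp only at h
      rw [← Finset.sdiff_union_of_subset hB.2, ← Finset.sdiff_union_of_subset hC.2, h]
  · rw [Finset.filter_false_of_mem]
    · simp
    · intro B hB h
      exact hL (h.trans (Finset.mem_powersetCard.1 hB).1)

theorem delta_bound (n : ℕ) (p : ℝ) (h0 : 0 ≤ p) (h1 : p < 1) (U : Finset (Fin n)) (k : ℕ)
    (hk : 2 ≤ k) (hku : k ≤ U.card) :
    ∑ A ∈ U.powersetCard k, ∑ B ∈ U.powersetCard k,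
      cf (pairsIn (n := n)) A B * (1 - p) ^ (pairsIn A ∪ pairsIn B).card ≤
    (U.card.choose k * (1 - p) ^ (k.choose 2)) ^ 2 *
      ∑ l ∈ Finset.Icc 2 k, ((k : ℝ) ^ 2 / U.card) ^ l * ((1 - p)⁻¹) ^ (l.choose 2) := by
  classical
  set q := 1 - p with hq
  have hq0 : 0 < q := by linarith
  set pk := q ^ (k.choose 2) with hpk
  have hpk0 : 0 < pk := by positivity
  set u := U.card with hu
  have hu0 : (0 : ℝ) < u := by exact_mod_cast (by omega : 0 < u)
  set S := ∑ l ∈ Finset.Icc 2 k, ((k : ℝ) ^ 2 / u) ^ l * (q⁻¹) ^ (l.choose 2) with hS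
  have main : ∀ A ∈ U.powersetCard k, ∑ B ∈ U.powersetCard k,
      cf (pairsIn (n := n)) A B * q ^ (pairsIn A ∪ pairsIn B).card ≤ pk ^ 2 * (u.choose k * S) := by
    intro A hA
    rw [Finset.mem_powersetCard] at hA
    set T := A.powerset.filter (fun L => 2 ≤ L.card) with hT
    calc _ ≤ ∑ B ∈ U.powersetCard k, ∑ L ∈ T,
          (if L ⊆ B then pk ^ 2 * (q⁻¹) ^ (L.card.choose 2) else 0) := by
          refine Finset.sum_le_sum fun B hB => ?_
          rw [Finset.mem_powersetCard] at hB
          have hnn : ∀ L ∈ T, 0 ≤ (if L ⊆ B then pk ^ 2 * (q⁻¹) ^ (L.card.choose 2) else 0) := by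
            intro L _; split_ifs
            · positivity
            · exact le_rfl
          by_cases hd : Disjoint (pairsIn A) (pairsIn B)
          · rw [cf, if_pos hd, zero_mul]
            exact Finset.sum_nonneg hnn
          · rw [cf, if_neg hd, one_mul]
            obtain ⟨e, he1, he2⟩ := Finset.not_disjoint_iff.1 hd
            have he : e ∈ pairsIn (A ∩ B) := by
              rw [pairsIn_inter]; exact Finset.mem_inter.2 ⟨he1, he2⟩
            have h2 := two_le_card_of_mem he
            have hmem : A ∩ B ∈ T := by simp [hT, h2]
            refine le_trans (le_of_eq ?_) (Finset.single_le_sum hnn hmem)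
            rw [if_pos Finset.inter_subset_right]
            have hc := Finset.card_union_add_card_inter (pairsIn A) (pairsIn B)
            rw [← pairsIn_inter, card_pairsIn, card_pairsIn, card_pairsIn, hA.2, hB.2] at hc
            have : q ^ (pairsIn A ∪ pairsIn B).card * q ^ ((A ∩ B).card.choose 2) = pk ^ 2 := by
              rw [← pow_add, hc, hpk, pow_add, sq]
            rw [inv_pow, ← this]
            field_simp
      _ = ∑ L ∈ T, ∑ B ∈ U.powersetCard k,
          (if L ⊆ B then pk ^ 2 * (q⁻¹) ^ (L.card.choose 2) else 0) := Finset.sum_comm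
      _ ≤ ∑ L ∈ T, pk ^ 2 * ((k / u : ℝ) ^ L.card * u.choose k * (q⁻¹) ^ (L.card.choose 2)) := by
          refine Finset.sum_le_sum fun L hL => ?_
          simp only [hT, Finset.mem_filter, Finset.mem_powerset] at hL
          rw [← Finset.sum_filter, Finset.sum_const, nsmul_eq_mul]
          have hLk : L.card ≤ k := by rw [← hA.2]; exact Finset.card_le_card hL.1
          have c1 := count_supersets U L k
          have c2 := choose_shift u k L.card hku hLk
          have c3 : (((U.powersetCard k).filter (fun B => L ⊆ B)).card : ℝ) ≤
              (k / u : ℝ) ^ L.card * u.choose k := by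
            have c2' : (u : ℝ) ^ L.card * ((u - L.card).choose (k - L.card) : ℕ) ≤
              (k : ℝ) ^ L.card * u.choose k := by exact_mod_cast c2
            have c1' : (((U.powersetCard k).filter (fun B => L ⊆ B)).card : ℝ) ≤
              ((u - L.card).choose (k - L.card) : ℕ) := by exact_mod_cast c1
            refine c1'.trans ?_
            rw [div_pow, div_mul_eq_mul_div, le_div_iff₀ (by positivity)]
            linarith
          calc _ ≤ ((k / u : ℝ) ^ L.card * u.choose k) * (pk ^ 2 * (q⁻¹) ^ (L.card.choose 2)) :=
                mul_le_mul_of_nonneg_right c3 (by positivity)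
            _ = _ := by ring
      _ = ∑ l ∈ Finset.Icc 2 k, ∑ L ∈ T with L.card = l,
            pk ^ 2 * ((k / u : ℝ) ^ L.card * u.choose k * (q⁻¹) ^ (L.card.choose 2)) := by
          rw [Finset.sum_fiberwise_of_maps_to]
          intro L hL
          simp only [hT, Finset.mem_filter, Finset.mem_powerset] at hL
          rw [Finset.mem_Icc]
          exact ⟨hL.2, by rw [← hA.2]; exact Finset.card_le_card hL.1⟩
      _ ≤ ∑ l ∈ Finset.Icc 2 k, pk ^ 2 * (u.choose k * (((k : ℝ) ^ 2 / u) ^ l * (q⁻¹) ^ (l.choose 2))) := by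
          refine Finset.sum_le_sum fun l _ => ?_
          have e1 : ∑ L ∈ T with L.card = l,
              pk ^ 2 * ((k / u : ℝ) ^ L.card * u.choose k * (q⁻¹) ^ (L.card.choose 2))
              = ∑ L ∈ T with L.card = l,
              pk ^ 2 * ((k / u : ℝ) ^ l * u.choose k * (q⁻¹) ^ (l.choose 2)) := by
            refine Finset.sum_congr rfl fun L hL => ?_
            rw [(Finset.mem_filter.1 hL).2]
          rw [e1, Finset.sum_const, nsmul_eq_mul]
          have e2 : ((T.filter (fun L => L.card = l)).card : ℝ) ≤ (k : ℝ) ^ l := by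
            have : (T.filter (fun L => L.card = l)).card ≤ (A.powersetCard l).card := by
              refine Finset.card_le_card fun L hL => ?_
              simp only [hT, Finset.mem_filter, Finset.mem_powerset] at hL
              exact Finset.mem_powersetCard.2 ⟨hL.1.1, hL.2⟩
            rw [Finset.card_powersetCard, hA.2] at this
            exact_mod_cast this.trans (Nat.choose_le_pow k l)
          calc _ ≤ (k : ℝ) ^ l * (pk ^ 2 * ((k / u : ℝ) ^ l * u.choose k * (q⁻¹) ^ (l.choose 2))) :=
                mul_le_mul_of_nonneg_right e2 (by positivity)
            _ = _ := by
                rw [show (k : ℝ) ^ 2 / u = k * (k / u) by ring, mul_pow]; ring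
      _ = _ := by rw [← Finset.mul_sum, ← Finset.mul_sum]
  calc _ ≤ ∑ A ∈ U.powersetCard k, pk ^ 2 * (u.choose k * S) := Finset.sum_le_sum main
    _ = _ := by
        rw [Finset.sum_const, Finset.card_powersetCard, nsmul_eq_mul]; ring

theorem prob4 (n u k : ℕ) (p : ℝ) (h0 : 0 ≤ p) (h1 : p < 1) (hk : 2 ≤ k) (hku : k ≤ u)
    (φ l : ℝ) (hφ : 0 < φ) (hl : 0 ≤ l) (hl1 : l ≤ 1)
    (hS : ∑ l ∈ Finset.Icc 2 k, ((k : ℝ) ^ 2 / u) ^ l * ((1 - p)⁻¹) ^ (l.choose 2) ≤ φ) :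
    Pr p (fun ω : EdgeType n → Bool => ¬ Prop4 (graphOf ω) u k) ≤
      2 ^ n * Real.exp (- l / (2 * φ) + l ^ 2 * n ^ 2) := by
  classical
  calc _ ≤ Pr p (fun ω : EdgeType n → Bool =>
        ∃ U ∈ (Finset.univ : Finset (Fin n)).powersetCard u,
          ∀ A ∈ U.powersetCard k, ¬ ∀ e ∈ pairsIn A, ω e = false) := by
        refine Pr_mono h0 h1.le fun ω h => ?_
        unfold Prop4 at h; push Not at h
        obtain ⟨U, hU, h⟩ := h
        refine ⟨U, by simp [Finset.mem_powersetCard, hU], fun A hA hI => ?_⟩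
        rw [Finset.mem_powersetCard] at hA
        obtain ⟨a, ha, b, hb, hab⟩ := h A hA.1 hA.2
        exact Ind.not_adj (ω := ω) hI ha hb hab
    _ ≤ (((Finset.univ : Finset (Fin n)).powersetCard u).card : ℝ) *
          Real.exp (- l / (2 * φ) + l ^ 2 * n ^ 2) := by
        refine Pr_union h0 h1.le _ _ _ fun U hU => ?_
        rw [Finset.mem_powersetCard] at hU
        have hUc := hU.2
        set μ : ℝ := u.choose k * (1 - p) ^ (k.choose 2) with hμ
        have hμ0 : 0 < μ := by
          have : 0 < u.choose k := Nat.choose_pos hku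
          have : 0 < 1 - p := by linarith
          positivity
        have hd := delta_bound n p h0 h1 U k hk (by omega)
        rw [hUc] at hd
        have := janson p h0 h1.le (U.powersetCard k) (pairsIn (n := n)) (fun A hA => by
          rw [← Finset.card_pos, card_pairsIn, (Finset.mem_powersetCard.1 hA).2]
          exact Nat.choose_pos hk) (1 / (μ * φ)) (μ ^ 2 * φ) l (by positivity) hl hl1
          (hd.trans (mul_le_mul_of_nonneg_left hS (by positivity)))
        refine this.trans (Real.exp_le_exp.2 ?_)
        have hs : ∑ A ∈ U.powersetCard k, (1 - p) ^ (pairsIn A).card = μ := by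
          rw [Finset.sum_congr rfl (g := fun _ => (1 - p) ^ (k.choose 2)) (fun A hA => by
            rw [card_pairsIn, (Finset.mem_powersetCard.1 hA).2])]
          rw [Finset.sum_const, Finset.card_powersetCard, nsmul_eq_mul, hUc]
        rw [hs]
        have e1 : 1 / (μ * φ) * μ - (1 / (μ * φ)) ^ 2 * (μ ^ 2 * φ) / 2 = 1 / (2 * φ) := by
          field_simp; ring
        rw [e1]
        have e2 : (Fintype.card (EdgeType n) : ℝ) ≤ n ^ 2 := by exact_mod_cast card_edgeType_le n
        have e3 := mul_le_mul_of_nonneg_left e2 (sq_nonneg l)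
        have e4 : -l * (1 / (2 * φ)) = - l / (2 * φ) := by ring
        rw [e4]; linarith
    _ ≤ _ := by
        refine mul_le_mul_of_nonneg_right ?_ (Real.exp_pos _).le
        rw [Finset.card_powersetCard, Finset.card_univ, Fintype.card_fin]
        exact_mod_cast Nat.choose_le_two_pow n u


section Paths
variable {V : Type*}

/-- `g 0, …, g l` is a path -/
def Pth (H : SimpleGraph V) (g : ℕ → V) (l : ℕ) : Prop :=
  (∀ i < l, H.Adj (g i) (g (i + 1))) ∧ ∀ i ≤ l, ∀ j ≤ l, g i = g j → i = j

theorem Pth.rev {H : SimpleGraph V} {g : ℕ → V} {l : ℕ} (h : Pth H g l) :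
    Pth H (fun i => g (l - i)) l := by
  constructor
  · intro i hi
    have := h.1 (l - (i + 1)) (by omega)
    rw [show l - (i + 1) + 1 = l - i by omega] at this
    exact this.symm
  · intro i hi j hj hij
    have := h.2 _ (by omega) _ (by omega) hij
    omega

theorem Pth.short {H : SimpleGraph V} {g : ℕ → V} {l : ℕ} (h : Pth H g (l + 1)) :
    Pth H g l :=
  ⟨fun i hi => h.1 i (by omega), fun i hi j hj => h.2 i (by omega) j (by omega)⟩

theorem cyc_adj {m : ℕ} (hm : 2 ≤ m) (a : ZMod m) : (cycGraph m).Adj a (a + 1) := by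
  have : Fact (1 < m) := ⟨by omega⟩
  unfold cycGraph
  rw [SimpleGraph.fromRel_adj]
  refine ⟨?_, Or.inr rfl⟩
  intro h
  exact one_ne_zero (left_eq_add.1 h)

theorem cast_zmod_eq {m : ℕ} {i j : ℕ} (hi : i < m) (hj : j < m)
    (h : (i : ZMod m) = j) : i = j := by
  rw [ZMod.natCast_eq_natCast_iff', Nat.mod_eq_of_lt hi, Nat.mod_eq_of_lt hj] at h
  exact h

theorem path_of_sat {H : SimpleGraph V} {m : ℕ} (hm : 3 ≤ m) {u v : V}
    (hn : ¬ ContainsCopy (cycGraph m) H)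
    (hc : ContainsCopy (cycGraph m) (H ⊔ SimpleGraph.fromEdgeSet {s(u, v)})) :
    ∃ g, g 0 = u ∧ g (m - 1) = v ∧ Pth H g (m - 1) := by
  obtain ⟨f, hf, hadj⟩ := hc
  have h1 : ∃ a : ZMod m, ¬ H.Adj (f a) (f (a + 1)) := by
    by_contra hh; push Not at hh
    refine hn ⟨f, hf, fun a b hab => ?_⟩
    unfold cycGraph at hab
    rw [SimpleGraph.fromRel_adj] at hab
    rcases hab.2 with rfl | rfl
    · exact (hh b).symm
    · exact hh a
  obtain ⟨a, ha⟩ := h1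
  have key : ∀ b : ZMod m, ¬ H.Adj (f b) (f (b + 1)) → s(f b, f (b + 1)) = s(u, v) := by
    intro b hb
    have := hadj (cyc_adj (by omega) b)
    rw [SimpleGraph.sup_adj, SimpleGraph.fromEdgeSet_adj] at this
    rcases this with h | h
    · exact absurd h hb
    · exact h.1
  have hg : Pth H (fun j : ℕ => f (a + 1 + j)) (m - 1) := by
    constructor
    · intro j hj
      by_contra hh
      have h2 := key (a + 1 + j) (by push_cast at hh; rwa [← add_assoc] at hh)
      rw [← key a ha, Sym2.eq_iff] at h2
      rcases h2 with ⟨h2, _⟩ | ⟨h2, h3⟩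
      · have h2 := hf h2
        rw [add_assoc, add_eq_left] at h2
        have : ((1 + j : ℕ) : ZMod m) = (0 : ℕ) := by push_cast; exact h2
        have := cast_zmod_eq (by omega) (by omega) this
        omega
      · have h2 := hf h2
        have h3 := hf h3
        rw [add_eq_left] at h2
        rw [h2, add_zero, add_assoc, add_eq_left] at h3
        have : ((2 : ℕ) : ZMod m) = (0 : ℕ) := by push_cast; rw [← h3]; norm_num
        have := cast_zmod_eq (by omega) (by omega) this
        omega
    · intro i hi j hj hij
      have := add_left_cancel (hf hij)
      exact cast_zmod_eq (by omega) (by omega) this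
  have hend : f (a + 1 + ((m - 1 : ℕ) : ZMod m)) = f a := by
    congr 1
    rw [Nat.cast_sub (by omega)]; simp
  rcases Sym2.eq_iff.1 (key a ha) with ⟨h2, h3⟩ | ⟨h2, h3⟩
  · refine ⟨_, ?_, ?_, hg.rev⟩
    · simp only [Nat.sub_zero]; rw [hend, h2]
    · simp [h3]
  · refine ⟨_, ?_, ?_, hg⟩
    · simp [h3]
    · rw [hend, h2]

theorem copy_of_cycle {H : SimpleGraph V} {m : ℕ} (hm : 3 ≤ m) (g : ℕ → V)
    (h : Pth H g (m - 1)) (hc : H.Adj (g (m - 1)) (g 0)) : ContainsCopy (cycGraph m) H := by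
  have : NeZero m := ⟨by omega⟩
  have : Fact (1 < m) := ⟨by omega⟩
  have key : ∀ b : ZMod m, H.Adj (g b.val) (g (b + 1).val) := by
    intro b
    have hb := ZMod.val_lt b
    by_cases hh : b.val = m - 1
    · have : (b + 1).val = 0 := by
        rw [ZMod.val_add, ZMod.val_one, hh, show m - 1 + 1 = m by omega, Nat.mod_self]
      rw [this, hh]; exact hc
    · have : (b + 1).val = b.val + 1 := by
        rw [ZMod.val_add, ZMod.val_one, Nat.mod_eq_of_lt (by omega)]
      rw [this]; exact h.1 _ (by omega)
  refine ⟨fun a => g a.val, ?_, ?_⟩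
  · intro a b hab
    have ha := ZMod.val_lt a
    have hb := ZMod.val_lt b
    exact ZMod.val_injective m (h.2 _ (by omega) _ (by omega) hab)
  · intro a b hab
    unfold cycGraph at hab
    rw [SimpleGraph.fromRel_adj] at hab
    rcases hab.2 with rfl | rfl
    · exact (key b).symm
    · exact key a

/-- `H` is a core `C` with trees hanging off it -/
structure Hang (H : SimpleGraph V) (C : Set V) where
  par : V → V
  h : V → ℕ
  top : V → V
  h_mem : ∀ v ∈ C, h v = 0
  h_not : ∀ v ∉ C, h v = h (par v) + 1
  top_mem : ∀ v ∈ C, top v = v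
  top_not : ∀ v ∉ C, top v = top (par v)
  adj : ∀ x y, H.Adj x y → (x ∈ C ∧ y ∈ C) ∨ (x ∉ C ∧ par x = y) ∨ (y ∉ C ∧ par y = x)

variable {H : SimpleGraph V} {C : Set V}

theorem Hang.shape (K : Hang H C) {g : ℕ → V} {l : ℕ} (hg : Pth H g l) :
    ∃ a b, a ≤ b ∧ b ≤ l ∧ (∀ i < a, g i ∉ C ∧ K.par (g i) = g (i + 1)) ∧
      (∀ i, a ≤ i → i < b → g i ∈ C ∧ g (i + 1) ∈ C) ∧
      (∀ i, b ≤ i → i < l → g (i + 1) ∉ C ∧ K.par (g (i + 1)) = g i) := by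
  induction l with
  | zero => exact ⟨0, 0, le_rfl, le_rfl, by omega, by omega, by omega⟩
  | succ l ih =>
    obtain ⟨a, b, hab, hbl, h1, h2, h3⟩ := ih hg.short
    rcases K.adj _ _ (hg.1 l (by omega)) with hcc | hup | hdn
    · have hb : b = l := by
        by_contra hb
        have := (h3 (l - 1) (by omega) (by omega)).1
        rw [show l - 1 + 1 = l by omega] at this
        exact this hcc.1
      subst hb
      refine ⟨a, b + 1, by omega, by omega, h1, ?_, by omega⟩
      intro i hi1 hi2
      by_cases hi : i < b
      · exact h2 i hi1 hi
      · have : i = b := by omega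
        subst this; exact hcc
    · have hb : b = l := by
        by_contra hb
        have := (h3 (l - 1) (by omega) (by omega)).2
        rw [show l - 1 + 1 = l by omega, hup.2] at this
        have := hg.2 _ (by omega) _ (by omega) this
        omega
      subst hb
      have ha : a = b := by
        by_contra ha
        have := (h2 (b - 1) (by omega) (by omega)).2
        rw [show b - 1 + 1 = b by omega] at this
        exact hup.1 this
      subst ha
      refine ⟨a + 1, a + 1, le_rfl, le_rfl, ?_, by omega, by omega⟩
      intro i hi
      by_cases hi' : i < a
      · exact h1 i hi'
      · have : i = a := by omega
        subst this; exact hup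
    · refine ⟨a, b, hab, by omega, h1, h2, ?_⟩
      intro i hi1 hi2
      by_cases hi : i < l
      · exact h3 i hi1 hi
      · have : i = l := by omega
        subst this; exact hdn

theorem Hang.shape2 (K : Hang H C) {g : ℕ → V} {l : ℕ} (hg : Pth H g l) :
    (K.top (g 0) = K.top (g l) ∧ l ≤ K.h (g 0) + K.h (g l)) ∨
    (K.top (g 0) ≠ K.top (g l) ∧ K.h (g 0) + K.h (g l) + 1 ≤ l) := by
  obtain ⟨a, b, hab, hbl, h1, h2, h3⟩ := K.shape hg
  have u1 : ∀ i ≤ a, K.h (g 0) = K.h (g i) + i ∧ K.top (g 0) = K.top (g i) := by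
    intro i hi
    induction i with
    | zero => simp
    | succ i ih =>
      obtain ⟨e1, e2⟩ := ih (by omega)
      obtain ⟨n1, n2⟩ := h1 i (by omega)
      rw [K.h_not _ n1, n2] at e1
      rw [K.top_not _ n1, n2] at e2
      exact ⟨by omega, e2⟩
  have u2 : ∀ i, b + i ≤ l → K.h (g (b + i)) = K.h (g b) + i ∧ K.top (g (b + i)) = K.top (g b) := by
    intro i hi
    induction i with
    | zero => simp
    | succ i ih =>
      obtain ⟨e1, e2⟩ := ih (by omega)
      obtain ⟨n1, n2⟩ := h3 (b + i) (by omega) (by omega)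
      have e3 := K.h_not _ n1
      have e4 := K.top_not _ n1
      rw [n2] at e3 e4
      exact ⟨by rw [← add_assoc, e3]; omega, by rw [← add_assoc, e4, e2]⟩
  obtain ⟨p1, p2⟩ := u1 a le_rfl
  obtain ⟨p3, p4⟩ := u2 (l - b) (by omega)
  rw [show b + (l - b) = l by omega] at p3 p4
  rcases hab.eq_or_lt with rfl | hlt
  · left
    exact ⟨by rw [p2, p4], by omega⟩
  · right
    have ha := (h2 a le_rfl hlt).1
    have hb := (h2 (b - 1) (by omega) (by omega)).2
    rw [show b - 1 + 1 = b by omega] at hb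
    rw [p2, p4, K.top_mem _ ha, K.top_mem _ hb]
    refine ⟨fun h => ?_, ?_⟩
    · have := hg.2 _ (by omega) _ (by omega) h
      omega
    · rw [K.h_mem _ ha] at p1
      rw [K.h_mem _ hb] at p3
      omega

theorem Hang.sib (K : Hang H C) {g : ℕ → V} {l : ℕ} (hg : Pth H g l) (hl : 1 ≤ l)
    (h0 : g 0 ∉ C) (h1 : g l ∉ C) (hp : K.par (g 0) = K.par (g l)) : l = 2 := by
  obtain ⟨a, b, hab, hbl, k1, k2, k3⟩ := K.shape hg
  have hh : K.h (g 0) = K.h (g l) := by rw [K.h_not _ h0, K.h_not _ h1, hp]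
  have hdown : b = 0 → K.h (g l) = K.h (g 0) + l := by
    intro hb
    have : ∀ i ≤ l, K.h (g i) = K.h (g 0) + i := by
      intro i hi
      induction i with
      | zero => simp
      | succ i ih =>
        have e1 := ih (by omega)
        obtain ⟨n1, n2⟩ := k3 i (by omega) (by omega)
        have e3 := K.h_not _ n1
        rw [n2] at e3; omega
    exact this l le_rfl
  have hup : a = l → K.h (g 0) = K.h (g l) + l := by
    intro ha
    have : ∀ i ≤ l, K.h (g 0) = K.h (g i) + i := by
      intro i hi
      induction i with
      | zero => simp
      | succ i ih =>
        have e1 := ih (by omega)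
        obtain ⟨n1, n2⟩ := k1 i (by omega)
        have e3 := K.h_not _ n1
        rw [n2] at e3; omega
    exact this l le_rfl
  have ha0 : 0 < a := by
    by_contra ha
    have hb : b ≠ 0 := fun hb => by have := hdown hb; omega
    exact h0 (k2 0 (by omega) (by omega)).1
  have hbl' : b < l := by
    by_contra hb
    have ha : a ≠ l := fun ha => by have := hup ha; omega
    have := (k2 (l - 1) (by omega) (by omega)).2
    rw [show l - 1 + 1 = l by omega] at this
    exact h1 this
  have e1 := (k1 0 ha0).2
  have e2 := (k3 (l - 1) (by omega) (by omega)).2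
  rw [show l - 1 + 1 = l by omega] at e2
  have := hg.2 _ (by omega) _ (by omega) (e1.symm.trans (hp.trans e2))
  omega

end Paths


section Count
variable {V : Type*} [Fintype V] [DecidableEq V]

theorem split_fibers {W : Type*} [DecidableEq W] (D : Finset V) (f : V → W) (M : ℕ)
    (hf : ∀ w, (D.filter (fun v => f v = w)).card ≤ M) (S : Finset W)
    (hS : M ≤ (D.filter (fun v => f v ∈ S)).card) :
    ∃ S' : Finset W, M ≤ (D.filter (fun v => f v ∈ S')).card ∧
      (D.filter (fun v => f v ∈ S')).card ≤ 2 * M := by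
  induction S using Finset.induction_on with
  | empty => exact ⟨∅, hS, by simp⟩
  | insert w S hw ih =>
    by_cases h : M ≤ (D.filter (fun v => f v ∈ S)).card
    · exact ih h
    · refine ⟨insert w S, hS, ?_⟩
      have : (D.filter (fun v => f v ∈ insert w S)).card ≤
          (D.filter (fun v => f v = w)).card + (D.filter (fun v => f v ∈ S)).card := by
        refine le_trans (Finset.card_le_card ?_) (Finset.card_union_le _ _)
        intro v hv
        simp only [Finset.mem_filter, Finset.mem_insert, Finset.mem_union] at hv ⊢
        tauto
      have := hf w
      omega

theorem Hang.count {G H : SimpleGraph V} {C : Finset V} (K : Hang H (C : Set V)) {m t : ℕ}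
    (hm : 5 ≤ m) (ht : 1 ≤ t) (hh : ∀ v, K.h v < m)
    (hsat : ∀ x y, G.Adj x y → ¬ H.Adj x y → ∃ g, g 0 = x ∧ g (m - 1) = y ∧ Pth H g (m - 1))
    (P1 : Prop1 G t) (P2 : Prop2 G t) :
    Fintype.card V ≤ C.card * t + 3 * (m * t ^ m) := by
  classical
  have htop : ∀ k v, K.h v = k → K.top v ∈ C := by
    intro k
    induction k with
    | zero =>
      intro v hv
      have : v ∈ (C : Set V) := by
        by_contra hc
        have := K.h_not v hc; omega
      rw [K.top_mem v this]; exact this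
    | succ k ih =>
      intro v hv
      have : v ∉ (C : Set V) := fun hc => by have := K.h_mem v hc; omega
      rw [K.top_not v this]
      exact ih _ (by have := K.h_not v this; omega)
  -- children are few
  have hch : ∀ w, (Finset.univ.filter (fun v => v ∉ (C : Set V) ∧ K.par v = w)).card ≤ t := by
    intro w
    by_contra hcon
    push Not at hcon
    obtain ⟨A, hA, hAc⟩ := Finset.exists_subset_card_eq hcon.le
    have := P1 A hAc ∅ (by
      intro x hx y hy hxy
      exfalso
      have hx := (Finset.mem_filter.1 (hA hx)).2
      have hy := (Finset.mem_filter.1 (hA hy)).2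
      have e1 := K.h_not x hx.1
      have e2 := K.h_not y hy.1
      rw [hx.2] at e1
      rw [hy.2] at e2
      by_cases hadj : H.Adj x y
      · rcases K.adj x y hadj with h | h | h
        · exact hx.1 h.1
        · rw [← h.2, hx.2] at e2; omega
        · rw [← h.2, hy.2] at e1; omega
      · obtain ⟨g, g0, g1, hg⟩ := hsat x y hxy hadj
        have := K.sib hg (by omega) (by rw [g0]; exact hx.1) (by rw [g1]; exact hy.1)
          (by rw [g0, g1, hx.2, hy.2])
        omega)
    simp at this
  have hlev : ∀ w j, (Finset.univ.filter (fun v => K.top v = w ∧ K.h v = j)).card ≤ t ^ j := by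
    intro w j
    induction j with
    | zero =>
      rw [pow_zero, Finset.card_le_one]
      intro x hx y hy
      simp only [Finset.mem_filter, Finset.mem_univ, true_and] at hx hy
      have hxc : x ∈ (C : Set V) := by
        by_contra hc; have := K.h_not x hc; omega
      have hyc : y ∈ (C : Set V) := by
        by_contra hc; have := K.h_not y hc; omega
      rw [← K.top_mem x hxc, ← K.top_mem y hyc, hx.1, hy.1]
    | succ j ih =>
      have := Finset.card_le_mul_card_image_of_maps_to
        (s := Finset.univ.filter (fun v => K.top v = w ∧ K.h v = j + 1))
        (t := Finset.univ.filter (fun v => K.top v = w ∧ K.h v = j)) (f := K.par) ?_ t ?_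
      · calc _ ≤ _ := this
          _ ≤ t * t ^ j := Nat.mul_le_mul_left _ ih
          _ = _ := by ring
      · intro v hv
        simp only [Finset.mem_filter, Finset.mem_univ, true_and] at hv ⊢
        have : v ∉ (C : Set V) := fun hc => by have := K.h_mem v hc; omega
        rw [← K.top_not v this]
        exact ⟨hv.1, by have := K.h_not v this; omega⟩
      · intro b hb
        refine le_trans (Finset.card_le_card ?_) (hch b)
        intro v hv
        simp only [Finset.mem_filter, Finset.mem_univ, true_and] at hv ⊢
        exact ⟨fun hc => by have := K.h_mem v hc; omega, hv.2⟩
  set M := m * t ^ m with hM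
  have hTw : ∀ w, (Finset.univ.filter (fun v => K.top v = w)).card ≤ M := by
    intro w
    have := Finset.card_le_mul_card_image_of_maps_to
        (s := Finset.univ.filter (fun v => K.top v = w))
        (t := Finset.range m) (f := K.h) (fun v _ => Finset.mem_range.2 (hh v)) (t ^ m) ?_
    · rw [Finset.card_range] at this
      rw [hM]; linarith
    · intro j hj
      rw [Finset.filter_filter]
      exact (hlev w j).trans (Nat.pow_le_pow_right ht (Finset.mem_range.1 hj).le)
  have htM : t ≤ M := by
    calc t = 1 * t ^ 1 := by ring
      _ ≤ m * t ^ m := Nat.mul_le_mul (by omega) (Nat.pow_le_pow_right ht (by omega))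
  set D := Finset.univ.filter (fun v => m - 1 ≤ 2 * K.h v) with hD
  have hD1 : ∀ x ∈ D, ∀ y ∈ D, K.top x ≠ K.top y → ¬ G.Adj x y := by
    intro x hx y hy hxy hadj
    simp only [hD, Finset.mem_filter, Finset.mem_univ, true_and] at hx hy
    by_cases hH : H.Adj x y
    · rcases K.adj x y hH with h | h | h
      · have := K.h_mem x h.1; omega
      · exact hxy (by rw [K.top_not x h.1, h.2])
      · exact hxy (by rw [K.top_not y h.1, h.2])
    · obtain ⟨g, rfl, rfl, hg⟩ := hsat x y hadj hH
      rcases K.shape2 hg with h | h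
      · exact hxy h.1
      · omega
  have hDc : D.card < 3 * M := by
    by_contra hcon
    push Not at hcon
    obtain ⟨S, hS1, hS2⟩ := split_fibers D K.top M (fun w => (Finset.card_le_card (by
      intro v hv; simp only [Finset.mem_filter, Finset.mem_univ, true_and] at hv ⊢
      exact hv.2)).trans (hTw w)) Finset.univ (by
        simp only [Finset.mem_univ, Finset.filter_true]; omega)
    have hadd := Finset.card_filter_add_card_filter_not (s := D) (fun v => K.top v ∈ S)
    obtain ⟨A, hA, hAc⟩ := Finset.exists_subset_card_eq (htM.trans hS1)
    obtain ⟨B, hB, hBc⟩ := Finset.exists_subset_card_eq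
      (show t ≤ (D.filter (fun v => ¬ K.top v ∈ S)).card by omega)
    obtain ⟨a, ha, b, hb, hab⟩ := P2 A B hAc hBc (by
      rw [Finset.disjoint_left]
      intro v h1 h2
      exact (Finset.mem_filter.1 (hB h2)).2 (Finset.mem_filter.1 (hA h1)).2)
    have ha := Finset.mem_filter.1 (hA ha)
    have hb := Finset.mem_filter.1 (hB hb)
    exact hD1 a ha.1 b hb.1 (fun h => hb.2 (h ▸ ha.2)) hab
  have hnD : (Finset.univ.filter (fun v => ¬ m - 1 ≤ 2 * K.h v)).card ≤ t * C.card := by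
    refine Finset.card_le_mul_card_image_of_maps_to (f := K.top) (fun v _ => htop _ v rfl) t ?_
    intro w hw
    by_contra hcon
    push Not at hcon
    obtain ⟨A, hA, hAc⟩ := Finset.exists_subset_card_eq hcon.le
    have := P1 A hAc (A.image (fun v => s(v, K.par v))) (by
      intro x hx y hy hxy
      have hx' := hA hx
      have hy' := hA hy
      simp only [Finset.mem_filter, Finset.mem_univ, true_and] at hx' hy'
      by_cases hH : H.Adj x y
      · rcases K.adj x y hH with h | h | h
        · exfalso
          refine hH.ne ?_
          rw [← K.top_mem x h.1, ← K.top_mem y h.2, hx'.2, hy'.2]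
        · exact Finset.mem_image.2 ⟨x, hx, by rw [h.2]⟩
        · exact Finset.mem_image.2 ⟨y, hy, by rw [h.2, Sym2.eq_swap]⟩
      · exfalso
        obtain ⟨g, rfl, rfl, hg⟩ := hsat x y hxy hH
        rcases K.shape2 hg with h | h
        · omega
        · exact h.1 (by rw [hx'.2, hy'.2]))
    have h2 := Finset.card_image_le (s := A) (f := fun v => s(v, K.par v))
    omega
  have hadd := Finset.card_filter_add_card_filter_not (s := (Finset.univ : Finset V))
    (fun v => m - 1 ≤ 2 * K.h v)
  rw [Finset.card_univ] at hadd
  rw [← hadd, mul_comm C.card]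
  rw [add_comm]
  exact Nat.add_le_add (by convert hnD) (by convert hDc.le)

theorem walk_of_pth {V : Type*} {H : SimpleGraph V} (g : ℕ → V) (l : ℕ)
    (h : ∀ i < l, H.Adj (g i) (g (i + 1))) : ∃ w : H.Walk (g 0) (g l), w.length = l := by
  induction l with
  | zero => exact ⟨SimpleGraph.Walk.nil, rfl⟩
  | succ l ih =>
    obtain ⟨w, hw⟩ := ih (fun i hi => h i (by omega))
    exact ⟨w.concat (h l (by omega)), by simp [hw]⟩

theorem lower_struct {H : SimpleGraph V} {m : ℕ} (hm : 2 ≤ m) (R : Finset V)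
    (hR : ∀ v, ∃ r ∈ R, ∃ w : H.Walk v r, w.length ≤ m - 1) :
    ∃ (C X : ℕ) (CC : Finset V) (K : Hang H (CC : Set V)), CC.card = C ∧ (∀ v, K.h v < m) ∧
      C ≤ R.card + 2 * X * (m - 1) ∧ H.edgeSet.ncard + R.card = Fintype.card V + X := by
  classical
  have hR' : ∀ v, ∃ d, ∃ r ∈ R, ∃ w : H.Walk v r, w.length = d := fun v => by
    obtain ⟨r, hr, w, _⟩ := hR v; exact ⟨_, r, hr, w, rfl⟩
  set dep : V → ℕ := fun v => Nat.find (hR' v) with hdep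
  have dep_le : ∀ v, dep v ≤ m - 1 := fun v => by
    obtain ⟨r, hr, w, h⟩ := hR v
    exact (Nat.find_min' (hR' v) ⟨r, hr, w, rfl⟩).trans h
  have hpar : ∀ v, ∃ y, (v ∈ R → y = v) ∧ (v ∉ R → H.Adj v y ∧ dep v = dep y + 1) := by
    intro v
    by_cases hv : v ∈ R
    · exact ⟨v, fun _ => rfl, fun h => absurd hv h⟩
    · obtain ⟨r, hr, w, hw⟩ := Nat.find_spec (hR' v)
      cases w with
      | nil => exact absurd hr hv
      | @cons _ y _ hadj w' =>
        refine ⟨y, fun h => absurd h hv, fun _ => ⟨hadj, ?_⟩⟩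
        have h1 : dep y ≤ w'.length := Nat.find_min' (hR' y) ⟨r, hr, w', rfl⟩
        rw [SimpleGraph.Walk.length_cons] at hw
        have hw : w'.length + 1 = dep v := hw
        obtain ⟨r2, hr2, w2, hw2⟩ := Nat.find_spec (hR' y)
        have h2 : dep v ≤ w2.length + 1 :=
          Nat.find_min' (hR' v) ⟨r2, hr2, SimpleGraph.Walk.cons hadj w2, by simp⟩
        have hw2 : w2.length = dep y := hw2
        omega
  choose par hpar1 hpar2 using hpar
  have hT : Set.InjOn (fun v => s(v, par v)) ((Rᶜ : Finset V) : Set V) := by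
    intro x hx y hy hxy
    simp only [Finset.coe_compl, Set.mem_compl_iff, Finset.mem_coe] at hx hy
    rcases Sym2.eq_iff.1 hxy with ⟨h, _⟩ | ⟨h1, h2⟩
    · exact h
    · have e1 := (hpar2 x hx).2
      have e2 := (hpar2 y hy).2
      rw [h2] at e1; rw [← h1] at e2; omega
  set T := (Rᶜ).image (fun v => s(v, par v)) with hTdef
  have hTc : T.card = Fintype.card V - R.card := by
    rw [hTdef, Finset.card_image_of_injOn hT, Finset.card_compl]
  have hTsub : T ⊆ H.edgeFinset := by
    intro e he
    obtain ⟨v, hv, rfl⟩ := Finset.mem_image.1 he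
    rw [SimpleGraph.mem_edgeFinset, SimpleGraph.mem_edgeSet]
    exact (hpar2 v (by simpa using hv)).1
  set X := H.edgeFinset \ T with hX
  have hXc : X.card = H.edgeFinset.card - T.card := Finset.card_sdiff_of_subset hTsub
  have hTle := Finset.card_le_card hTsub
  have hRle : R.card ≤ Fintype.card V := Finset.card_le_univ R
  set S := X.biUnion (fun e => e.toFinset) with hS
  have hSc : S.card ≤ X.card * 2 := Finset.card_biUnion_le_card_mul _ _ _ (fun e _ => by
    induction e with | _ x y => ?_
    have : (s(x, y) : Sym2 V).toFinset ⊆ {x, y} := by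
      intro z; simp
    exact (Finset.card_le_card this).trans Finset.card_le_two)
  set CC := R ∪ (S ×ˢ Finset.range (m - 1)).image (fun x => par^[x.2] x.1) with hCC
  have hCCc : CC.card ≤ R.card + 2 * X.card * (m - 1) := by
    refine (Finset.card_union_le _ _).trans (Nat.add_le_add_left ?_ _)
    refine Finset.card_image_le.trans ?_
    rw [Finset.card_product, Finset.card_range]
    refine Nat.mul_le_mul_right _ (by omega)
  have hiter : ∀ i v, par^[i] v ∈ R ∨ dep v = dep (par^[i] v) + i := by
    intro i v
    induction i with
    | zero => right; simp
    | succ i ih =>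
      rw [Function.iterate_succ_apply']
      by_cases hi : par^[i] v ∈ R
      · left; rw [hpar1 _ hi]; exact hi
      · right
        have := (hpar2 _ hi).2
        rcases ih with h | h
        · exact absurd h hi
        · omega
  have hdep0 : ∀ v, dep v = 0 → v ∈ R := by
    intro v hv
    by_contra h
    have := (hpar2 v h).2; omega
  have hfin : ∀ v, par^[m - 1] v ∈ R := by
    intro v
    rcases hiter (m - 1) v with h | h
    · exact h
    · exact hdep0 _ (by have := dep_le v; omega)
  have hclosed : ∀ v ∈ CC, par v ∈ CC := by
    intro v hv
    rcases Finset.mem_union.1 hv with h | h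
    · rw [hpar1 v h]; exact hv
    · obtain ⟨⟨s, i⟩, hsi, rfl⟩ := Finset.mem_image.1 h
      simp only [Finset.mem_product, Finset.mem_range] at hsi
      simp only
      rw [← Function.iterate_succ_apply' par i s]
      by_cases hi : i + 1 < m - 1
      · refine Finset.mem_union_right _ (Finset.mem_image.2 ⟨(s, i + 1), ?_, rfl⟩)
        simp [hsi.1, hi]
      · have : i.succ = m - 1 := by omega
        rw [this]
        exact Finset.mem_union_left _ (hfin s)
  have hex : ∀ v, ∃ i, par^[i] v ∈ CC := fun v => ⟨m - 1, Finset.mem_union_left _ (hfin v)⟩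
  have hfind : ∀ v, v ∉ CC → Nat.find (hex v) = Nat.find (hex (par v)) + 1 := by
    intro v hv
    refine (Nat.find_eq_iff _).2 ⟨?_, ?_⟩
    · rw [Function.iterate_succ_apply]; exact Nat.find_spec (hex (par v))
    · intro n hn
      cases n with
      | zero => exact hv
      | succ n =>
        rw [Function.iterate_succ_apply]
        exact Nat.find_min (hex (par v)) (by omega)
  refine ⟨CC.card, X.card, CC, ⟨par, fun v => Nat.find (hex v),
    fun v => par^[Nat.find (hex v)] v, ?_, ?_, ?_, ?_, ?_⟩, rfl, ?_, hCCc, ?_⟩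
  · intro v hv
    exact (Nat.find_eq_zero (hex v)).2 hv
  · intro v hv
    exact hfind v hv
  · intro v hv
    have : Nat.find (hex v) = 0 := (Nat.find_eq_zero (hex v)).2 hv
    simp only [this, Function.iterate_zero, id]
  · intro v hv
    simp only [hfind v hv]
    rw [Function.iterate_succ_apply]
  · intro x y hxy
    have hS' : ∀ v ∈ S, v ∈ CC := fun v hv => Finset.mem_union_right _
      (Finset.mem_image.2 ⟨(v, 0), by simp [hv]; omega, rfl⟩)
    by_cases hmem : s(x, y) ∈ T
    · obtain ⟨v, hv, hvxy⟩ := Finset.mem_image.1 hmem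
      rcases Sym2.eq_iff.1 hvxy with ⟨rfl, rfl⟩ | ⟨rfl, rfl⟩
      · by_cases hc : v ∈ CC
        · exact Or.inl ⟨hc, hclosed v hc⟩
        · exact Or.inr (Or.inl ⟨hc, rfl⟩)
      · by_cases hc : v ∈ CC
        · exact Or.inl ⟨hclosed v hc, hc⟩
        · exact Or.inr (Or.inr ⟨hc, rfl⟩)
    · left
      have hX' : s(x, y) ∈ X := Finset.mem_sdiff.2 ⟨by
        rw [SimpleGraph.mem_edgeFinset]; exact hxy, hmem⟩
      exact ⟨hS' x (Finset.mem_biUnion.2 ⟨_, hX', by simp⟩),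
        hS' y (Finset.mem_biUnion.2 ⟨_, hX', by simp⟩)⟩
  · intro v
    have : Nat.find (hex v) ≤ m - 1 := Nat.find_min' (hex v) (Finset.mem_union_left _ (hfin v))
    show Nat.find (hex v) < m
    omega
  · rw [← SimpleGraph.coe_edgeFinset, Set.ncard_coe_finset]
    omega

theorem lower_det {G H : SimpleGraph V} {m t : ℕ} (hm : 5 ≤ m) (ht : 1 ≤ t)
    (htn : t ≤ Fintype.card V) (P1 : Prop1 G t) (P2 : Prop2 G t)
    (hs : IsSaturatedIn G H (cycGraph m)) :
    (Fintype.card V : ℝ) ≤ (2 * t + 2 * ((m : ℝ) - 1) *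
      ((H.edgeSet.ncard : ℝ) - Fintype.card V + 2 * t)) * t + 3 * (m * t ^ m) := by
  classical
  have hsat : ∀ x y, G.Adj x y → ¬ H.Adj x y →
      ∃ g, g 0 = x ∧ g (m - 1) = y ∧ Pth H g (m - 1) := fun x y h1 h2 =>
    path_of_sat (by omega) hs.2.1 (hs.2.2 x y h1 h2)
  obtain ⟨R0, -, hR0⟩ := Finset.exists_subset_card_eq
    (show t ≤ (Finset.univ : Finset V).card by rwa [Finset.card_univ])
  set N := Finset.univ.filter (fun v => v ∉ R0 ∧ ∀ r ∈ R0, ¬ G.Adj r v) with hN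
  have hNc : N.card ≤ t := by
    by_contra hcon
    push Not at hcon
    obtain ⟨B, hB, hBc⟩ := Finset.exists_subset_card_eq hcon.le
    obtain ⟨a, ha, b, hb, hab⟩ := P2 R0 B hR0 hBc (by
      rw [Finset.disjoint_left]
      intro v h1 h2
      exact (Finset.mem_filter.1 (hB h2)).2.1 h1)
    exact (Finset.mem_filter.1 (hB hb)).2.2 a ha hab
  have hRc : (R0 ∪ N).card ≤ 2 * t := (Finset.card_union_le _ _).trans (by omega)
  obtain ⟨C, X, CC, K, hC, hh, h1, h2⟩ := lower_struct (H := H) (m := m) (by omega) (R0 ∪ N) (by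
    intro v
    by_cases hv : v ∈ R0 ∪ N
    · exact ⟨v, hv, SimpleGraph.Walk.nil, by simp⟩
    · have : ∃ r ∈ R0, G.Adj r v := by
        by_contra hcon; push Not at hcon
        refine hv (Finset.mem_union_right _ ?_)
        simp only [hN, Finset.mem_filter, Finset.mem_univ, true_and]
        exact ⟨fun h => hv (Finset.mem_union_left _ h), hcon⟩
      obtain ⟨r, hr, hadj⟩ := this
      refine ⟨r, Finset.mem_union_left _ hr, ?_⟩
      by_cases hH : H.Adj v r
      · exact ⟨SimpleGraph.Walk.cons hH SimpleGraph.Walk.nil, by simp; omega⟩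
      · obtain ⟨g, rfl, rfl, hg⟩ := hsat v r hadj.symm hH
        obtain ⟨w, hw⟩ := walk_of_pth g (m - 1) hg.1
        exact ⟨w, hw.le⟩)
  have h3 := K.count hm ht hh hsat P1 P2
  rw [hC] at h3
  set n := Fintype.card V
  set e := H.edgeSet.ncard
  set R := (R0 ∪ N).card
  have h1' : (C : ℝ) ≤ R + 2 * X * ((m : ℝ) - 1) := by
    have : ((m - 1 : ℕ) : ℝ) = (m : ℝ) - 1 := by push_cast [Nat.cast_sub (show 1 ≤ m by omega)]; ring
    rw [← this]; exact_mod_cast h1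
  have h2' : (e : ℝ) + R = n + X := by exact_mod_cast h2
  have h3' : (n : ℝ) ≤ C * t + 3 * (m * t ^ m) := by exact_mod_cast h3
  have hRc' : (R : ℝ) ≤ 2 * t := by exact_mod_cast hRc
  have hm' : (5 : ℝ) ≤ m := by exact_mod_cast hm
  have : (C : ℝ) ≤ 2 * t + 2 * ((m : ℝ) - 1) * ((e : ℝ) - n + 2 * t) := by
    have hX : (X : ℝ) ≤ e - n + 2 * t := by linarith
    have := mul_le_mul_of_nonneg_left hX (show 0 ≤ 2 * ((m : ℝ) - 1) by linarith)
    linarith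
  have := mul_le_mul_of_nonneg_right this (show (0 : ℝ) ≤ t by positivity)
  linarith

end Count


section Skel
variable {V : Type*} [DecidableEq V]

/-- there is a path from `x` to `y` with vertex set `s` -/
inductive PP (H : SimpleGraph V) : V → V → Finset V → Prop
  | nil (x : V) : PP H x x {x}
  | cons {w x y : V} {s : Finset V} (h : H.Adj w x) (hw : w ∉ s) (hp : PP H x y s) :
      PP H w y (insert w s)

theorem PP.snoc {H : SimpleGraph V} {x y z : V} {s : Finset V} (hp : PP H x y s)
    (h : H.Adj y z) (hz : z ∉ s) : PP H x z (insert z s) := by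
  induction hp with
  | nil x =>
    rw [Finset.pair_comm]
    exact PP.cons h (by simpa using h.ne) (PP.nil z)
  | @cons w x y s h1 hw hp ih =>
    rw [Finset.insert_comm]
    simp only [Finset.mem_insert, not_or] at hz
    refine PP.cons h1 ?_ (ih h hz.2)
    simp only [Finset.mem_insert, not_or]
    exact ⟨fun h => hz.1 h.symm, hw⟩

theorem PP.pth {H : SimpleGraph V} {x y : V} {s : Finset V} (hp : PP H x y s) :
    0 < s.card ∧ ∃ g, g 0 = x ∧ g (s.card - 1) = y ∧ Pth H g (s.card - 1) ∧
      ∀ i ≤ s.card - 1, g i ∈ s := by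
  induction hp with
  | nil x =>
    refine ⟨by simp, fun _ => x, rfl, rfl, ⟨?_, ?_⟩, ?_⟩
    · intro i hi; simp at hi
    · intro i hi j hj; simp at hi hj; omega
    · simp
  | @cons w x y s h1 hw hp ih =>
    obtain ⟨hpos, g, g0, g1, hg, hgs⟩ := ih
    rw [Finset.card_insert_of_notMem hw]
    have hstep : ∀ i, 0 < i → i ≤ s.card + 1 - 1 → g (i - 1) ∈ s := fun i h1 h2 =>
      hgs _ (by omega)
    refine ⟨by omega, fun i => if i = 0 then w else g (i - 1), by simp, ?_, ⟨?_, ?_⟩, ?_⟩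
    · simp only; rw [if_neg (by omega)]; exact g1
    · intro i hi
      by_cases h0 : i = 0
      · subst h0; simpa [g0] using h1
      · simp only [h0, if_false, Nat.add_eq_zero_iff, one_ne_zero, and_false]
        have := hg.1 (i - 1) (by omega)
        rw [show i - 1 + 1 = i by omega] at this
        simpa using this
    · intro i hi j hj hij
      by_cases h0 : i = 0 <;> by_cases h0' : j = 0 <;> simp only [h0, h0', if_true, if_false] at hij
      · omega
      · exact absurd (hij ▸ hstep j (by omega) hj) hw
      · exact absurd (hij ▸ hstep i (by omega) hi) hw
      · have := hg.2 _ (by omega) _ (by omega) hij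
        omega
    · intro i hi
      by_cases h0 : i = 0
      · simp [h0]
      · simp only [h0, if_false]
        exact Finset.mem_insert_of_mem (hstep i (by omega) hi)

theorem PP.clique {H : SimpleGraph V} : ∀ (k : ℕ) (s : Finset V), s.card = k →
    (∀ a ∈ s, ∀ b ∈ s, a ≠ b → H.Adj a b) → ∀ x ∈ s, ∀ y ∈ s, x ≠ y → PP H x y s := by
  intro k
  induction k with
  | zero => intro s hs _ x hx; rw [Finset.card_eq_zero] at hs; simp [hs] at hx
  | succ k ih =>
    intro s hs hc x hx y hy hxy
    have hye : y ∈ s.erase x := Finset.mem_erase.2 ⟨hxy.symm, hy⟩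
    rw [← Finset.insert_erase hx]
    by_cases hz : ∃ z ∈ s.erase x, z ≠ y
    · obtain ⟨z, hz, hzy⟩ := hz
      refine PP.cons (hc x hx z (Finset.mem_of_mem_erase hz) (Finset.ne_of_mem_erase hz).symm)
        (by simp) (ih _ (by rw [Finset.card_erase_of_mem hx, hs]; rfl) ?_ z hz y hye hzy)
      intro a ha b hb
      exact hc a (Finset.mem_of_mem_erase ha) b (Finset.mem_of_mem_erase hb)
    · push Not at hz
      have : s.erase x = {y} := by
        ext a; simp only [Finset.mem_singleton]
        exact ⟨hz a, fun h => h ▸ hye⟩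
      rw [this]
      exact PP.cons (hc x hx y hy hxy) (by simpa using hxy) (PP.nil y)

theorem PP.copy {H : SimpleGraph V} {x y : V} {s : Finset V} {m : ℕ} (hm : 3 ≤ m)
    (hp : PP H x y s) (hs : s.card = m) (hxy : x ≠ y) :
    ContainsCopy (cycGraph m) (H ⊔ SimpleGraph.fromEdgeSet {s(x, y)}) := by
  obtain ⟨_, g, g0, g1, hg, _⟩ := hp.pth
  rw [hs] at g1 hg
  refine copy_of_cycle hm g ⟨fun i hi => Or.inl (hg.1 i hi), hg.2⟩ ?_
  rw [g0, g1]
  right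
  rw [SimpleGraph.fromEdgeSet_adj]
  exact ⟨by simp [Sym2.eq_swap], hxy.symm⟩

theorem ContainsCopy.mono {α β : Type*} {F : SimpleGraph α} {H H' : SimpleGraph β} (h : H ≤ H')
    (hc : ContainsCopy F H) : ContainsCopy F H' := by
  obtain ⟨f, hf, hh⟩ := hc
  exact ⟨f, hf, fun a b hab => h (hh hab)⟩

theorem extend_sat [Fintype V] {α : Type*} {F : SimpleGraph α} {G H0 : SimpleGraph V} (hle : H0 ≤ G)
    (hfree : ¬ ContainsCopy F H0) (B : Finset (Sym2 V))
    (hB : ∀ x y, G.Adj x y → ¬ H0.Adj x y → s(x, y) ∈ B ∨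
      ContainsCopy F (H0 ⊔ SimpleGraph.fromEdgeSet {s(x, y)})) :
    ∃ H, IsSaturatedIn G H F ∧ H.edgeSet.ncard ≤ H0.edgeSet.ncard + B.card := by
  classical
  obtain ⟨H, h1, hmax⟩ := Set.Finite.exists_maximal (s := {H : SimpleGraph V | H0 ≤ H ∧ H ≤ G ∧
    ¬ ContainsCopy F H}) (Set.toFinite _) ⟨H0, le_rfl, hle, hfree⟩
  obtain ⟨hH0, hHG, hHf⟩ := h1
  refine ⟨H, ⟨hHG, hHf, ?_⟩, ?_⟩
  · intro v w hvw hnot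
    by_contra hcon
    have hle' : H ⊔ SimpleGraph.fromEdgeSet {s(v, w)} ≤ G := by
      refine sup_le hHG ?_
      intro a b hab
      rw [SimpleGraph.fromEdgeSet_adj] at hab
      rcases Sym2.eq_iff.1 hab.1 with ⟨rfl, rfl⟩ | ⟨rfl, rfl⟩
      · exact hvw
      · exact hvw.symm
    have := hmax ⟨hH0.trans le_sup_left, hle', hcon⟩ le_sup_left
    refine hnot (this (Or.inr ?_))
    rw [SimpleGraph.fromEdgeSet_adj]
    exact ⟨rfl, hvw.ne⟩
  · have hsub : H.edgeSet ⊆ H0.edgeSet ∪ (B : Set (Sym2 V)) := by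
      intro e he
      induction e with | _ x y => ?_
      rw [SimpleGraph.mem_edgeSet] at he
      by_cases h0 : H0.Adj x y
      · left; exact h0
      · right
        rcases hB x y (hHG he) h0 with h | h
        · exact h
        · exfalso
          refine hHf (h.mono (sup_le hH0 ?_))
          intro a b hab
          rw [SimpleGraph.fromEdgeSet_adj] at hab
          rcases Sym2.eq_iff.1 hab.1 with ⟨rfl, rfl⟩ | ⟨rfl, rfl⟩
          · exact he
          · exact he.symm
    calc _ ≤ (H0.edgeSet ∪ (B : Set (Sym2 V))).ncard := Set.ncard_le_ncard hsub (Set.toFinite _)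
      _ ≤ _ := by
        refine (Set.ncard_union_le _ _).trans ?_
        rw [Set.ncard_coe_finset]

/-- the skeleton graph -/
def skel (Q W : Finset V) (c c' : V) (φ : V → V) : SimpleGraph V :=
  SimpleGraph.fromRel (fun x y => (x ∈ Q ∧ y ∈ Q) ∨ (x ∈ W ∧ (y = c ∨ y = c')) ∨
    (x ∉ Q ∧ x ∉ W ∧ y = φ x))

theorem two_pt {V : Type*} {c c' x1 x2 y1 y2 : V} (a1 : x1 = c ∨ x1 = c') (a2 : x2 = c ∨ x2 = c')
    (b1 : y1 = c ∨ y1 = c') (b2 : y2 = c ∨ y2 = c') (n1 : x1 ≠ y1) (n2 : x2 ≠ y2) (n3 : x2 ≠ x1)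
    (n4 : y2 ≠ y1) : x1 = y2 ∧ x2 = y1 := by
  grind

set_option maxHeartbeats 1000000 in
theorem upper_skel [Fintype V] {G : SimpleGraph V} {m : ℕ} (hm : 5 ≤ m) (Q W : Finset V) (c c' : V)
    (φ : V → V) (hQ : Q.card = m - 2) (hclq : ∀ a ∈ Q, ∀ b ∈ Q, a ≠ b → G.Adj a b)
    (hc : c ∈ Q) (hc' : c' ∈ Q) (hcc : c ≠ c') (hdisj : ∀ v ∈ Q, v ∉ W) (hW2 : 2 ≤ W.card)
    (hW : ∀ w ∈ W, G.Adj w c ∧ G.Adj w c')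
    (hφ : ∀ x, x ∉ Q → x ∉ W → φ x ∈ W ∧ G.Adj x (φ x)) (B : Finset (Sym2 V))
    (hB : ∀ x y, x ∉ Q → x ∉ W → y ∉ Q → y ∉ W → φ x = φ y → G.Adj x y → s(x, y) ∈ B) :
    ∃ H, IsSaturatedIn G H (cycGraph m) ∧
      H.edgeSet.ncard ≤ Fintype.card V + W.card + m ^ 2 + B.card := by
  classical
  set H0 := skel Q W c c' φ with hH0
  have hadj : ∀ x y, H0.Adj x y ↔ x ≠ y ∧ (((x ∈ Q ∧ y ∈ Q) ∨ (x ∈ W ∧ (y = c ∨ y = c')) ∨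
    (x ∉ Q ∧ x ∉ W ∧ y = φ x)) ∨ ((y ∈ Q ∧ x ∈ Q) ∨ (y ∈ W ∧ (x = c ∨ x = c')) ∨
    (y ∉ Q ∧ y ∉ W ∧ x = φ y))) := by
    intro x y; rw [hH0, skel, SimpleGraph.fromRel_adj]
  have hcW := hdisj c hc
  have hcW' := hdisj c' hc'
  have hWQ : ∀ v ∈ W, v ∉ Q := fun v hv hq => hdisj v hq hv
  have aQ : ∀ a ∈ Q, ∀ b ∈ Q, a ≠ b → H0.Adj a b := fun a ha b hb hab =>
    (hadj a b).2 ⟨hab, Or.inl (Or.inl ⟨ha, hb⟩)⟩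
  have aW : ∀ w ∈ W, H0.Adj w c := fun w hw =>
    (hadj w c).2 ⟨fun h => hcW (h ▸ hw), Or.inl (Or.inr (Or.inl ⟨hw, Or.inl rfl⟩))⟩
  have aW' : ∀ w ∈ W, H0.Adj w c' := fun w hw =>
    (hadj w c').2 ⟨fun h => hcW' (h ▸ hw), Or.inl (Or.inr (Or.inl ⟨hw, Or.inr rfl⟩))⟩
  have aL : ∀ x, x ∉ Q → x ∉ W → H0.Adj x (φ x) := fun x h1 h2 =>
    (hadj _ _).2 ⟨fun h => h2 (by rw [h]; exact (hφ x h1 h2).1), Or.inl (Or.inr (Or.inr ⟨h1, h2, rfl⟩))⟩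
  -- neighbours of a leaf and of a W-vertex
  have nL : ∀ x y, x ∉ Q → x ∉ W → H0.Adj x y → y = φ x := by
    intro x y h1 h2 h
    rcases ((hadj x y).1 h).2 with (h | h | h) | (h | h | h)
    · exact absurd h.1 h1
    · exact absurd h.1 h2
    · exact h.2.2
    · exact absurd h.2 h1
    · rcases h.2 with rfl | rfl
      · exact absurd hc h1
      · exact absurd hc' h1
    · exact absurd (h.2.2 ▸ (hφ y h.1 h.2.1).1) h2
  have nW : ∀ x y, x ∈ W → (y ∈ Q ∨ y ∈ W) → H0.Adj x y → y = c ∨ y = c' := by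
    intro x y h1 h2 h
    rcases ((hadj x y).1 h).2 with (h | h | h) | (h | h | h)
    · exact absurd h.1 (hWQ x h1)
    · exact h.2
    · exact absurd h1 h.2.1
    · exact absurd h.2 (hWQ x h1)
    · rcases h.2 with rfl | rfl
      · exact absurd h1 hcW
      · exact absurd h1 hcW'
    · rcases h2 with h2 | h2
      · exact absurd h2 h.1
      · exact absurd h2 h.2.1
  have hle : H0 ≤ G := by
    have : ∀ x y, x ≠ y → ((x ∈ Q ∧ y ∈ Q) ∨ (x ∈ W ∧ (y = c ∨ y = c')) ∨
      (x ∉ Q ∧ x ∉ W ∧ y = φ x)) → G.Adj x y := by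
      rintro x y hne (h | h | h)
      · exact hclq x h.1 y h.2 hne
      · rcases h.2 with rfl | rfl
        · exact (hW x h.1).1
        · exact (hW x h.1).2
      · rw [h.2.2]; exact (hφ x h.1 h.2.1).2
    intro x y h
    obtain ⟨hne, h | h⟩ := (hadj x y).1 h
    · exact this x y hne h
    · exact (this y x hne.symm h).symm
  have hfree : ¬ ContainsCopy (cycGraph m) H0 := by
    rintro ⟨f, hf, hfa⟩
    have : NeZero m := ⟨by omega⟩
    have st : ∀ a : ZMod m, H0.Adj (f a) (f (a + 1)) := fun a => hfa (cyc_adj (by omega) a)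
    have st' : ∀ a : ZMod m, H0.Adj (f a) (f (a - 1)) := fun a => by
      have := (st (a - 1)).symm; rwa [sub_add_cancel] at this
    have c2 : ∀ a b : ZMod m, ∀ k : ℕ, 0 < k → k < m → a + k = b → a ≠ b := by
      rintro a b k hk hkm h rfl
      rw [add_eq_left] at h
      have : (k : ZMod m) = (0 : ℕ) := by rw [h]; simp
      have := cast_zmod_eq hkm (by omega) this
      omega
    have hne : ∀ a : ZMod m, a - 1 ≠ a + 1 := fun a => c2 _ _ 2 (by omega) (by omega) (by push_cast; ring)
    have hin : ∀ a, f a ∈ Q ∨ f a ∈ W := by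
      intro a
      by_contra hh; push Not at hh
      exact hne a (hf ((nL _ _ hh.1 hh.2 (st' a)).trans (nL _ _ hh.1 hh.2 (st a)).symm))
    have hcard : 1 < (Finset.univ.filter (fun a => f a ∈ W)).card := by
      have h1 := Finset.card_filter_add_card_filter_not (s := (Finset.univ : Finset (ZMod m)))
        (fun a => f a ∈ W)
      rw [Finset.card_univ, ZMod.card] at h1
      have h2 : (Finset.univ.filter (fun a => ¬ f a ∈ W)).card ≤ Q.card := by
        refine Finset.card_le_card_of_injOn f ?_ (fun a _ b _ h => hf h)
        intro a ha
        simp only [Finset.coe_filter, Finset.mem_univ, true_and, Set.mem_ofPred_eq] at ha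
        exact (hin a).resolve_right ha
      omega
    obtain ⟨a, ha, b, hb, hab⟩ := Finset.one_lt_card.1 hcard
    simp only [Finset.mem_filter, Finset.mem_univ, true_and] at ha hb
    have key : f (a + 1) = f (b - 1) ∧ f (a - 1) = f (b + 1) := by
      have a1 := nW _ _ ha (hin _) (st a)
      have a2 := nW _ _ ha (hin _) (st' a)
      have b1 := nW _ _ hb (hin _) (st b)
      have b2 := nW _ _ hb (hin _) (st' b)
      have n1 : f (a + 1) ≠ f (b + 1) := fun h => hab (add_right_cancel (hf h))
      have n2 : f (a - 1) ≠ f (b - 1) := fun h => hab (sub_left_injective (hf h))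
      have n3 : f (a - 1) ≠ f (a + 1) := fun h => hne a (hf h)
      have n4 : f (b - 1) ≠ f (b + 1) := fun h => hne b (hf h)
      exact two_pt a1 a2 b1 b2 n1 n2 n3 n4
    have k1 := hf key.1
    have k2 := hf key.2
    refine c2 b b 4 (by omega) (by omega) ?_ rfl
    have : b = a + 2 := by
      rw [eq_sub_iff_add_eq] at k1; rw [← k1]; ring
    rw [sub_eq_iff_eq_add] at k2
    push_cast
    rw [this] at k2 ⊢
    linear_combination -k2
  have hcopy : ∀ x y, G.Adj x y → ¬ H0.Adj x y → s(x, y) ∈ B ∨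
      ContainsCopy (cycGraph m) (H0 ⊔ SimpleGraph.fromEdgeSet {s(x, y)}) := by
    have swap : ∀ x y, (s(y, x) ∈ B ∨
      ContainsCopy (cycGraph m) (H0 ⊔ SimpleGraph.fromEdgeSet {s(y, x)})) → (s(x, y) ∈ B ∨
      ContainsCopy (cycGraph m) (H0 ⊔ SimpleGraph.fromEdgeSet {s(x, y)})) := by
      intro x y h; rwa [Sym2.eq_swap] at h
    have path : ∀ j, 2 ≤ j → j ≤ m - 2 → ∃ S ⊆ Q, S.card = j ∧ PP H0 c c' S := by
      intro j h2 hj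
      obtain ⟨S, hS1, hS2, hS3⟩ := Finset.exists_subsuperset_card_eq (s := {c, c'}) (t := Q) (n := j)
        (by intro z hz; simp at hz; rcases hz with rfl | rfl <;> assumption)
        (by rw [Finset.card_pair hcc]; exact h2) (by omega)
      exact ⟨S, hS2, hS3, PP.clique _ S rfl (fun a ha b hb => aQ a (hS2 ha) b (hS2 hb)) c
        (hS1 (by simp)) c' (hS1 (by simp)) hcc⟩
    -- leaf to leaf
    have t1 : ∀ x y, x ∉ Q → x ∉ W → y ∉ Q → y ∉ W → φ x ≠ φ y → x ≠ y →
        ContainsCopy (cycGraph m) (H0 ⊔ SimpleGraph.fromEdgeSet {s(x, y)}) := by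
      intro x y hx hx' hy hy' hne hxy
      have fx := (hφ x hx hx').1
      have fy := (hφ y hy hy').1
      have hxf : ∀ w ∈ W, x ≠ w := fun w hw h => hx' (h ▸ hw)
      have hyf : ∀ w ∈ W, y ≠ w := fun w hw h => hy' (h ▸ hw)
      have hcf : ∀ w ∈ W, ∀ z ∈ Q, w ≠ z := fun w hw z hz h => hdisj z hz (h ▸ hw)
      by_cases h5 : m = 5
      · have n1 : φ y ∉ ({y} : Finset V) := by simpa using (hyf _ fy).symm
        have n2 : c ∉ insert (φ y) ({y} : Finset V) := by
          simp only [Finset.mem_insert, Finset.mem_singleton, not_or]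
          exact ⟨(hcf _ fy c hc).symm, fun h => hy (h ▸ hc)⟩
        have n3 : φ x ∉ insert c (insert (φ y) ({y} : Finset V)) := by
          simp only [Finset.mem_insert, Finset.mem_singleton, not_or]
          exact ⟨hcf _ fx c hc, hne, (hyf _ fx).symm⟩
        have n4 : x ∉ insert (φ x) (insert c (insert (φ y) ({y} : Finset V))) := by
          simp only [Finset.mem_insert, Finset.mem_singleton, not_or]
          exact ⟨hxf _ fx, fun h => hx (h ▸ hc), hxf _ fy, hxy⟩
        have p1 := PP.cons (aL y hy hy').symm n1 (PP.nil y)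
        have p2 := PP.cons (aW _ fy).symm n2 p1
        have p3 := PP.cons (aW _ fx) n3 p2
        have p4 := PP.cons (aL x hx hx') n4 p3
        refine p4.copy (by omega) ?_ hxy
        rw [Finset.card_insert_of_notMem n4, Finset.card_insert_of_notMem n3,
          Finset.card_insert_of_notMem n2, Finset.card_insert_of_notMem n1, Finset.card_singleton]
        omega
      · obtain ⟨S, hSQ, hSc, p0⟩ := path (m - 4) (by omega) (by omega)
        have n1 : φ x ∉ S := fun h => hWQ _ fx (hSQ h)
        have n2 : x ∉ insert (φ x) S := by
          simp only [Finset.mem_insert, not_or]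
          exact ⟨hxf _ fx, fun h => hx (hSQ h)⟩
        have n3 : φ y ∉ insert x (insert (φ x) S) := by
          simp only [Finset.mem_insert, not_or]
          exact ⟨(hxf _ fy).symm, hne.symm, fun h => hWQ _ fy (hSQ h)⟩
        have n4 : y ∉ insert (φ y) (insert x (insert (φ x) S)) := by
          simp only [Finset.mem_insert, not_or]
          exact ⟨hyf _ fy, hxy.symm, hyf _ fx, fun h => hy (hSQ h)⟩
        have p4 := (((PP.cons (aW _ fx) n1 p0).cons (aL x hx hx') n2).snoc (aW' _ fy).symm n3).snoc
          (aL y hy hy').symm n4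
        refine p4.copy (by omega) ?_ hxy
        rw [Finset.card_insert_of_notMem n4, Finset.card_insert_of_notMem n3,
          Finset.card_insert_of_notMem n2, Finset.card_insert_of_notMem n1]
        omega
    -- leaf to holder
    have t2 : ∀ x y, x ∉ Q → x ∉ W → y ∈ W → φ x ≠ y →
        ContainsCopy (cycGraph m) (H0 ⊔ SimpleGraph.fromEdgeSet {s(x, y)}) := by
      intro x y hx hx' hy hne
      have fx := (hφ x hx hx').1
      have hxf : ∀ w ∈ W, x ≠ w := fun w hw h => hx' (h ▸ hw)
      obtain ⟨S, hSQ, hSc, p0⟩ := path (m - 3) (by omega) (by omega)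
      have n1 : φ x ∉ S := fun h => hWQ _ fx (hSQ h)
      have n2 : x ∉ insert (φ x) S := by
        simp only [Finset.mem_insert, not_or]
        exact ⟨hxf _ fx, fun h => hx (hSQ h)⟩
      have n3 : y ∉ insert x (insert (φ x) S) := by
        simp only [Finset.mem_insert, not_or]
        exact ⟨(hxf _ hy).symm, hne.symm, fun h => hWQ _ hy (hSQ h)⟩
      have p4 := ((PP.cons (aW _ fx) n1 p0).cons (aL x hx hx') n2).snoc (aW' _ hy).symm n3
      refine p4.copy (by omega) ?_ (hxf _ hy)
      rw [Finset.card_insert_of_notMem n3,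
          Finset.card_insert_of_notMem n2, Finset.card_insert_of_notMem n1]
      omega
    -- leaf to clique
    have t3 : ∀ x z, x ∉ Q → x ∉ W → z ∈ Q →
        ContainsCopy (cycGraph m) (H0 ⊔ SimpleGraph.fromEdgeSet {s(x, z)}) := by
      intro x z hx hx' hz
      have fx := (hφ x hx hx').1
      have hxf : ∀ w ∈ W, x ≠ w := fun w hw h => hx' (h ▸ hw)
      have : ∃ y ∈ Q, y ≠ z ∧ H0.Adj (φ x) y := by
        by_cases h : c = z
        · exact ⟨c', hc', fun h' => hcc (h.trans h'.symm), aW' _ fx⟩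
        · exact ⟨c, hc, h, aW _ fx⟩
      obtain ⟨y, hy, hyz, hya⟩ := this
      have p0 := PP.clique _ Q rfl aQ y hy z hz hyz
      have n1 : φ x ∉ Q := fun h => hWQ _ fx h
      have n2 : x ∉ insert (φ x) Q := by
        simp only [Finset.mem_insert, not_or]
        exact ⟨hxf _ fx, hx⟩
      have p4 := (PP.cons hya n1 p0).cons (aL x hx hx') n2
      refine p4.copy (by omega) ?_ (fun h => hx (h ▸ hz))
      rw [Finset.card_insert_of_notMem n2, Finset.card_insert_of_notMem n1]
      omega
    -- holder to holder
    have t4 : ∀ x y, x ∈ W → y ∈ W → x ≠ y →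
        ContainsCopy (cycGraph m) (H0 ⊔ SimpleGraph.fromEdgeSet {s(x, y)}) := by
      intro x y hx hy hxy
      obtain ⟨S, hSQ, hSc, p0⟩ := path (m - 2) (by omega) (by omega)
      have n1 : x ∉ S := fun h => hWQ _ hx (hSQ h)
      have n2 : y ∉ insert x S := by
        simp only [Finset.mem_insert, not_or]
        exact ⟨hxy.symm, fun h => hWQ _ hy (hSQ h)⟩
      have p4 := (PP.cons (aW _ hx) n1 p0).snoc (aW' _ hy).symm n2
      refine p4.copy (by omega) ?_ hxy
      rw [Finset.card_insert_of_notMem n2, Finset.card_insert_of_notMem n1]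
      omega
    -- holder to clique
    have t5 : ∀ x z, x ∈ W → z ∈ Q → z ≠ c → z ≠ c' →
        ContainsCopy (cycGraph m) (H0 ⊔ SimpleGraph.fromEdgeSet {s(x, z)}) := by
      intro x z hx hz hzc hzc'
      obtain ⟨w, hw, hwx⟩ : ∃ w ∈ W, w ≠ x := Finset.exists_mem_ne (by omega) x
      have p0 := PP.clique _ (Q.erase c) rfl (fun a ha b hb => aQ a (Finset.mem_of_mem_erase ha) b
        (Finset.mem_of_mem_erase hb)) c' (Finset.mem_erase.2 ⟨hcc.symm, hc'⟩) z
        (Finset.mem_erase.2 ⟨hzc, hz⟩) hzc'.symm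
      have n1 : w ∉ Q.erase c := fun h => hWQ _ hw (Finset.mem_of_mem_erase h)
      have n2 : c ∉ insert w (Q.erase c) := by
        simp only [Finset.mem_insert, not_or]
        exact ⟨fun h => hcW (h ▸ hw), by simp⟩
      have n3 : x ∉ insert c (insert w (Q.erase c)) := by
        simp only [Finset.mem_insert, not_or]
        exact ⟨fun h => hcW (h ▸ hx), hwx.symm, fun h => hWQ _ hx (Finset.mem_of_mem_erase h)⟩
      have p4 := ((PP.cons (aW' _ hw) n1 p0).cons (aW _ hw).symm n2).cons (aW _ hx) n3
      refine p4.copy (by omega) ?_ (fun h => hWQ x hx (h ▸ hz))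
      rw [Finset.card_insert_of_notMem n3,
          Finset.card_insert_of_notMem n2, Finset.card_insert_of_notMem n1,
          Finset.card_erase_of_mem hc]
      omega
    intro x y hxy hnot
    by_cases hx : x ∈ Q
    · by_cases hy : y ∈ Q
      · exact absurd (aQ x hx y hy hxy.ne) hnot
      · refine swap x y (Or.inr ?_)
        by_cases hy' : y ∈ W
        · exact t5 y x hy' hx (fun h => hnot (h ▸ (aW y hy').symm))
            (fun h => hnot (h ▸ (aW' y hy').symm))
        · exact t3 y x hy hy' hx
    · by_cases hx' : x ∈ W
      · by_cases hy : y ∈ Q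
        · exact Or.inr (t5 x y hx' hy (fun h => hnot (h ▸ (aW x hx')))
            (fun h => hnot (h ▸ (aW' x hx'))))
        · by_cases hy' : y ∈ W
          · exact Or.inr (t4 x y hx' hy' hxy.ne)
          · exact swap x y (Or.inr (t2 y x hy hy' hx' (fun h => hnot (h ▸ (aL y hy hy').symm))))
      · by_cases hy : y ∈ Q
        · exact Or.inr (t3 x y hx hx' hy)
        · by_cases hy' : y ∈ W
          · exact Or.inr (t2 x y hx hx' hy' (fun h => hnot (h ▸ (aL x hx hx'))))
          · by_cases hff : φ x = φ y
            · exact Or.inl (hB x y hx hx' hy hy' hff hxy)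
            · exact Or.inr (t1 x y hx hx' hy hy' hff hxy.ne)
  obtain ⟨H, hH, hHc⟩ := extend_sat hle hfree B hcopy
  refine ⟨H, hH, hHc.trans (Nat.add_le_add_right ?_ _)⟩
  set L := (Q ∪ W)ᶜ with hL
  have hsub : H0.edgeSet ⊆ (((Q ×ˢ Q).image (fun x => s(x.1, x.2)) ∪ (W.image (fun w => s(w, c)) ∪
      (W.image (fun w => s(w, c')) ∪ L.image (fun x => s(x, φ x)))) : Finset (Sym2 V)) : Set (Sym2 V)) := by
    have : ∀ x y, ((x ∈ Q ∧ y ∈ Q) ∨ (x ∈ W ∧ (y = c ∨ y = c')) ∨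
      (x ∉ Q ∧ x ∉ W ∧ y = φ x)) → s(x, y) ∈ ((Q ×ˢ Q).image (fun x => s(x.1, x.2)) ∪
      (W.image (fun w => s(w, c)) ∪
      (W.image (fun w => s(w, c')) ∪ L.image (fun x => s(x, φ x)))) : Finset (Sym2 V)) := by
      rintro x y (h | h | h)
      · exact Finset.mem_union_left _ (Finset.mem_image.2 ⟨(x, y), Finset.mem_product.2 h, rfl⟩)
      · refine Finset.mem_union_right _ ?_
        rcases h.2 with rfl | rfl
        · exact Finset.mem_union_left _ (Finset.mem_image.2 ⟨x, h.1, rfl⟩)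
        · exact Finset.mem_union_right _ (Finset.mem_union_left _ (Finset.mem_image.2 ⟨x, h.1, rfl⟩))
      · refine Finset.mem_union_right _ (Finset.mem_union_right _ (Finset.mem_union_right _ ?_))
        exact Finset.mem_image.2 ⟨x, by simp [hL, h.1, h.2.1], by rw [h.2.2]⟩
    intro e he
    induction e with | _ x y => ?_
    rcases ((hadj x y).1 he).2 with h | h
    · exact this x y h
    · rw [Sym2.eq_swap]; exact this y x h
  have hLc : L.card = Fintype.card V - (Q ∪ W).card := Finset.card_compl _
  have hQW : (Q ∪ W).card = Q.card + W.card :=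
    Finset.card_union_of_disjoint (Finset.disjoint_left.2 hdisj)
  have hle' : (Q ∪ W).card ≤ Fintype.card V := Finset.card_le_univ _
  calc _ ≤ _ := Set.ncard_le_ncard hsub (Set.toFinite _)
    _ ≤ Q.card * Q.card + (W.card + (W.card + L.card)) := by
      rw [Set.ncard_coe_finset]
      refine (Finset.card_union_le _ _).trans (Nat.add_le_add ?_ ?_)
      · rw [← Finset.card_product]; exact Finset.card_image_le
      refine (Finset.card_union_le _ _).trans (Nat.add_le_add Finset.card_image_le ?_)
      exact (Finset.card_union_le _ _).trans (Nat.add_le_add Finset.card_image_le Finset.card_image_le)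
    _ ≤ _ := by
      have : Q.card * Q.card ≤ m ^ 2 := by
        rw [sq]; exact Nat.mul_le_mul (by omega) (by omega)
      omega

end Skel


section Upper
variable {V : Type*} [DecidableEq V]

theorem common {G : SimpleGraph V} {m : ℕ} {s : ℝ} (P3 : Prop3 G m s)
    (A : Finset V) (hA : A.Nonempty) (hc : A.card ≤ m) :
    ∃ N : Finset V, s ≤ N.card ∧ ∀ v ∈ N, ∀ a ∈ A, G.Adj v a := by
  obtain ⟨a0, ha0⟩ := hA
  let f : Fin m → V := fun i => if h : i.1 < A.card then (A.equivFin.symm ⟨i.1, h⟩).1 else a0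
  obtain ⟨N, hN, hadj⟩ := P3 f
  refine ⟨N, hN, fun v hv a ha => ?_⟩
  have hlt := (A.equivFin ⟨a, ha⟩).2
  have := hadj v hv ⟨(A.equivFin ⟨a, ha⟩).1, lt_of_lt_of_le hlt hc⟩
  simpa [f, hlt] using this

theorem clique_exists {G : SimpleGraph V} {m : ℕ} {s : ℝ} (P3 : Prop3 G m s) (hs : 1 ≤ s)
    (v0 : V) (j : ℕ) (hj : j + 1 ≤ m) :
    ∃ Q : Finset V, Q.card = j + 1 ∧ ∀ a ∈ Q, ∀ b ∈ Q, a ≠ b → G.Adj a b := by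
  induction j with
  | zero =>
    refine ⟨{v0}, by simp, ?_⟩
    intro a ha b hb hab
    simp only [Finset.mem_singleton] at ha hb
    exact absurd (ha.trans hb.symm) hab
  | succ j ih =>
    obtain ⟨Q, hQ, hcl⟩ := ih (by omega)
    obtain ⟨N, hN, hadj⟩ := common P3 Q (Finset.card_pos.1 (by omega)) (by omega)
    have : 0 < N.card := by
      have : (1:ℝ) ≤ N.card := hs.trans hN
      exact_mod_cast this
    obtain ⟨v, hv⟩ := Finset.card_pos.1 this
    have hvQ : v ∉ Q := fun h => G.irrefl (hadj v hv v h)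
    refine ⟨insert v Q, by rw [Finset.card_insert_of_notMem hvQ, hQ], ?_⟩
    intro a ha b hb hab
    rcases Finset.mem_insert.1 ha with h1 | ha' <;> rcases Finset.mem_insert.1 hb with h2 | hb'
    · exact absurd (h1.trans h2.symm) hab
    · rw [h1]; exact hadj _ hv _ hb'
    · rw [h2]; exact (hadj _ hv _ ha').symm
    · exact hcl a ha' b hb' hab

theorem assign {G : SimpleGraph V} {t u0 k : ℕ} (P2 : Prop2 G t) (P4 : Prop4 G u0 k)
    (P U : Finset V) (hPU : Disjoint P U) (v0 : V) (j : ℕ) (hj : j + t ≤ P.card) :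
    ∃ U' ⊆ U, ∃ P' ⊆ P, ∃ φ : V → V, P'.card ≤ j ∧
      (∀ x ∈ U, x ∉ U' → φ x ∈ P' ∧ G.Adj x (φ x)) ∧
      (∀ x ∈ U, x ∉ U' → ∀ y ∈ U, y ∉ U' → φ x = φ y → ¬ G.Adj x y) ∧
      (U'.card < t * u0 + t ∨ U'.card + j * k ≤ U.card) := by
  classical
  induction j with
  | zero =>
    refine ⟨U, subset_rfl, ∅, by simp, fun _ => v0, by simp, ?_, ?_, Or.inr (by simp)⟩
    · intro x h h'; exact absurd h h'
    · intro x h h'; exact absurd h h'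
  | succ j ih =>
    obtain ⟨U', hU', P', hP', φ, hc, h1, h2, h3⟩ := ih (by omega)
    by_cases hsm : U'.card < t * u0 + t
    · exact ⟨U', hU', P', hP', φ, by omega, h1, h2, Or.inl hsm⟩
    have h3 : U'.card + j * k ≤ U.card := by tauto
    have hPP : t ≤ (P \ P').card := by
      rw [Finset.card_sdiff_of_subset hP']; omega
    obtain ⟨A, hA, hAc⟩ := Finset.exists_subset_card_eq hPP
    let Nb : V → Finset V := fun w => U'.filter (fun x => G.Adj w x)
    have hw : ∃ w ∈ A, u0 ≤ (Nb w).card := by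
      by_contra hcon
      push Not at hcon
      have hbu : (A.biUnion Nb).card ≤ t * u0 := by
        calc _ ≤ ∑ w ∈ A, (Nb w).card := Finset.card_biUnion_le
          _ ≤ ∑ w ∈ A, u0 := Finset.sum_le_sum fun w hw => (hcon w hw).le
          _ = t * u0 := by simp [hAc]
      have hrest : t ≤ (U' \ A.biUnion Nb).card := by
        have := Finset.le_card_sdiff (A.biUnion Nb) U'
        omega
      obtain ⟨B, hB, hBc⟩ := Finset.exists_subset_card_eq hrest
      obtain ⟨a, ha, b, hb, hab⟩ := P2 A B hAc hBc (by
        rw [Finset.disjoint_left]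
        intro x hxA hxB
        exact Finset.disjoint_left.1 hPU (Finset.mem_sdiff.1 (hA hxA)).1
          (hU' (Finset.mem_sdiff.1 (hB hxB)).1))
      have := Finset.mem_sdiff.1 (hB hb)
      exact this.2 (Finset.mem_biUnion.2 ⟨a, ha, Finset.mem_filter.2 ⟨this.1, hab⟩⟩)
    obtain ⟨w, hwA, hwc⟩ := hw
    obtain ⟨U1, hU1, hU1c⟩ := Finset.exists_subset_card_eq hwc
    obtain ⟨I, hI, hIc, hind⟩ := P4 U1 hU1c
    have hIU' : I ⊆ U' := hI.trans (hU1.trans (Finset.filter_subset _ _))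
    have hadj : ∀ x ∈ I, G.Adj w x := fun x hx => (Finset.mem_filter.1 (hU1 (hI hx))).2
    have hwP := Finset.mem_sdiff.1 (hA hwA)
    refine ⟨U' \ I, Finset.sdiff_subset.trans hU', insert w P', ?_,
      fun x => if x ∈ I then w else φ x, ?_, ?_, ?_, Or.inr ?_⟩
    · exact Finset.insert_subset hwP.1 hP'
    · exact (Finset.card_insert_le _ _).trans (by omega)
    · intro x hx hx'
      by_cases hxI : x ∈ I
      · simp only [hxI, if_true]
        exact ⟨Finset.mem_insert_self _ _, (hadj x hxI).symm⟩
      · simp only [hxI, if_false]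
        have := h1 x hx (fun h => hx' (Finset.mem_sdiff.2 ⟨h, hxI⟩))
        exact ⟨Finset.mem_insert_of_mem this.1, this.2⟩
    · intro x hx hx' y hy hy' he
      by_cases hxI : x ∈ I <;> by_cases hyI : y ∈ I
      · exact hind x hxI y hyI
      · simp only [hxI, hyI, if_true, if_false] at he
        have := h1 y hy (fun h => hy' (Finset.mem_sdiff.2 ⟨h, hyI⟩))
        exact absurd (he ▸ this.1) hwP.2
      · simp only [hxI, hyI, if_true, if_false] at he
        have := h1 x hx (fun h => hx' (Finset.mem_sdiff.2 ⟨h, hxI⟩))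
        exact absurd (he ▸ this.1) hwP.2
      · simp only [hxI, hyI, if_false] at he
        exact h2 x hx (fun h => hx' (Finset.mem_sdiff.2 ⟨h, hxI⟩)) y hy
          (fun h => hy' (Finset.mem_sdiff.2 ⟨h, hyI⟩)) he
    · have hle := Finset.card_le_card hIU'
      rw [Finset.card_sdiff_of_subset hIU', hIc]
      rw [hIc] at hle
      have : (j + 1) * k = j * k + k := by ring
      omega

theorem upper_det [Fintype V] {G : SimpleGraph V} {m t u0 k : ℕ} {s : ℝ} (hm : 5 ≤ m)
    (ht : 1 ≤ t) (hk : 1 ≤ k) (hV : 1 ≤ Fintype.card V)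
    (hs : ((Fintype.card V / k + 1 + t * u0 + 4 * t : ℕ) : ℝ) ≤ s)
    (P2 : Prop2 G t) (P3 : Prop3 G m s) (P4 : Prop4 G u0 k) :
    ∃ H, IsSaturatedIn G H (cycGraph m) ∧
      H.edgeSet.ncard ≤ Fintype.card V + (Fintype.card V / k + 1 + t * u0 + 4 * t) + m ^ 2
        + 4 * t ^ 2 := by
  classical
  set n := Fintype.card V with hn
  obtain ⟨d, hd⟩ : ∃ d, d = n / k := ⟨_, rfl⟩
  rw [← hd] at hs ⊢
  have hs1 : (1:ℝ) ≤ s := le_trans (by exact_mod_cast (by omega)) hs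
  obtain ⟨v0⟩ : Nonempty V := Fintype.card_pos_iff.1 hV
  obtain ⟨Q, hQ, hclq⟩ := clique_exists P3 hs1 v0 (m - 3) (by omega)
  have hQ : Q.card = m - 2 := by omega
  have hQne : Q.Nonempty := Finset.card_pos.1 (by omega)
  obtain ⟨c, hc, c', hc', hcc⟩ := Finset.one_lt_card.1 (show 1 < Q.card by omega)
  obtain ⟨N, hN, hNadj⟩ := common P3 Q hQne (by omega)
  have hNc : d + 1 + t * u0 + 4 * t ≤ N.card := by exact_mod_cast hs.trans hN
  obtain ⟨R0, hR0, hR0c⟩ := Finset.exists_subset_card_eq (show t ≤ N.card by omega)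
  set X := Finset.univ.filter (fun v => v ∉ R0 ∧ ∀ r ∈ R0, ¬ G.Adj r v) with hX
  have hXc : X.card ≤ t := by
    by_contra hcon
    obtain ⟨B, hB, hBc⟩ := Finset.exists_subset_card_eq (show t ≤ X.card by omega)
    obtain ⟨a, ha, b, hb, hab⟩ := P2 R0 B hR0c hBc (by
      rw [Finset.disjoint_left]
      intro x h1 h2
      exact (Finset.mem_filter.1 (hB h2)).2.1 h1)
    exact (Finset.mem_filter.1 (hB hb)).2.2 a ha hab
  have hcomm : ∀ x : V, ∃ w, (∀ a ∈ Q, G.Adj w a) ∧ G.Adj w x := by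
    intro x
    obtain ⟨N', hN', hadj⟩ := common P3 (insert x Q) (Finset.insert_nonempty _ _)
      ((Finset.card_insert_le _ _).trans (by omega))
    have : 0 < N'.card := by
      have : (1:ℝ) ≤ N'.card := hs1.trans hN'
      exact_mod_cast this
    obtain ⟨v, hv⟩ := Finset.card_pos.1 this
    exact ⟨v, fun a ha => hadj v hv a (Finset.mem_insert_of_mem ha),
      hadj v hv x (Finset.mem_insert_self _ _)⟩
  choose wv hwv1 hwv2 using hcomm
  set R := R0 ∪ X.image wv with hR
  have hRc : R.card ≤ 2 * t := by
    have h1 := Finset.card_union_le R0 (X.image wv)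
    rw [← hR] at h1
    have h2 := Finset.card_image_le (s := X) (f := wv)
    omega
  have hRadj : ∀ v ∈ R, ∀ a ∈ Q, G.Adj v a := by
    intro v hv a ha
    rcases Finset.mem_union.1 hv with h | h
    · exact hNadj v (hR0 h) a ha
    · obtain ⟨x, -, rfl⟩ := Finset.mem_image.1 h
      exact hwv1 x a ha
  set j1 := d + 1 with hj1
  set u1 := t * u0 + t with hu1
  have hW0 : j1 + u1 + t ≤ (N \ R).card := by
    have := Finset.le_card_sdiff R N
    omega
  obtain ⟨W0, hW0s, hW0c⟩ := Finset.exists_subset_card_eq hW0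
  have hW0N : ∀ w ∈ W0, w ∈ N ∧ w ∉ R := fun w hw => Finset.mem_sdiff.1 (hW0s hw)
  set W := R ∪ W0 with hW
  have hWadj : ∀ w ∈ W, ∀ a ∈ Q, G.Adj w a := by
    intro w hw a ha
    rcases Finset.mem_union.1 hw with h | h
    · exact hRadj w h a ha
    · exact hNadj w (hW0N w h).1 a ha
  have hWc : W.card ≤ d + 1 + t * u0 + 4 * t := by
    have := Finset.card_union_le R W0
    rw [← hW] at this
    omega
  set U := Finset.univ \ (Q ∪ W) with hU
  have hmemU : ∀ x, x ∉ Q → x ∉ W → x ∈ U := by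
    intro x h1 h2
    simp [hU, h1, h2]
  have hUW : ∀ x ∈ U, x ∉ W := by
    intro x hx hx'
    simp [hU, hx'] at hx
  obtain ⟨U1, hU1, P1, hP1, φ1, hP1c, ha1, ha2, ha3⟩ := assign P2 P4 W0 U (by
    rw [Finset.disjoint_left]; intro x h1 h2
    exact hUW x h2 (Finset.mem_union_right _ h1)) v0 j1 (by omega)
  have hU1c : U1.card < u1 := by
    rcases ha3 with h | h
    · exact h
    · exfalso
      have h4 : U.card ≤ n := Finset.card_le_univ _
      have h5 : n < j1 * k := by
        rw [hj1, hd]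
        have := Nat.div_add_mod n k
        have := Nat.mod_lt n (show k > 0 by omega)
        nlinarith
      omega
  have P4' : Prop4 G 1 1 := by
    intro A hA
    refine ⟨A, subset_rfl, hA, ?_⟩
    intro a ha b hb hab
    obtain ⟨z, rfl⟩ := Finset.card_eq_one.1 hA
    simp only [Finset.mem_singleton] at ha hb
    subst ha; subst hb; exact G.irrefl hab
  obtain ⟨U2, hU2, P2', hP2', φ2, hP2c, hb1, hb2, hb3⟩ := assign P2 P4' (W0 \ P1) U1 (by
    rw [Finset.disjoint_left]; intro x h1 h2
    exact hUW x (hU1 h2) (Finset.mem_union_right _ (Finset.mem_sdiff.1 h1).1)) v0 u1 (by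
      rw [Finset.card_sdiff_of_subset hP1]; omega)
  have hU2c : U2.card ≤ 2 * t := by
    rcases hb3 with h | h <;> omega
  have hφ3 : ∀ x : V, ∃ r, x ∈ U → r ∈ R ∧ G.Adj x r := by
    intro x
    by_cases hx : x ∈ U
    · have hxR0 : x ∉ R0 := fun h =>
        hUW x hx (Finset.mem_union_left _ (Finset.mem_union_left _ h))
      by_cases hxX : x ∈ X
      · exact ⟨wv x, fun _ => ⟨Finset.mem_union_right _ (Finset.mem_image_of_mem _ hxX),
          (hwv2 x).symm⟩⟩
      · have : ∃ r ∈ R0, G.Adj r x := by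
          by_contra hcon
          push Not at hcon
          exact hxX (Finset.mem_filter.2 ⟨Finset.mem_univ _, hxR0, hcon⟩)
        obtain ⟨r, hr, hrx⟩ := this
        exact ⟨r, fun _ => ⟨Finset.mem_union_left _ hr, hrx.symm⟩⟩
    · exact ⟨v0, fun h => absurd h hx⟩
  choose φ3 hφ3 using hφ3
  let φ : V → V := fun x => if x ∈ U2 then φ3 x else if x ∈ U1 then φ2 x else φ1 x
  have hcase : ∀ x ∈ U, (x ∈ U2 ∧ φ x ∈ R ∧ G.Adj x (φ x)) ∨
      (x ∈ U1 ∧ x ∉ U2 ∧ φ x = φ2 x ∧ φ x ∈ P2' ∧ G.Adj x (φ x)) ∨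
      (x ∉ U1 ∧ φ x = φ1 x ∧ φ x ∈ P1 ∧ G.Adj x (φ x)) := by
    intro x hx
    by_cases h2 : x ∈ U2
    · left
      have : φ x = φ3 x := by simp [φ, h2]
      rw [this]
      exact ⟨h2, hφ3 x hx⟩
    by_cases h1 : x ∈ U1
    · right; left
      have : φ x = φ2 x := by simp [φ, h2, h1]
      rw [this]
      exact ⟨h1, h2, rfl, hb1 x h1 h2⟩
    · right; right
      have : φ x = φ1 x := by simp [φ, h2, h1]
      rw [this]
      exact ⟨h1, rfl, ha1 x hx h1⟩
  have hRP1 : ∀ z, z ∈ R → z ∈ P1 → False := fun z h1 h2 => (hW0N z (hP1 h2)).2 h1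
  have hRP2 : ∀ z, z ∈ R → z ∈ P2' → False := fun z h1 h2 =>
    (hW0N z (Finset.mem_sdiff.1 (hP2' h2)).1).2 h1
  have hPP : ∀ z, z ∈ P1 → z ∈ P2' → False := fun z h1 h2 =>
    (Finset.mem_sdiff.1 (hP2' h2)).2 h1
  obtain ⟨H, hH, hHc⟩ := upper_skel hm Q W c c' φ hQ hclq hc hc' hcc
    (fun v hv hvW => G.irrefl (hWadj v hvW v hv))
    (by
      have : W0.card ≤ W.card := Finset.card_le_card Finset.subset_union_right
      omega)
    (fun w hw => ⟨hWadj w hw c hc, hWadj w hw c' hc'⟩)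
    (by
      intro x hxQ hxW
      rcases hcase x (hmemU x hxQ hxW) with h | h | h
      · exact ⟨Finset.mem_union_left _ h.2.1, h.2.2⟩
      · exact ⟨Finset.mem_union_right _ (Finset.mem_sdiff.1 (hP2' h.2.2.2.1)).1, h.2.2.2.2⟩
      · exact ⟨Finset.mem_union_right _ (hP1 h.2.2.1), h.2.2.2⟩)
    ((U2 ×ˢ U2).image (fun z => s(z.1, z.2)))
    (by
      intro x y hxQ hxW hyQ hyW he hadj
      have hx := hmemU x hxQ hxW
      have hy := hmemU y hyQ hyW
      rcases hcase x hx with h | h | h <;> rcases hcase y hy with g | g | g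
      · exact Finset.mem_image.2 ⟨(x, y), Finset.mem_product.2 ⟨h.1, g.1⟩, rfl⟩
      · exact (hRP2 _ h.2.1 (he ▸ g.2.2.2.1)).elim
      · exact (hRP1 _ h.2.1 (he ▸ g.2.2.1)).elim
      · exact (hRP2 _ g.2.1 (he ▸ h.2.2.2.1)).elim
      · exact absurd hadj (hb2 x h.1 h.2.1 y g.1 g.2.1 (by rw [← h.2.2.1, ← g.2.2.1, he]))
      · exact (hPP _ g.2.2.1 (he ▸ h.2.2.2.1)).elim
      · exact (hRP1 _ g.2.1 (he ▸ h.2.2.1)).elim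
      · exact (hPP _ h.2.2.1 (he ▸ g.2.2.2.1)).elim
      · exact absurd hadj (ha2 x hx h.1 y hy g.1 (by rw [← h.2.1, ← g.2.1, he])))
  refine ⟨H, hH, hHc.trans ?_⟩
  have hBc : ((U2 ×ˢ U2).image (fun z => s(z.1, z.2))).card ≤ 4 * t ^ 2 := by
    refine Finset.card_image_le.trans ?_
    rw [Finset.card_product]
    calc _ ≤ (2 * t) * (2 * t) := Nat.mul_le_mul hU2c hU2c
      _ = 4 * t ^ 2 := by ring
  omega

end Upper


section Asymp

noncomputable def tt (κ η : ℝ) (n : ℕ) : ℕ := ⌈(2 + η) * (log n / κ)⌉₊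
noncomputable def kk (κ η : ℝ) (n : ℕ) : ℕ := ⌊(2 - η) * (log n / κ)⌋₊
noncomputable def uu (δ : ℝ) (n : ℕ) : ℕ := ⌈(n : ℝ) ^ (1 - δ)⌉₊

theorem ev_log (c : ℝ) : ∀ᶠ n : ℕ in atTop, c ≤ log n :=
  (tendsto_log_atTop.comp tendsto_natCast_atTop_atTop).eventually_ge_atTop c

theorem ev_logpow (M : ℕ) (δ c : ℝ) (hδ : 0 < δ) (hc : 0 < c) :
    ∀ᶠ n : ℕ in atTop, (log n) ^ M ≤ c * (n : ℝ) ^ δ := by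
  have h := isLittleO_log_rpow_rpow_atTop (M : ℝ) hδ
  have h2 := (h.bound hc)
  have h3 := tendsto_natCast_atTop_atTop (R := ℝ) |>.eventually h2
  filter_upwards [h3, ev_log 0] with n hn hl
  rw [Real.rpow_natCast] at hn
  rw [Real.norm_of_nonneg (pow_nonneg hl _), Real.norm_of_nonneg (by positivity)] at hn
  exact hn

theorem tt_le {κ η : ℝ} (hκ : 0 < κ) (hη : 0 < η) : ∀ᶠ n : ℕ in atTop,
    (2 + η) * (log n / κ) ≤ tt κ η n ∧ (tt κ η n : ℝ) ≤ (2 + 2 * η) * (log n / κ) := by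
  filter_upwards [ev_log (κ / η), ev_log 0] with n hn h0
  have h1 : 1 ≤ η * (log n / κ) := by
    rw [div_le_iff₀ hη] at hn
    rw [← mul_div_assoc, le_div_iff₀ hκ]; linarith
  have hL : 0 ≤ log n / κ := by positivity
  refine ⟨Nat.le_ceil _, ?_⟩
  have := (Nat.ceil_lt_add_one (show 0 ≤ (2 + η) * (log n / κ) by positivity)).le
  unfold tt
  linarith

theorem kk_le {κ η : ℝ} (hκ : 0 < κ) (hη : 0 < η) (hη1 : η ≤ 1) : ∀ᶠ n : ℕ in atTop,
    (2 - 2 * η) * (log n / κ) ≤ kk κ η n ∧ (kk κ η n : ℝ) ≤ (2 - η) * (log n / κ) := by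
  filter_upwards [ev_log (κ / η), ev_log 0] with n hn h0
  have h1 : 1 ≤ η * (log n / κ) := by
    rw [div_le_iff₀ hη] at hn
    rw [← mul_div_assoc, le_div_iff₀ hκ]; linarith
  have hL : 0 ≤ log n / κ := by positivity
  refine ⟨?_, Nat.floor_le (mul_nonneg (by linarith) hL)⟩
  have := (Nat.lt_floor_add_one ((2 - η) * (log n / κ))).le
  unfold kk
  linarith

theorem uu_le {δ : ℝ} (hδ1 : δ ≤ 1) : ∀ᶠ n : ℕ in atTop,
    (n : ℝ) ^ (1 - δ) ≤ uu δ n ∧ (uu δ n : ℝ) ≤ 2 * (n : ℝ) ^ (1 - δ) := by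
  filter_upwards [eventually_ge_atTop 1] with n hn
  refine ⟨Nat.le_ceil _, ?_⟩
  have h1 : (1:ℝ) ≤ (n : ℝ) ^ (1 - δ) :=
    Real.one_le_rpow (by exact_mod_cast hn) (by linarith)
  have := (Nat.ceil_lt_add_one (show 0 ≤ (n : ℝ) ^ (1 - δ) by positivity)).le
  unfold uu
  linarith

theorem tt_pow {κ η : ℝ} (hκ : 0 < κ) (hη : 0 < η) (M : ℕ) (δ c : ℝ) (hδ : 0 < δ) (hc : 0 < c) :
    ∀ᶠ n : ℕ in atTop, (tt κ η n : ℝ) ^ M ≤ c * (n : ℝ) ^ δ := by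
  have hC : 0 < ((2 + 2 * η) / κ) ^ M := by positivity
  filter_upwards [tt_le hκ hη, ev_logpow M δ (c / ((2 + 2 * η) / κ) ^ M) hδ (by positivity)]
    with n h1 h2
  calc (tt κ η n : ℝ) ^ M ≤ ((2 + 2 * η) / κ * log n) ^ M := by
        refine pow_le_pow_left₀ (by positivity) (h1.2.trans (le_of_eq (by ring))) _
    _ = ((2 + 2 * η) / κ) ^ M * (log n) ^ M := mul_pow _ _ _
    _ ≤ ((2 + 2 * η) / κ) ^ M * (c / ((2 + 2 * η) / κ) ^ M * (n : ℝ) ^ δ) := by gcongr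
    _ = c * (n : ℝ) ^ δ := by field_simp

theorem one_le_tt {κ η : ℝ} (hκ : 0 < κ) (hη : 0 < η) : ∀ᶠ n : ℕ in atTop,
    1 ≤ tt κ η n ∧ log n / κ ≤ tt κ η n := by
  filter_upwards [tt_le hκ hη, ev_log κ] with n h1 h2
  have hL : 1 ≤ log n / κ := by rwa [le_div_iff₀ hκ, one_mul]
  have : (1:ℝ) ≤ tt κ η n := by nlinarith [h1.1]
  exact ⟨by exact_mod_cast this, by nlinarith [h1.1]⟩

theorem kk_le_tt (κ η : ℝ) (hκ : 0 < κ) (hη : 0 < η) :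
    ∀ᶠ n : ℕ in atTop, kk κ η n ≤ tt κ η n := by
  filter_upwards [ev_log 0] with n h0
  unfold kk tt
  have hL : 0 ≤ log n / κ := by positivity
  exact (Nat.floor_le_floor (by nlinarith)).trans (Nat.floor_le_ceil _)

/-- deterministic lower comparison -/
theorem lower_cmp {κ η ε : ℝ} (hκ : 0 < κ) (hη : 0 < η) (hε : 0 < ε) (hε1 : ε ≤ 1)
    (hηε : η ≤ ε / 2) (m : ℕ) (hm : 5 ≤ m) :
    ∀ᶠ n : ℕ in atTop, ∀ e : ℝ, (n : ℝ) ≤ (2 * tt κ η n + 2 * ((m : ℝ) - 1) *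
      (e - n + 2 * tt κ η n)) * tt κ η n + 3 * (m * (tt κ η n : ℝ) ^ m) →
      (n : ℝ) + (1 - ε) * n / (4 * ((m : ℝ) - 1) * (log n / κ)) ≤ e := by
  have hm' : (5:ℝ) ≤ m := by exact_mod_cast hm
  filter_upwards [tt_le hκ hη, one_le_tt hκ hη, ev_log κ, eventually_ge_atTop 1,
    tt_pow hκ hη m 1 (ε / (4 * (7 * m))) one_pos (by positivity)] with n h1 h2 h3 hn h4 e he
  rw [Real.rpow_one] at h4
  have hn' : (1:ℝ) ≤ n := by exact_mod_cast hn
  set t : ℝ := (tt κ η n : ℝ) with ht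
  have hL : 1 ≤ log n / κ := by rwa [le_div_iff₀ hκ, one_mul]
  set L := log n / κ
  have ht1 : 1 ≤ t := hL.trans h2.2
  by_contra hcon
  push Not at hcon
  have hD : e - n < (1 - ε) * n / (4 * ((m : ℝ) - 1) * L) := by linarith
  have hM : 0 < (m:ℝ) - 1 := by linarith
  have h5 : 2 * ((m:ℝ) - 1) * t * (e - n) < 2 * ((m:ℝ) - 1) * t * ((1 - ε) * n / (4 * ((m : ℝ) - 1) * L)) := by
    apply mul_lt_mul_of_pos_left hD; positivity
  have h6 : 2 * ((m:ℝ) - 1) * t * ((1 - ε) * n / (4 * ((m : ℝ) - 1) * L)) = (1 - ε) * n * (t / (2 * L)) := by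
    field_simp; ring
  have h7 : t / (2 * L) ≤ 1 + η := by
    rw [div_le_iff₀ (by positivity)]; linarith [h1.2]
  have h8 : (1 - ε) * n * (t / (2 * L)) ≤ (1 - ε) * n * (1 + η) :=
    mul_le_mul_of_nonneg_left h7 (mul_nonneg (by linarith) (by linarith))
  have h9 : (1 - ε) * n * (1 + η) ≤ (1 - ε / 2) * n := by nlinarith [mul_pos hη hε]
  have h10 : t ^ 2 ≤ t ^ m := pow_le_pow_right₀ ht1 (by omega)
  have h11 : 2 * t ^ 2 + 4 * ((m:ℝ) - 1) * t ^ 2 + 3 * (m * t ^ m) ≤ 7 * m * t ^ m := by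
    have : 2 * t ^ 2 + 4 * ((m:ℝ) - 1) * t ^ 2 ≤ 4 * m * t ^ 2 := by nlinarith [sq_nonneg t]
    have : 4 * (m:ℝ) * t ^ 2 ≤ 4 * m * t ^ m := mul_le_mul_of_nonneg_left h10 (by positivity)
    linarith
  have h12 : 7 * m * t ^ m ≤ ε / 4 * n := by
    calc 7 * m * t ^ m ≤ 7 * m * (ε / (4 * (7 * m)) * n) :=
          mul_le_mul_of_nonneg_left h4 (by positivity)
      _ = ε / 4 * n := by field_simp
  have h13 : 0 < ε * n := by positivity
  nlinarith

/-- deterministic upper comparison -/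
theorem upper_cmp {κ η ε δ : ℝ} (hκ : 0 < κ) (hη : 0 < η) (hη1 : η ≤ 1 / 2) (hε : 0 < ε)
    (hηε : η ≤ ε / 4) (hδ : 0 < δ) (hδ1 : δ ≤ 1) (m : ℕ) :
    ∀ᶠ n : ℕ in atTop, ((n + (n / kk κ η n + 1 + tt κ η n * uu δ n + 4 * tt κ η n) + m ^ 2 +
        4 * tt κ η n ^ 2 : ℕ) : ℝ) ≤ n + (1 + ε) * n / (2 * (log n / κ)) := by
  filter_upwards [tt_le hκ hη, one_le_tt hκ hη, kk_le hκ hη (by linarith), uu_le hδ1, ev_log κ,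
    eventually_ge_atTop 1,
    tt_pow hκ hη 3 δ (ε / (4 * (11 + m ^ 2))) hδ (by positivity)] with n h1 h2 hk hu h3 hn h4
  have hn' : (1:ℝ) ≤ n := by exact_mod_cast hn
  have hL : 1 ≤ log n / κ := by rwa [le_div_iff₀ hκ, one_mul]
  push_cast
  have hdiv : ((n / kk κ η n : ℕ) : ℝ) ≤ n / (kk κ η n : ℝ) := Nat.cast_div_le
  set t : ℝ := (tt κ η n : ℝ) with ht
  set L := log n / κ
  set k : ℝ := (kk κ η n : ℝ)
  set u : ℝ := (uu δ n : ℝ)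
  have ht1 : 1 ≤ t := hL.trans h2.2
  have hk0 : 0 < (2 - 2 * η) * L := mul_pos (by linarith) (by linarith)
  have h5 : n / k ≤ (1 + 2 * η) * n / (2 * L) := by
    calc n / k ≤ n / ((2 - 2 * η) * L) := div_le_div_of_nonneg_left (by positivity) hk0 hk.1
      _ ≤ (1 + 2 * η) * n / (2 * L) := by
        rw [div_le_div_iff₀ hk0 (by positivity)]
        have : 0 ≤ (n:ℝ) * L := by positivity
        nlinarith [mul_nonneg this (mul_nonneg hη.le (by linarith : 0 ≤ 1 - 2 * η))]
  set y := (n:ℝ) ^ (1 - δ) with hy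
  have hy1 : 1 ≤ y := Real.one_le_rpow hn' (by linarith)
  have hyn : (n:ℝ) ^ δ * y = n := by
    rw [hy, ← Real.rpow_add (by linarith)]; simp
  have h6 : 1 + t * u + 4 * t + m ^ 2 + 4 * t ^ 2 ≤ (11 + (m:ℝ) ^ 2) * (t ^ 2 * y) := by
    have ht2 : t ≤ t ^ 2 := by nlinarith
    have hty : t ^ 2 ≤ t ^ 2 * y := le_mul_of_one_le_right (by positivity) hy1
    have htu : t * u ≤ 2 * (t ^ 2 * y) := by
      calc t * u ≤ t ^ 2 * (2 * y) := mul_le_mul ht2 hu.2 (by positivity) (by positivity)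
        _ = _ := by ring
    have hm1 : (m:ℝ) ^ 2 * 1 ≤ (m:ℝ) ^ 2 * (t ^ 2 * y) :=
      mul_le_mul_of_nonneg_left (by linarith) (by positivity)
    linarith
  have h7 : 1 + t * u + 4 * t + m ^ 2 + 4 * t ^ 2 ≤ (ε / 2) * n / (2 * L) := by
    rw [le_div_iff₀ (by positivity)]
    calc (1 + t * u + 4 * t + m ^ 2 + 4 * t ^ 2) * (2 * L)
        ≤ ((11 + (m:ℝ) ^ 2) * (t ^ 2 * y)) * (2 * t) := by
          gcongr
          exact h2.2
      _ = 2 * (11 + (m:ℝ) ^ 2) * t ^ 3 * y := by ring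
      _ ≤ 2 * (11 + (m:ℝ) ^ 2) * (ε / (4 * (11 + m ^ 2)) * (n:ℝ) ^ δ) * y := by gcongr
      _ = ε / 2 * ((n:ℝ) ^ δ * y) := by field_simp; ring
      _ = ε / 2 * n := by rw [hyn]
  have h8 : (1 + 2 * η) * n / (2 * L) + (ε / 2) * n / (2 * L) ≤ (1 + ε) * n / (2 * L) := by
    rw [← add_div]
    gcongr
    nlinarith
  linarith

end Asymp


section Asymp2

theorem tend_aux {f : ℕ → ℝ} {c : ℝ} (hc : 0 < c) (h0 : ∀ n, 0 ≤ f n)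
    (h : ∀ᶠ n : ℕ in atTop, f n ≤ exp (-(c * log n))) : Tendsto f atTop (nhds 0) := by
  refine squeeze_zero' (Eventually.of_forall h0) h ?_
  refine Real.tendsto_exp_neg_atTop_nhds_zero.comp ?_
  exact (tendsto_log_atTop.comp tendsto_natCast_atTop_atTop).const_mul_atTop hc

theorem lim1 {p κ η : ℝ} (hp0 : 0 < p) (hp1 : p < 1) (hκ : 0 < κ) (hq : 1 - p = exp (-κ))
    (hη : 0 < η) : Tendsto (fun n : ℕ => Pr p (fun ω : EdgeType n → Bool =>
      ¬ Prop1 (graphOf ω) (tt κ η n))) atTop (nhds 0) := by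
  refine tend_aux (c := η / 4) (by positivity) (fun n => Pr_nonneg hp0.le hp1.le _) ?_
  have hq0 : 0 < 1 - p := by linarith
  filter_upwards [tt_le hκ hη, one_le_tt hκ hη, ev_log (8 / η * (κ / 2 + p / (2 * (1 - p)))),
    tt_pow hκ hη 1 (η / 8) 1 (by positivity) one_pos, eventually_ge_atTop 1] with n h1 h2 h3 h4 hn
  refine (prob1 n _ p (1 / (tt κ η n : ℝ)) hp0.le hp1.le
    (by have := h2.1; positivity) (by
      rw [div_le_one (by have := h2.1; positivity)]; exact_mod_cast h2.1)).trans ?_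
  have hn' : (0:ℝ) < n := by exact_mod_cast hn
  set t := tt κ η n with ht
  have hT : (1:ℝ) ≤ t := by exact_mod_cast h2.1
  set a := p / (1 - p) with ha
  have ha0 : 0 < a := by positivity
  have hb : p * (1 / (t:ℝ)) + (1 - p) ≤ exp (-κ + a / t) := by
    rw [Real.exp_add, ← hq]
    have h5 : 1 + a / t ≤ exp (a / t) := by linarith [Real.add_one_le_exp (a / (t:ℝ))]
    calc p * (1 / (t:ℝ)) + (1 - p) = (1 - p) * (1 + a / t) := by rw [ha]; field_simp; ring
      _ ≤ _ := mul_le_mul_of_nonneg_left h5 hq0.le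
  have hb0 : 0 ≤ p * (1 / (t:ℝ)) + (1 - p) := by positivity
  have e1 : (n:ℝ) ^ t = exp (t * log n) := by rw [Real.exp_nat_mul, Real.exp_log hn']
  have e2 : (1 / (t:ℝ)) ^ t = exp (-(t * log t)) := by
    rw [Real.exp_neg, Real.exp_nat_mul, Real.exp_log (by linarith), one_div, inv_pow]
  calc (n:ℝ) ^ t * ((p * (1 / (t:ℝ)) + (1 - p)) ^ (t.choose 2) / (1 / (t:ℝ)) ^ t)
      ≤ (n:ℝ) ^ t * (exp (-κ + a / t) ^ (t.choose 2) / (1 / (t:ℝ)) ^ t) := by gcongr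
    _ = exp (t * log n + ((t.choose 2 : ℕ) * (-κ + a / t) - -(t * log t))) := by
        rw [e1, e2, ← Real.exp_nat_mul, ← Real.exp_sub, ← Real.exp_add]
    _ ≤ exp (-(η / 4 * log n)) := ?_
  rw [Real.exp_le_exp, Nat.cast_choose_two]
  have e3 : (t:ℝ) * log n + ((t:ℝ) * (t - 1) / 2 * (-κ + a / t) - -(t * log t)) =
      t * (log n + log t + ((t:ℝ) - 1) / 2 * (-κ + a / t)) := by ring
  rw [e3]
  have h6 : log t ≤ η / 8 * log n := by
    rw [pow_one, one_mul] at h4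
    rw [← Real.log_rpow hn']
    exact Real.log_le_log (by linarith) h4
  have h7 : (2 + η) * log n ≤ κ * t := by
    have := mul_le_mul_of_nonneg_left h1.1 hκ.le
    calc _ = κ * ((2 + η) * (log n / κ)) := by field_simp
      _ ≤ _ := this
  have h8 : ((t:ℝ) - 1) / 2 * (-κ + a / t) ≤ -(κ * t) / 2 + κ / 2 + a / 2 := by
    have : ((t:ℝ) - 1) / 2 * (-κ + a / t) = -(κ * t) / 2 + κ / 2 + a / 2 - a / (2 * t) := by
      field_simp; ring
    have : 0 ≤ a / (2 * (t:ℝ)) := by positivity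
    linarith
  have h9 : κ / 2 + a / 2 ≤ η / 8 * log n := by
    have e : p / (2 * (1 - p)) = a / 2 := by rw [ha]; field_simp
    rw [e, div_mul_eq_mul_div, div_le_iff₀ hη] at h3
    linarith
  have h10 : log n + log t + ((t:ℝ) - 1) / 2 * (-κ + a / t) ≤ -(η / 4 * log n) := by linarith
  have h11 : 0 ≤ η / 4 * log n := mul_nonneg (by positivity) (Real.log_natCast_nonneg n)
  nlinarith

theorem lim2 {p κ η : ℝ} (hp0 : 0 < p) (hp1 : p < 1) (hκ : 0 < κ) (hq : 1 - p = exp (-κ))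
    (hη : 0 < η) : Tendsto (fun n : ℕ => Pr p (fun ω : EdgeType n → Bool =>
      ¬ Prop2 (graphOf ω) (tt κ η n))) atTop (nhds 0) := by
  refine tend_aux (c := η) (by positivity) (fun n => Pr_nonneg hp0.le hp1.le _) ?_
  filter_upwards [tt_le hκ hη, one_le_tt hκ hη, eventually_ge_atTop 1, ev_log 0] with n h1 h2 hn h0
  refine (prob2 n _ p hp0.le hp1.le).trans ?_
  have hn' : (0:ℝ) < n := by exact_mod_cast hn
  have ht : (1:ℝ) ≤ tt κ η n := by exact_mod_cast h2.1
  rw [pow_mul, pow_mul, ← mul_pow, hq]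
  have : (n:ℝ) ^ 2 * exp (-κ) ^ tt κ η n = exp (2 * log n - κ * tt κ η n) := by
    rw [← Real.exp_nat_mul, sub_eq_add_neg, Real.exp_add]
    congr 1
    · rw [two_mul, Real.exp_add, Real.exp_log hn']; ring
    · congr 1; ring
  rw [this, ← Real.exp_nat_mul, Real.exp_le_exp]
  have h3 : (2 + η) * log n ≤ κ * tt κ η n := by
    have := mul_le_mul_of_nonneg_left h1.1 hκ.le
    calc _ = κ * ((2 + η) * (log n / κ)) := by field_simp
      _ ≤ _ := this
  have h4 : 0 ≤ η * log n := by positivity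
  nlinarith

theorem lim3 {p : ℝ} (hp0 : 0 < p) (hp1 : p < 1) (m : ℕ) (hm : 1 ≤ m) :
    Tendsto (fun n : ℕ => Pr p (fun ω : EdgeType n → Bool =>
      ¬ Prop3 (graphOf ω) m (p ^ m / 4 * n))) atTop (nhds 0) := by
  refine tend_aux (c := 1) (by positivity) (fun n => Pr_nonneg hp0.le hp1.le _) ?_
  have hm' : (1:ℝ) ≤ m := by exact_mod_cast hm
  set l := p ^ m / (4 * m) with hl
  have hpm : p ^ m ≤ 1 := pow_le_one₀ hp0.le hp1.le
  have hl0 : 0 < l := by positivity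
  have hl1 : l ≤ 1 := by rw [hl, div_le_one (by positivity)]; linarith
  have hlm : l * (4 * m) = p ^ m := by rw [hl]; field_simp
  set c := l * p ^ m / 2 with hc
  have hc0 : 0 < c := by positivity
  filter_upwards [ev_logpow 1 1 (c / (2 * (m + 1))) one_pos (by positivity),
    tendsto_natCast_atTop_atTop.eventually_ge_atTop (2 * m : ℝ),
    tendsto_natCast_atTop_atTop.eventually_ge_atTop (2 / c * (l * (m * p ^ m)) : ℝ),
    eventually_ge_atTop 1] with n h1 h2 h3 hn
  refine (prob3 n m p hp0 hp1.le _ l hl0.le hl1).trans ?_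
  have hn' : (0:ℝ) < n := by exact_mod_cast hn
  have : (n:ℝ) ^ m = exp (m * log n) := by rw [Real.exp_nat_mul, Real.exp_log hn']
  rw [this, ← Real.exp_add, Real.exp_le_exp]
  rw [pow_one, Real.rpow_one] at h1
  have h4 : (m + 1) * log n ≤ c / 2 * n := by
    calc (m + 1) * log n ≤ (m + 1) * (c / (2 * (m + 1)) * n) := by gcongr
      _ = _ := by field_simp
  have h5 : l * (m * p ^ m) ≤ c / 2 * n := by
    rw [div_mul_eq_mul_div, div_le_iff₀ hc0] at h3
    linarith
  have h6 : l ^ 2 * (m * n) = l * p ^ m / 4 * n := by rw [← hlm]; ring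
  rw [h6]
  have h7 : c * n = l * p ^ m / 2 * n := by rw [hc]
  nlinarith

theorem term_bd {κ η δ x y : ℝ} (l0 l k : ℕ) (hκ : 0 < κ) (hη : 0 < η) (hδ : 0 < δ)
    (hδη : δ ≤ η / 8) (hδ1 : δ ≤ 1 / 32) (hx : 0 ≤ x) (hl : 2 ≤ l) (hlk : l ≤ k)
    (hl0 : 8 / η ≤ l0) (hxl : κ * l0 / 2 ≤ δ * x) (hkx : κ * k ≤ (2 - η) * x)
    (hy0 : 0 ≤ y) (hy : y ≤ exp ((-1 + 2 * δ) * x)) :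
    y ^ l * (exp κ) ^ (l.choose 2) ≤ exp ((-2 + 6 * δ) * x) := by
  have hlk' : (l:ℝ) ≤ k := by exact_mod_cast hlk
  have hl' : (2:ℝ) ≤ l := by exact_mod_cast hl
  calc y ^ l * (exp κ) ^ (l.choose 2) ≤ exp ((-1 + 2 * δ) * x) ^ l * (exp κ) ^ (l.choose 2) := by
        gcongr
    _ = exp (l * ((-1 + 2 * δ) * x + κ * (l - 1) / 2)) := by
        rw [← Real.exp_nat_mul, ← Real.exp_nat_mul, ← Real.exp_add, Nat.cast_choose_two]
        congr 1; ring
    _ ≤ _ := ?_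
  rw [Real.exp_le_exp]
  have hδx : 0 ≤ δ * x := by positivity
  rcases le_total l l0 with h | h
  · have h' : (l:ℝ) ≤ l0 := by exact_mod_cast h
    have h1 : κ * ((l:ℝ) - 1) / 2 ≤ δ * x := by nlinarith
    have h2 : (-1 + 2 * δ) * x + κ * ((l:ℝ) - 1) / 2 ≤ (-1 + 3 * δ) * x := by linarith
    have h3 : (-1 + 3 * δ) * x ≤ 0 := mul_nonpos_of_nonpos_of_nonneg (by linarith) hx
    nlinarith
  · have h' : (l0:ℝ) ≤ l := by exact_mod_cast h
    have h1 : κ * ((l:ℝ) - 1) / 2 ≤ (1 - η / 2) * x := by nlinarith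
    have h2 : (-1 + 2 * δ) * x + κ * ((l:ℝ) - 1) / 2 ≤ -(η / 4) * x := by nlinarith
    have h3 : 8 ≤ l * η := by
      rw [div_le_iff₀ hη] at hl0
      nlinarith
    have h4 : (l:ℝ) * (-(η / 4) * x) ≤ -2 * x := by nlinarith
    have h5 := mul_le_mul_of_nonneg_left h2 (show (0:ℝ) ≤ l by positivity)
    linarith

set_option maxHeartbeats 1000000 in
theorem lim4 {p κ η δ : ℝ} (hp0 : 0 < p) (hp1 : p < 1) (hκ : 0 < κ) (hq : 1 - p = exp (-κ))
    (hη : 0 < η) (hη1 : η ≤ 1 / 2) (hδ : 0 < δ) (hδη : δ ≤ η / 8) (hδ1 : δ ≤ 1 / 32) :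
    Tendsto (fun n : ℕ => Pr p (fun ω : EdgeType n → Bool =>
      ¬ Prop4 (graphOf ω) (uu δ n) (kk κ η n))) atTop (nhds 0) := by
  refine tend_aux (c := 1) (by positivity) (fun n => Pr_nonneg hp0.le hp1.le _) ?_
  obtain ⟨l0, hl0⟩ := exists_nat_ge (8 / η)
  filter_upwards [kk_le hκ hη (by linarith), kk_le_tt κ η hκ hη, uu_le (δ := δ) (by linarith),
    tt_pow hκ hη 2 δ 1 hδ one_pos, tt_pow hκ hη 1 δ (1 / 2) hδ (by positivity),
    ev_log (2 * κ), ev_log (κ * l0 / 2 / δ),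
    ev_logpow 1 1 1 one_pos one_pos, tendsto_natCast_atTop_atTop.eventually_ge_atTop (64 : ℝ)]
    with n hk hkt hu h2 h1 hx1 hx2 hlg hn
  have hn0 : (0:ℝ) < n := by linarith
  set k := kk κ η n with hkdef
  set u := uu δ n with hudef
  set x := log n with hx
  have hnx : ∀ r : ℝ, (n:ℝ) ^ r = exp (r * x) := by
    intro r; rw [Real.rpow_def_of_pos hn0, mul_comm]
  have hex : exp x = n := Real.exp_log hn0
  have hx0 : 0 ≤ x := by linarith
  rw [hnx] at h2 h1 hu
  rw [pow_one] at h1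
  have hkt' : (k:ℝ) ≤ tt κ η n := by exact_mod_cast hkt
  have hk2 : (2:ℝ) ≤ k := by
    have : 2 ≤ x / κ := by rw [le_div_iff₀ hκ]; exact hx1
    nlinarith [hk.1]
  have hk2' : 2 ≤ k := by exact_mod_cast hk2
  have hksq : (k:ℝ) ^ 2 ≤ exp (δ * x) := by
    calc (k:ℝ) ^ 2 ≤ (tt κ η n : ℝ) ^ 2 := by gcongr
      _ ≤ _ := by simpa using h2
  have hu1 : exp ((1 - δ) * x) ≤ u := hu.1
  have hu0 : (0:ℝ) < u := lt_of_lt_of_le (Real.exp_pos _) hu1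
  have hku : k ≤ u := by
    have : (k:ℝ) ≤ u := by
      calc (k:ℝ) ≤ 1 / 2 * exp (δ * x) := hkt'.trans h1
        _ ≤ exp (δ * x) := by linarith [Real.exp_pos (δ * x)]
        _ ≤ exp ((1 - δ) * x) := by
          rw [Real.exp_le_exp]; exact mul_le_mul_of_nonneg_right (by linarith) hx0
        _ ≤ u := hu1
    exact_mod_cast this
  have hy : (k:ℝ) ^ 2 / u ≤ exp ((-1 + 2 * δ) * x) := by
    rw [div_le_iff₀ hu0]
    calc (k:ℝ) ^ 2 ≤ exp (δ * x) := hksq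
      _ = exp ((-1 + 2 * δ) * x) * exp ((1 - δ) * x) := by rw [← Real.exp_add]; congr 1; ring
      _ ≤ _ := by gcongr
  have hkx : κ * k ≤ (2 - η) * x := by
    calc κ * k ≤ κ * ((2 - η) * (x / κ)) := mul_le_mul_of_nonneg_left hk.2 hκ.le
      _ = _ := by field_simp
  have hxl : κ * l0 / 2 ≤ δ * x := by
    rw [div_le_iff₀ hδ] at hx2; linarith
  have hS : ∑ l ∈ Finset.Icc 2 k, ((k : ℝ) ^ 2 / u) ^ l * ((1 - p)⁻¹) ^ (l.choose 2)
      ≤ exp (-(7 / 4) * x) / 2 := by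
    have hinv : (1 - p)⁻¹ = exp κ := by rw [hq, Real.exp_neg, inv_inv]
    rw [hinv]
    calc _ ≤ ∑ l ∈ Finset.Icc 2 k, exp ((-2 + 6 * δ) * x) := by
          refine Finset.sum_le_sum fun l hl => ?_
          rw [Finset.mem_Icc] at hl
          exact term_bd l0 l k hκ hη hδ hδη hδ1 hx0 hl.1 hl.2 hl0 hxl hkx (by positivity) hy
      _ ≤ k * exp ((-2 + 6 * δ) * x) := by
          rw [Finset.sum_const, nsmul_eq_mul, Nat.card_Icc]
          gcongr
          omega
      _ ≤ (1 / 2 * exp (δ * x)) * exp ((-2 + 6 * δ) * x) := by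
          gcongr; exact hkt'.trans h1
      _ = exp ((-2 + 7 * δ) * x) / 2 := by
          rw [mul_assoc, ← Real.exp_add, show δ * x + (-2 + 6 * δ) * x = (-2 + 7 * δ) * x by ring]
          ring
      _ ≤ _ := by
          gcongr
          linarith
  set lam := exp (-(1 / 4) * x) / 2 with hlam
  have hlam1 : lam ≤ 1 := by
    have : exp (-(1 / 4) * x) ≤ 1 := by rw [Real.exp_le_one_iff]; linarith
    linarith
  refine (prob4 n u k p hp0.le hp1 hk2' hku (exp (-(7 / 4) * x) / 2) lam (by positivity)
    (by positivity) hlam1 hS).trans ?_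
  have e1 : -lam / (2 * (exp (-(7 / 4) * x) / 2)) = - exp (3 / 2 * x) / 2 := by
    rw [hlam]
    have : exp (-(1 / 4) * x) = exp (3 / 2 * x) * exp (-(7 / 4) * x) := by
      rw [← Real.exp_add]; congr 1; ring
    rw [this]
    have := (Real.exp_pos (-(7 / 4) * x)).ne'
    field_simp
  have e2 : lam ^ 2 * (n:ℝ) ^ 2 = exp (3 / 2 * x) / 4 := by
    rw [hlam, ← hex, div_pow, ← Real.exp_nat_mul, ← Real.exp_nat_mul, div_mul_eq_mul_div,
      ← Real.exp_add]
    norm_num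
    congr 1; ring
  rw [e1, e2]
  have e3 : (2:ℝ) ^ n ≤ exp n := by
    have : (2:ℝ) ≤ exp 1 := by linarith [Real.add_one_le_exp (1:ℝ)]
    calc (2:ℝ) ^ n ≤ exp 1 ^ n := by gcongr
      _ = exp n := by rw [← Real.exp_nat_mul, mul_one]
  calc _ ≤ exp n * exp (-exp (3 / 2 * x) / 2 + exp (3 / 2 * x) / 4) := by gcongr
    _ = exp (n - exp (3 / 2 * x) / 4) := by rw [← Real.exp_add]; congr 1; ring
    _ ≤ exp (-(1 * x)) := ?_
  rw [Real.exp_le_exp]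
  have e4 : exp (3 / 2 * x) = n * exp (1 / 2 * x) := by
    rw [← hex, ← Real.exp_add]; congr 1; ring
  have e5 : 8 ≤ exp (1 / 2 * x) := by
    have : exp (1 / 2 * x) ^ 2 = n := by
      rw [← Real.exp_nat_mul, ← hex]; congr 1; push_cast; ring
    nlinarith [Real.exp_pos (1 / 2 * x)]
  rw [pow_one, Real.rpow_one, one_mul] at hlg
  rw [e4]
  nlinarith

end Asymp2


/-- For fixed `p ∈ (0,1)` and fixed `m ≥ 5`, whp
`n + (1−o(1))·n/(4(m−1)·log_{1/(1−p)} n) ≤ sat(G(n,p), C_m) ≤ n + (1+o(1))·n/(2·log_{1/(1−p)} n)`.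
The `o(1)` terms are rendered by an arbitrary `ε > 0`. -/
theorem cycle_saturation_bounds (p : ℝ) (hp0 : 0 < p) (hp1 : p < 1)
    (m : ℕ) (hm : 5 ≤ m) (ε : ℝ) (hε : 0 < ε) :
    Tendsto (fun n : ℕ =>
      erMeasure n p {ω |
        (n : ℝ) + (1 - ε) * n / (4 * ((m : ℝ) - 1) * Real.logb (1 / (1 - p)) n)
            ≤ (satNum (graphOf ω) (cycGraph m) : ℝ) ∧
        (satNum (graphOf ω) (cycGraph m) : ℝ)
            ≤ (n : ℝ) + (1 + ε) * n / (2 * Real.logb (1 / (1 - p)) n)})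
      atTop (nhds 1) := by
  set κ := log (1 / (1 - p)) with hκd
  have hq0 : 0 < 1 - p := by linarith
  have hκ : 0 < κ := Real.log_pos (by rw [lt_div_iff₀ hq0]; linarith)
  have hq : 1 - p = exp (-κ) := by
    rw [hκd, one_div, Real.log_inv, neg_neg, Real.exp_log hq0]
  set ε0 := min ε (1 / 2) with hε0d
  have hε0 : 0 < ε0 := lt_min hε (by norm_num)
  have hε01 : ε0 ≤ 1 / 2 := min_le_right _ _
  have hε0ε : ε0 ≤ ε := min_le_left _ _
  set η := ε0 / 4 with hηd
  have hη : 0 < η := by positivity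
  set δ := min (η / 8) (1 / 32) with hδd
  have hδ : 0 < δ := lt_min (by positivity) (by norm_num)
  have hδη : δ ≤ η / 8 := min_le_left _ _
  have hδ1 : δ ≤ 1 / 32 := min_le_right _ _
  have L1 := lim1 hp0 hp1 hκ hq hη
  have L2 := lim2 hp0 hp1 hκ hq hη
  have L3 := lim3 hp0 hp1 m (by omega)
  have L4 := lim4 hp0 hp1 hκ hq hη (by linarith) hδ hδη hδ1
  have hsum := ((L1.add L2).add L3).add L4
  simp only [add_zero] at hsum
  have hlow : Tendsto (fun n : ℕ => ENNReal.ofReal (1 -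
      (Pr p (fun ω : EdgeType n → Bool => ¬ Prop1 (graphOf ω) (tt κ η n)) +
       Pr p (fun ω : EdgeType n → Bool => ¬ Prop2 (graphOf ω) (tt κ η n)) +
       Pr p (fun ω : EdgeType n → Bool => ¬ Prop3 (graphOf ω) m (p ^ m / 4 * n)) +
       Pr p (fun ω : EdgeType n → Bool => ¬ Prop4 (graphOf ω) (uu δ n) (kk κ η n)))))
      atTop (nhds 1) := by
    have := ENNReal.tendsto_ofReal (hsum.const_sub 1)
    simpa using this
  refine tendsto_of_tendsto_of_tendsto_of_le_of_le' hlow tendsto_const_nhds ?_ ?_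
  swap
  · refine Eventually.of_forall fun n => ?_
    rw [erMeasure_eq n p hp0.le hp1.le, ENNReal.ofReal_le_one]
    have h1 := Pr_not (p := p) (fun ω : EdgeType n → Bool =>
        (n : ℝ) + (1 - ε) * n / (4 * ((m : ℝ) - 1) * Real.logb (1 / (1 - p)) n)
            ≤ (satNum (graphOf ω) (cycGraph m) : ℝ) ∧
        (satNum (graphOf ω) (cycGraph m) : ℝ)
            ≤ (n : ℝ) + (1 + ε) * n / (2 * Real.logb (1 / (1 - p)) n))
    have h2 := Pr_nonneg hp0.le hp1.le (fun ω : EdgeType n → Bool => ¬ (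
        (n : ℝ) + (1 - ε) * n / (4 * ((m : ℝ) - 1) * Real.logb (1 / (1 - p)) n)
            ≤ (satNum (graphOf ω) (cycGraph m) : ℝ) ∧
        (satNum (graphOf ω) (cycGraph m) : ℝ)
            ≤ (n : ℝ) + (1 + ε) * n / (2 * Real.logb (1 / (1 - p)) n)))
    linarith
  have hm' : (5:ℝ) ≤ m := by exact_mod_cast hm
  filter_upwards [lower_cmp hκ hη hε0 (by linarith) (by linarith) m hm,
    upper_cmp hκ hη (by linarith) hε0 (by linarith) hδ (by linarith) m,
    one_le_tt hκ hη, kk_le hκ hη (by linarith), ev_log κ,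
    ev_log ((1 + ε0) * 2 / p ^ m * κ), tt_pow hκ hη 1 1 1 one_pos one_pos,
    eventually_ge_atTop 1] with n hlo hup ht hk hL1 hL2 htn hn
  rw [erMeasure_eq n p hp0.le hp1.le]
  refine ENNReal.ofReal_le_ofReal ?_
  have hLd : Real.logb (1 / (1 - p)) n = log n / κ := rfl
  have hn' : (1:ℝ) ≤ n := by exact_mod_cast hn
  have hL : 1 ≤ log n / κ := by rwa [le_div_iff₀ hκ, one_mul]
  have hk1 : 1 ≤ kk κ η n := by
    have : (1:ℝ) ≤ kk κ η n := by nlinarith [hk.1]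
    exact_mod_cast this
  have htn' : tt κ η n ≤ n := by
    have : (tt κ η n : ℝ) ≤ n := by simpa using htn
    exact_mod_cast this
  have hs : ((n / kk κ η n + 1 + tt κ η n * uu δ n + 4 * tt κ η n : ℕ) : ℝ) ≤ p ^ m / 4 * n := by
    have h1 : (1 + ε0) * n / (2 * (log n / κ)) ≤ p ^ m / 4 * n := by
      rw [div_le_iff₀ (by positivity)]
      have h2 : (1 + ε0) * 2 / p ^ m ≤ log n / κ := by rwa [le_div_iff₀ hκ]
      rw [div_le_iff₀ (by positivity)] at h2
      nlinarith
    have h3 : ((n / kk κ η n + 1 + tt κ η n * uu δ n + 4 * tt κ η n : ℕ) : ℝ) + n ≤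
        ((n + (n / kk κ η n + 1 + tt κ η n * uu δ n + 4 * tt κ η n) + m ^ 2 +
        4 * tt κ η n ^ 2 : ℕ) : ℝ) := by
      rw [← Nat.cast_add]
      exact Nat.cast_le.2 (by omega)
    linarith
  have key : ∀ ω : EdgeType n → Bool, ¬ ((n : ℝ) + (1 - ε) * n / (4 * ((m : ℝ) - 1) *
        Real.logb (1 / (1 - p)) n) ≤ (satNum (graphOf ω) (cycGraph m) : ℝ) ∧
        (satNum (graphOf ω) (cycGraph m) : ℝ)
            ≤ (n : ℝ) + (1 + ε) * n / (2 * Real.logb (1 / (1 - p)) n)) →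
      ((¬ Prop1 (graphOf ω) (tt κ η n) ∨ ¬ Prop2 (graphOf ω) (tt κ η n)) ∨
        ¬ Prop3 (graphOf ω) m (p ^ m / 4 * n)) ∨
        ¬ Prop4 (graphOf ω) (uu δ n) (kk κ η n) := by
    intro ω hbad
    by_contra hcon
    push Not at hcon
    obtain ⟨⟨⟨P1, P2⟩, P3⟩, P4⟩ := hcon
    apply hbad
    rw [hLd]
    obtain ⟨H, hH, hHc⟩ := upper_det (V := Fin n) hm ht.1 hk1 (by simpa using hn)
      (by simpa using hs) P2 P3 P4
    constructor
    · have hne : {k | ∃ H : SimpleGraph (Fin n), IsSaturatedIn (graphOf ω) H (cycGraph m) ∧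
          H.edgeSet.ncard = k}.Nonempty := ⟨_, H, hH, rfl⟩
      obtain ⟨H', hH', he⟩ := Nat.sInf_mem hne
      have h1 := lower_det hm ht.1 (by simpa using htn') P1 P2 hH'
      rw [Fintype.card_fin] at h1
      have h2 := hlo _ h1
      have h3 : (satNum (graphOf ω) (cycGraph m) : ℝ) = H'.edgeSet.ncard := by
        rw [he]; rfl
      rw [h3]
      refine le_trans ?_ h2
      have : 0 < 4 * ((m:ℝ) - 1) * (log n / κ) := by
        have : 0 < (m:ℝ) - 1 := by linarith
        positivity
      gcongr
    · have h1 : satNum (graphOf ω) (cycGraph m) ≤ H.edgeSet.ncard :=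
        Nat.sInf_le ⟨H, hH, rfl⟩
      rw [Fintype.card_fin] at hHc
      have h2 : (satNum (graphOf ω) (cycGraph m) : ℝ) ≤ _ := Nat.cast_le.2 (h1.trans hHc)
      refine h2.trans (hup.trans ?_)
      gcongr
  have hbadle := Pr_mono hp0.le hp1.le key
  rw [Pr_not] at hbadle
  have o1 := Pr_or hp0.le hp1.le (fun ω : EdgeType n → Bool => ¬ Prop1 (graphOf ω) (tt κ η n))
    (fun ω => ¬ Prop2 (graphOf ω) (tt κ η n))
  have o2 := Pr_or hp0.le hp1.le (fun ω : EdgeType n → Bool =>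
    ¬ Prop1 (graphOf ω) (tt κ η n) ∨ ¬ Prop2 (graphOf ω) (tt κ η n))
    (fun ω => ¬ Prop3 (graphOf ω) m (p ^ m / 4 * n))
  have o3 := Pr_or hp0.le hp1.le (fun ω : EdgeType n → Bool =>
    (¬ Prop1 (graphOf ω) (tt κ η n) ∨ ¬ Prop2 (graphOf ω) (tt κ η n)) ∨
     ¬ Prop3 (graphOf ω) m (p ^ m / 4 * n))
    (fun ω => ¬ Prop4 (graphOf ω) (uu δ n) (kk κ η n))
  linarith
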